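/- arXiv:1003.5176 — 10 statements merged into one kernel-verified Lean document; each statement's English description precedes it below -/
import Mathlib

section
/- Let X be a real Banach space whose dual X* contains a linear subspace A such that the weak* derived set A^(1) is a proper norm-dense subset of X*. Then X is not quasi-reflexive. -/
open NormedSpace

/-- The weak* derived set of a subset of the dual. -/
noncomputable def wStarDerived {X : Type*} [NormedAddCommGroup X] [NormedSpace ℝ X]
    (A : Set (StrongDual ℝ X)) : Set (StrongDual ℝ X) :=
  ⋃ n : ℕ, {f : StrongDual ℝ X |
    StrongDual.toWeakDual f ∈ closure (StrongDual.toWeakDual '' (A ∩ {g : StrongDual ℝ X | ‖g‖ ≤ n}))}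

/-- The weak* closure. -/
noncomputable def wStarClosure {X : Type*} [NormedAddCommGroup X] [NormedSpace ℝ X]
    (A : Set (StrongDual ℝ X)) : Set (StrongDual ℝ X) :=
  {f : StrongDual ℝ X | StrongDual.toWeakDual f ∈ closure (StrongDual.toWeakDual '' A)}

/-- Quasi-reflexivity. -/
def QuasiReflexive (X : Type*) [NormedAddCommGroup X] [NormedSpace ℝ X] : Prop :=
  FiniteDimensional ℝ
    (StrongDual ℝ (StrongDual ℝ X) ⧸ LinearMap.range ((inclusionInDoubleDual ℝ X) : X →ₗ[ℝ] StrongDual ℝ (StrongDual ℝ X)))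

/-- Restriction map to a subspace. -/
noncomputable def restrictMap {X : Type*} [NormedAddCommGroup X] [NormedSpace ℝ X]
    (Z : Submodule ℝ X) (f : StrongDual ℝ X) : StrongDual ℝ Z :=
  f.comp Z.subtypeL


lemma wStarDerived_aux {X : Type*} [NormedAddCommGroup X] [NormedSpace ℝ X]
    (s : Set (StrongDual ℝ X)) (hs : Convex ℝ s) (f : StrongDual ℝ X)
    (hf : StrongDual.toWeakDual f ∉ closure (StrongDual.toWeakDual '' s)) :
    ∃ (x : X) (u : ℝ), (∀ g ∈ s, g x < u) ∧ u < f x := by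
  have : LocallyConvexSpace ℝ (WeakDual ℝ X) :=
    WeakBilin.locallyConvexSpace (B := topDualPairing ℝ X)
  have hc : Convex ℝ (closure (StrongDual.toWeakDual '' s)) :=
    (hs.linear_image (StrongDual.toWeakDual (𝕜 := ℝ) (E := X)).toLinearMap).closure
  obtain ⟨φ, u, h1, h2⟩ := geometric_hahn_banach_closed_point hc isClosed_closure hf
  obtain ⟨x, hx⟩ := LinearMap.dualEmbedding_surjective (topDualPairing ℝ X) φ
  have key : ∀ g : StrongDual ℝ X, φ (StrongDual.toWeakDual g) = g x := by
    intro g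
    rw [← hx]; rfl
  refine ⟨x, u, fun g hg => ?_, ?_⟩
  · rw [← key]
    exact h1 _ (subset_closure ⟨g, hg, rfl⟩)
  · rw [← key]; exact h2

lemma finite_quot_aux {V W : Type*} [AddCommGroup V] [Module ℝ V] [AddCommGroup W] [Module ℝ W]
    (S : V →ₗ[ℝ] W) (hS : Function.Surjective S) (p : Submodule ℝ V)
    (hp : FiniteDimensional ℝ (V ⧸ p)) : FiniteDimensional ℝ (W ⧸ p.map S) := by
  refine Module.Finite.of_surjective (Submodule.mapQ p (p.map S) S (Submodule.le_comap_map S p)) ?_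
  intro q
  obtain ⟨g, rfl⟩ := Submodule.Quotient.mk_surjective _ q
  obtain ⟨h, rfl⟩ := hS g
  exact ⟨Submodule.Quotient.mk h, rfl⟩

lemma codim_aux {E F : Type*} [NormedAddCommGroup E] [NormedSpace ℝ E] [CompleteSpace E]
    [NormedAddCommGroup F] [NormedSpace ℝ F] [CompleteSpace F] (R : E →L[ℝ] F)
    (hinj : ∀ x, R x = 0 → x = 0) (hfin : FiniteDimensional ℝ (F ⧸ R.range)) :
    ∃ C : ℝ, 0 ≤ C ∧ ∀ x, ‖x‖ ≤ C * ‖R x‖ := by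
  have hker : R.ker = ⊥ := LinearMap.ker_eq_bot'.2 hinj
  obtain ⟨G, hG⟩ := Submodule.exists_isCompl R.range
  have hGfin : FiniteDimensional ℝ G :=
    Module.Finite.equiv (Submodule.quotientEquivOfIsCompl _ _ hG)
  have hclosed := R.closed_complemented_range_of_isCompl_of_ker_eq_bot G hG
    G.closed_of_finiteDimensional hker
  obtain ⟨C, hC⟩ := R.antilipschitz_of_injective_of_isClosed_range
    (LinearMap.ker_eq_bot.1 hker) hclosed
  refine ⟨C, C.2, fun x => ?_⟩
  simpa [dist_eq_norm] using hC.le_mul_dist x 0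

lemma codim_aux' {E D F : Type*} [NormedAddCommGroup E] [NormedSpace ℝ E] [CompleteSpace E]
    [NormedAddCommGroup D] [NormedSpace ℝ D]
    [NormedAddCommGroup F] [NormedSpace ℝ F] [CompleteSpace F] (J : E →L[ℝ] D) (S : D →L[ℝ] F)
    (hS : Function.Surjective S)
    (hQ : FiniteDimensional ℝ (D ⧸ LinearMap.range (J : E →ₗ[ℝ] D)))
    (hinj : ∀ x, S (J x) = 0 → x = 0) :
    ∃ C : ℝ, 0 ≤ C ∧ ∀ x, ‖x‖ ≤ C * ‖S (J x)‖ := by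
  refine codim_aux (S.comp J) hinj ?_
  have hmap : (S.comp J).range = (LinearMap.range (J : E →ₗ[ℝ] D)).map
      (S : D →ₗ[ℝ] F) := LinearMap.range_comp _ _
  rw [hmap]
  exact finite_quot_aux (S : D →ₗ[ℝ] F) hS _ hQ

lemma exists_restr_aux {Y : Type*} [NormedAddCommGroup Y] [NormedSpace ℝ Y]
    (A : Submodule ℝ Y) :
    ∃ S : StrongDual ℝ Y →L[ℝ] StrongDual ℝ A, ∀ g (a : A), S g a = g (a : Y) :=
  ⟨ContinuousLinearMap.precomp ℝ A.subtypeL, fun _ _ => rfl⟩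

lemma bddBelow_aux {X Y : Type*} [NormedAddCommGroup X] [NormedSpace ℝ X] [CompleteSpace X]
    [NormedAddCommGroup Y] [NormedSpace ℝ Y] (A : Submodule ℝ Y)
    (J : X →L[ℝ] StrongDual ℝ Y)
    (hQ : FiniteDimensional ℝ (StrongDual ℝ Y ⧸ LinearMap.range (J : X →ₗ[ℝ] StrongDual ℝ Y)))
    (hinj : ∀ x, (∀ a ∈ A, J x a = 0) → x = 0) :
    ∃ C : ℝ, 0 ≤ C ∧ ∀ (x : X) (u : ℝ), 0 ≤ u → (∀ a ∈ A, ‖a‖ = 1 → |J x a| ≤ u) →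
      ‖x‖ ≤ C * u := by
  obtain ⟨S, hS⟩ := exists_restr_aux A
  have hSsurj : Function.Surjective S := by
    intro g
    obtain ⟨h, hh, -⟩ := exists_extension_norm_eq A g
    exact ⟨h, by ext a; rw [hS]; exact hh a⟩
  obtain ⟨R, hRdef⟩ : ∃ R : X →L[ℝ] StrongDual ℝ A, R = S.comp J := ⟨_, rfl⟩
  have hR : ∀ x (a : A), R x a = J x (a : Y) := fun x a => by
    rw [hRdef, ContinuousLinearMap.comp_apply, hS]
  have hinj' : ∀ x, R x = 0 → x = 0 := by
    intro x hx
    refine hinj x fun a ha => ?_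
    have := hR x ⟨a, ha⟩
    rw [hx] at this
    exact this.symm
  obtain ⟨C, hC0, hCx⟩ := codim_aux' (E := X) (D := StrongDual ℝ Y) (F := StrongDual ℝ A) J S hSsurj hQ (by
    intro x hx; apply hinj' x; rw [hRdef]; exact hx)
  replace hCx : ∀ x, ‖x‖ ≤ C * ‖R x‖ := by rw [hRdef]; exact hCx
  refine ⟨C, hC0, fun x u hu h => (hCx x).trans ?_⟩
  refine mul_le_mul_of_nonneg_left ?_ hC0
  refine ContinuousLinearMap.opNorm_le_of_unit_norm hu fun a ha => ?_
  rw [hR]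
  exact h a a.2 ha

/-- If the dual of a Banach space $X$ contains a linear subspace $A$ whose weak* derived
set $A^{(1)}$ is a proper norm-dense subset of $X^*$, then $X$ is not quasi-reflexive. -/
theorem stmt0 (X : Type*) [NormedAddCommGroup X] [NormedSpace ℝ X] [CompleteSpace X]
    (A : Submodule ℝ (StrongDual ℝ X))
    (hproper : wStarDerived (A : Set (StrongDual ℝ X)) ≠ Set.univ)
    (hdense : Dense (wStarDerived (A : Set (StrongDual ℝ X)))) :
    ¬ QuasiReflexive X := by
  intro hQ
  apply hproper
  unfold QuasiReflexive at hQ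
  -- injectivity
  have hinj : ∀ x, (∀ a ∈ A, inclusionInDoubleDual ℝ X x a = 0) → x = 0 := by
    intro x hx
    have hvan : ∀ f ∈ wStarDerived (A : Set (StrongDual ℝ X)), f x = 0 := by
      intro f hf
      obtain ⟨n, hn⟩ := Set.mem_iUnion.1 hf
      have hcl : IsClosed {g : WeakDual ℝ X | g x = 0} :=
        isClosed_eq (WeakDual.eval_continuous x) continuous_const
      refine closure_minimal ?_ hcl hn
      rintro _ ⟨g, ⟨hgA, -⟩, rfl⟩
      exact hx g hgA
    have hcl : IsClosed {g : StrongDual ℝ X | g x = 0} :=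
      isClosed_eq ((inclusionInDoubleDual ℝ X x).continuous) continuous_const
    have hall : ∀ f : StrongDual ℝ X, f x = 0 := fun f =>
      closure_minimal (fun f hf => hvan f hf) hcl (hdense f)
    exact SeparatingDual.eq_zero_of_forall_dual_eq_zero (R := ℝ) hall
  obtain ⟨C, hC0, hC⟩ := bddBelow_aux A (inclusionInDoubleDual ℝ X) hQ hinj
  refine Set.eq_univ_of_forall fun f => ?_
  obtain ⟨n, hn⟩ := exists_nat_ge (‖f‖ * C + 1)
  have hfC : 0 ≤ ‖f‖ * C := by positivity
  have hn0 : (0 : ℝ) < n := by linarith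
  refine Set.mem_iUnion.2 ⟨n, ?_⟩
  by_contra hf
  have hconv : Convex ℝ ((A : Set (StrongDual ℝ X)) ∩ {g : StrongDual ℝ X | ‖g‖ ≤ n}) := by
    refine A.convex.inter ?_
    have : {g : StrongDual ℝ X | ‖g‖ ≤ n} = Metric.closedBall 0 n := by ext; simp
    rw [this]; exact convex_closedBall _ _
  obtain ⟨x, u, h1, h2⟩ := wStarDerived_aux _ hconv f hf
  have hu : 0 < u := by simpa using h1 0 ⟨A.zero_mem, by simp⟩
  have hx : ‖x‖ ≤ C * (u / n) := by
    refine hC x _ (by positivity) fun a haA ha => ?_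
    have e1 := h1 ((n : ℝ) • a) ⟨A.smul_mem _ haA, by simp [norm_smul, ha]⟩
    have e2 := h1 ((-n : ℝ) • a) ⟨A.smul_mem _ haA, by simp [norm_smul, ha]⟩
    rw [le_div_iff₀ hn0, dual_def]
    simp only [smul_apply, smul_eq_mul] at e1 e2
    rcases abs_cases (a x) with h | h <;> rw [h.1] <;> nlinarith
  have h3 : f x ≤ ‖f‖ * (C * (u / n)) :=
    (le_abs_self _).trans ((f.le_opNorm x).trans (by gcongr))
  have h4 : ‖f‖ * (C * (u / n)) ≤ n * (u / n) := by
    rw [← mul_assoc]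
    gcongr
    linarith
  rw [mul_div_cancel₀ _ hn0.ne'] at h4
  linarith
end

section
/- Let X be a real Banach space whose dual X* contains a linear subspace A such that the weak* derived set A^(1) is a proper norm-dense subset of X*. Then X contains an infinite-dimensional closed subspace whose dual is separable. -/
open NormedSpace

/-- `x` has `A`-seminorm at most `r`. -/
def SmallOn {X : Type*} [NormedAddCommGroup X] [NormedSpace ℝ X]
    (A : Submodule ℝ (StrongDual ℝ X)) (x : X) (r : ℝ) : Prop :=
  ∀ f ∈ A, |f x| ≤ r * ‖f‖

/-- `A` is not norming on the subspace `Y`. -/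
def NonNorming {X : Type*} [NormedAddCommGroup X] [NormedSpace ℝ X]
    (A : Submodule ℝ (StrongDual ℝ X)) (Y : Submodule ℝ X) : Prop :=
  ∀ ε : ℝ, 0 < ε → ∃ x ∈ Y, ‖x‖ = 1 ∧ SmallOn A x ε

section helpers

variable {X : Type*} [NormedAddCommGroup X] [NormedSpace ℝ X]
  {A : Submodule ℝ (StrongDual ℝ X)}

lemma SmallOn.add {x y : X} {r s : ℝ} (hx : SmallOn A x r) (hy : SmallOn A y s) :
    SmallOn A (x + y) (r + s) := by
  intro f hf
  rw [map_add, add_mul]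
  exact (abs_add_le _ _).trans (add_le_add (hx f hf) (hy f hf))

lemma SmallOn.smul {x : X} {r : ℝ} (t : ℝ) (hx : SmallOn A x r) :
    SmallOn A (t • x) (|t| * r) := by
  intro f hf
  rw [map_smul, smul_eq_mul, abs_mul, mul_assoc]
  exact mul_le_mul_of_nonneg_left (hx f hf) (abs_nonneg t)

lemma SmallOn.neg {x : X} {r : ℝ} (hx : SmallOn A x r) : SmallOn A (-x) r := by
  intro f hf
  rw [map_neg, abs_neg]
  exact hx f hf

lemma smallOn_norm (x : X) : SmallOn A x ‖x‖ := by
  intro f _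
  rw [mul_comm]
  exact f.le_opNorm x

lemma SmallOn.mono {x : X} {r s : ℝ} (hx : SmallOn A x r) (h : r ≤ s) : SmallOn A x s :=
  fun f hf => (hx f hf).trans (mul_le_mul_of_nonneg_right h (norm_nonneg _))

lemma derived_bound {f : StrongDual ℝ X} (hf : f ∈ wStarDerived (A : Set (StrongDual ℝ X))) :
    ∃ C : ℝ, 0 ≤ C ∧ ∀ x r, 0 ≤ r → SmallOn A x r → |f x| ≤ C * r := by
  obtain ⟨n, hn⟩ := Set.mem_iUnion.1 hf
  refine ⟨n, Nat.cast_nonneg n, fun x r hr hx => ?_⟩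
  have hcl : IsClosed {g : WeakDual ℝ X | |g x| ≤ n * r} :=
    isClosed_le ((WeakDual.eval_continuous x).abs) continuous_const
  have hsub : StrongDual.toWeakDual '' ((A : Set (StrongDual ℝ X)) ∩ {g | ‖g‖ ≤ n}) ⊆
      {g : WeakDual ℝ X | |g x| ≤ n * r} := by
    rintro _ ⟨g, ⟨hgA, hg⟩, rfl⟩
    have h1 := hx g hgA
    have h2 : r * ‖g‖ ≤ r * n := mul_le_mul_of_nonneg_left hg hr
    show |g x| ≤ n * r
    linarith
  exact closure_minimal hsub hcl hn

lemma total_of_dense (hdense : Dense (wStarDerived (A : Set (StrongDual ℝ X))))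
    {x : X} (hx : ∀ f ∈ A, f x = 0) : x = 0 := by
  have h1 : ∀ f : StrongDual ℝ X, f x = 0 := by
    have hcl : IsClosed {f : StrongDual ℝ X | f x = 0} :=
      isClosed_eq (by fun_prop) continuous_const
    have hsub : wStarDerived (A : Set (StrongDual ℝ X)) ⊆ {f : StrongDual ℝ X | f x = 0} := by
      intro f hf
      obtain ⟨C, _, hC⟩ := derived_bound hf
      have := hC x 0 le_rfl (fun g hg => by simp [hx g hg])
      simpa using this
    intro f
    have := closure_minimal hsub hcl (hdense f)
    exact this
  obtain ⟨g, _, hg⟩ := exists_dual_vector'' ℝ x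
  rw [h1 g] at hg
  simpa using hg.symm

lemma nonNorming_top (hproper : wStarDerived (A : Set (StrongDual ℝ X)) ≠ Set.univ) :
    NonNorming A ⊤ := by
  by_contra hcon
  apply hproper
  simp only [NonNorming] at hcon
  push Not at hcon
  obtain ⟨c, hc, hcon⟩ := hcon
  rw [Set.eq_univ_iff_forall]
  intro f
  obtain ⟨n, hn⟩ := exists_nat_gt (‖f‖ / c)
  refine Set.mem_iUnion.2 ⟨n, ?_⟩
  by_contra hnot
  have hfn : ‖f‖ < n * c := (div_lt_iff₀ hc).1 hn
  have hn0 : (0:ℝ) < n := lt_of_le_of_lt (by positivity) hn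
  set S : Set (StrongDual ℝ X) := (A : Set (StrongDual ℝ X)) ∩ {g | ‖g‖ ≤ n} with hS
  have hconv : Convex ℝ S := by
    refine A.convex.inter ?_
    have := convex_closedBall (0 : StrongDual ℝ X) (n : ℝ)
    have e : Metric.closedBall (0 : StrongDual ℝ X) (n : ℝ) = {g | ‖g‖ ≤ n} := by
      ext g; simp
    rwa [e] at this
  haveI : LocallyConvexSpace ℝ (WeakDual ℝ X) :=
    inferInstanceAs (LocallyConvexSpace ℝ (WeakBilin (topDualPairing ℝ X)))
  obtain ⟨φ, u, h1, h2⟩ := geometric_hahn_banach_closed_point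
    ((hconv.linear_image (StrongDual.toWeakDual (𝕜 := ℝ) (E := X)).toLinearMap).closure)
    isClosed_closure hnot
  obtain ⟨x, hx⟩ := LinearMap.dualEmbedding_surjective (topDualPairing ℝ X) φ
  have hφ : ∀ g : StrongDual ℝ X, φ (StrongDual.toWeakDual g) = g x := by
    intro g
    rw [← hx]
    rfl
  have h1' : ∀ g ∈ S, g x < u := fun g hg => by
    rw [← hφ]; exact h1 _ (subset_closure ⟨g, hg, rfl⟩)
  replace h2 : u < f x := (hφ f) ▸ (show u < φ (StrongDual.toWeakDual f) from h2)
  have hu : 0 < u := by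
    have := h1' 0 ⟨A.zero_mem, by simp⟩
    simpa using this
  have hx0 : x ≠ 0 := by
    rintro rfl
    simp at h2
    linarith
  have hxn : 0 < ‖x‖ := norm_pos_iff.2 hx0
  have := hcon (‖x‖⁻¹ • x) trivial (by rw [norm_smul]; simp [hxn.ne'])
  simp only [SmallOn] at this
  push Not at this
  obtain ⟨g, hgA, hg⟩ := this
  have hg0 : 0 < ‖g‖ := by
    rw [norm_pos_iff]; rintro rfl; simp at hg
  rw [map_smul, smul_eq_mul, abs_mul, abs_of_pos (inv_pos.2 hxn), inv_mul_eq_div,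
    lt_div_iff₀ hxn] at hg
  -- scale g to norm n
  have key : ∀ t : ℝ, |t| ≤ n / ‖g‖ → t * g x < u := by
    intro t ht
    have := h1' (t • g) ⟨A.smul_mem t hgA, by
      show ‖t • g‖ ≤ n
      rw [norm_smul, Real.norm_eq_abs]
      exact (le_div_iff₀ hg0).1 ht⟩
    simpa using this
  have hq : 0 < n / ‖g‖ := by positivity
  have k : n / ‖g‖ * |g x| < u := by
    rcases abs_cases (g x) with ⟨h, _⟩ | ⟨h, _⟩
    · rw [h]; exact key _ (by rw [abs_of_pos hq])
    · rw [h]; have := key (-(n / ‖g‖)) (by rw [abs_neg, abs_of_pos hq]); linarith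
  have k2 : n / ‖g‖ * (c * ‖g‖ * ‖x‖) < n / ‖g‖ * |g x| := mul_lt_mul_of_pos_left hg hq
  have k3 : n / ‖g‖ * (c * ‖g‖ * ‖x‖) = n * c * ‖x‖ := by field_simp
  have k4 : f x ≤ ‖f‖ * ‖x‖ := (le_abs_self _).trans (f.le_opNorm x)
  have k5 : ‖f‖ * ‖x‖ < n * c * ‖x‖ := mul_lt_mul_of_pos_right hfn hxn
  linarith

lemma NonNorming.inf_ker [CompleteSpace X]
    (htot : ∀ x : X, (∀ f ∈ A, f x = 0) → x = 0)
    {Y : Submodule ℝ X} (hYc : IsClosed (Y : Set X)) (hY : NonNorming A Y)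
    (φ : StrongDual ℝ X) : NonNorming A (Y ⊓ LinearMap.ker (φ : X →ₗ[ℝ] ℝ)) := by
  by_contra hcon
  simp only [NonNorming] at hcon
  push Not at hcon
  obtain ⟨c, hc, hcon⟩ := hcon
  have hlow : ∀ y ∈ Y, φ y = 0 → ∀ r, 0 ≤ r → SmallOn A y r → c * ‖y‖ ≤ r := by
    intro y hy hφy r hr hs
    by_contra hlt
    push Not at hlt
    have hy0 : 0 < ‖y‖ := by
      by_contra h
      have : ‖y‖ = 0 := le_antisymm (not_lt.1 h) (norm_nonneg _)
      rw [this] at hlt; linarith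
    refine hcon (‖y‖⁻¹ • y) ⟨Y.smul_mem _ hy, by simp [hφy]⟩
      (by rw [norm_smul]; simp [hy0.ne']) ((hs.smul ‖y‖⁻¹).mono ?_)
    rw [abs_of_pos (inv_pos.2 hy0), inv_mul_eq_div, div_le_iff₀ hy0]
    exact hlt.le
  by_cases hz : ∀ y ∈ Y, φ y = 0
  · obtain ⟨x, hx, hx1, hxs⟩ := hY c hc
    exact hcon x ⟨hx, hz x hx⟩ hx1 hxs
  push Not at hz
  obtain ⟨e0, he0, hφe0⟩ := hz
  obtain ⟨e, he, hφe⟩ : ∃ e ∈ Y, φ e = 1 :=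
    ⟨(φ e0)⁻¹ • e0, Y.smul_mem _ he0, by simp [hφe0]⟩
  by_cases hd : ∀ d : ℝ, 0 < d → ∃ y ∈ Y, φ y = 0 ∧ SmallOn A (e - y) d
  · have hseq : ∀ n : ℕ, ∃ y ∈ Y, φ y = 0 ∧ SmallOn A (e - y) (1 / ((n : ℝ) + 1)) :=
      fun n => hd _ (by positivity)
    choose y hyY hyφ hys using hseq
    have hlim := tendsto_one_div_add_atTop_nhds_zero_nat (𝕜 := ℝ)
    have hdist : ∀ n m, c * ‖y n - y m‖ ≤ 1 / ((m : ℝ) + 1) + 1 / ((n : ℝ) + 1) := by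
      intro n m
      refine hlow _ (Y.sub_mem (hyY n) (hyY m)) (by simp [hyφ]) _ (by positivity) ?_
      have := (hys m).add (hys n).neg
      have e1 : e - y m + -(e - y n) = y n - y m := by abel
      rwa [e1] at this
    have hcau : CauchySeq y := by
      refine cauchySeq_of_le_tendsto_0 (fun N : ℕ => (2 / c) * (1 / ((N : ℝ) + 1))) ?_ ?_
      · intro n m N hn hm
        have h1 : 1 / ((n : ℝ) + 1) ≤ 1 / ((N : ℝ) + 1) := by
          have : (N : ℝ) ≤ n := by exact_mod_cast hn
          gcongr
        have h2 : 1 / ((m : ℝ) + 1) ≤ 1 / ((N : ℝ) + 1) := by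
          have : (N : ℝ) ≤ m := by exact_mod_cast hm
          gcongr
        have h3 := hdist n m
        rw [dist_eq_norm]
        have h4 : 2 / c * (1 / ((N : ℝ) + 1)) = (2 * (1 / ((N : ℝ) + 1))) / c := by ring
        rw [h4, le_div_iff₀ hc]
        linarith
      · simpa using hlim.const_mul (2 / c)
    obtain ⟨z, hz⟩ := cauchySeq_tendsto_of_complete hcau
    have hφz : φ z = 0 := by
      have h1 : Filter.Tendsto (fun n => φ (y n)) Filter.atTop (nhds (φ z)) :=
        (φ.continuous.tendsto z).comp hz
      simp only [hyφ] at h1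
      exact (tendsto_nhds_unique h1 tendsto_const_nhds)
    have hez : e - z = 0 := by
      apply htot
      intro f hf
      have h1 : Filter.Tendsto (fun n => |f (e - y n)|) Filter.atTop (nhds |f (e - z)|) :=
        ((f.continuous.tendsto _).comp (tendsto_const_nhds.sub hz)).abs
      have h2 : Filter.Tendsto (fun n : ℕ => 1 / ((n : ℝ) + 1) * ‖f‖) Filter.atTop (nhds 0) := by
        simpa using hlim.mul_const ‖f‖
      have h3 := le_of_tendsto_of_tendsto' h1 h2 (fun n => hys n f hf)
      exact abs_eq_zero.1 (le_antisymm h3 (abs_nonneg _))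
    have : φ e = φ z := by rw [sub_eq_zero.1 hez]
    rw [hφe, hφz] at this
    exact one_ne_zero this
  · push Not at hd
    obtain ⟨d, hd0, hd⟩ := hd
    set M : ℝ := (1 + ‖e‖ / d) / c + ‖e‖ / d with hM
    have hMpos : 0 < M := by positivity
    obtain ⟨x, hxY, hx1, hxs⟩ := hY (1 / (2 * M)) (by positivity)
    set η : ℝ := 1 / (2 * M) with hη
    have hη0 : 0 < η := by positivity
    set t := φ x with ht
    have htd : |t| ≤ η / d := by
      by_contra hlt
      push Not at hlt
      have ht0 : 0 < |t| := lt_trans (by positivity) hlt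
      have ht1 : t ≠ 0 := abs_pos.1 ht0
      refine hd (e - t⁻¹ • x) (Y.sub_mem he (Y.smul_mem _ hxY)) ?_ ?_
      · rw [map_sub, map_smul, hφe, ← ht, smul_eq_mul, inv_mul_cancel₀ ht1, sub_self]
      · rw [sub_sub_cancel]
        refine (hxs.smul t⁻¹).mono ?_
        rw [abs_inv, inv_mul_eq_div, div_le_iff₀ ht0]
        rw [div_lt_iff₀ hd0] at hlt
        linarith
    have hyY : x - t • e ∈ Y := Y.sub_mem hxY (Y.smul_mem _ he)
    have hys : SmallOn A (x - t • e) (η + |t| * ‖e‖) := by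
      rw [sub_eq_add_neg]
      exact hxs.add ((smallOn_norm e).smul t).neg
    have h1 := hlow _ hyY (by rw [map_sub, map_smul, hφe, ← ht]; simp) _ (by positivity) hys
    have h2 : ‖x‖ ≤ ‖x - t • e‖ + |t| * ‖e‖ := by
      have := norm_add_le (x - t • e) (t • e)
      rwa [sub_add_cancel, norm_smul, Real.norm_eq_abs] at this
    have h3 : |t| * ‖e‖ ≤ η / d * ‖e‖ := mul_le_mul_of_nonneg_right htd (norm_nonneg _)
    have h4 : ‖x - t • e‖ ≤ (η + η / d * ‖e‖) / c := by
      rw [le_div_iff₀ hc]; linarith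
    have h5 : (η + η / d * ‖e‖) / c + η / d * ‖e‖ = η * M := by rw [hM]; ring
    have h6 : η * M = 1 / 2 := by rw [hη]; field_simp
    linarith

lemma exists_small_in_kernels [CompleteSpace X]
    (htot : ∀ x : X, (∀ f ∈ A, f x = 0) → x = 0) (h : NonNorming A ⊤)
    (s : Finset (StrongDual ℝ X)) :
    ∃ Y : Submodule ℝ X, IsClosed (Y : Set X) ∧ NonNorming A Y ∧ ∀ φ ∈ s, ∀ y ∈ Y, φ y = 0 := by
  classical
  induction s using Finset.induction_on with
  | empty => exact ⟨⊤, isClosed_univ, h, by simp⟩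
  | insert φ s _ ih =>
    obtain ⟨Y, hYc, hYn, hY⟩ := ih
    refine ⟨Y ⊓ LinearMap.ker (φ : X →ₗ[ℝ] ℝ), ?_, hYn.inf_ker htot hYc φ, ?_⟩
    · exact hYc.inter (isClosed_eq φ.continuous continuous_const)
    · intro ψ hψ y hy
      rcases Finset.mem_insert.1 hψ with rfl | hψ
      · exact hy.2
      · exact hY ψ hψ y hy.1

/-- Coordinate functionals obtained by elimination. -/
noncomputable def coordFun (x : ℕ → X) (ψ : ℕ → StrongDual ℝ X) : ℕ → StrongDual ℝ X
  | n => ψ n - ∑ i : Fin n, ψ n (x i) • coordFun x ψ i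
decreasing_by exact i.2

lemma coordFun_eq (x : ℕ → X) (ψ : ℕ → StrongDual ℝ X) (n : ℕ) :
    coordFun x ψ n = ψ n - ∑ i ∈ Finset.range n, ψ n (x i) • coordFun x ψ i := by
  rw [coordFun, Finset.sum_range]

lemma coordFun_norm (x : ℕ → X) (ψ : ℕ → StrongDual ℝ X) (hx : ∀ n, ‖x n‖ = 1)
    (hψ : ∀ n, ‖ψ n‖ ≤ 1) (n : ℕ) : ‖coordFun x ψ n‖ ≤ 2 ^ n := by
  induction n using Nat.strong_induction_on with
  | _ n ih =>
    rw [coordFun_eq]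
    have h1 : ‖∑ i ∈ Finset.range n, ψ n (x i) • coordFun x ψ i‖ ≤
        ∑ i ∈ Finset.range n, (2:ℝ) ^ i := by
      refine norm_sum_le_of_le _ fun i hi => ?_
      rw [norm_smul]
      have h2 : ‖ψ n (x i)‖ ≤ 1 := by
        refine ((ψ n).le_opNorm _).trans ?_
        rw [hx, mul_one]; exact hψ n
      have h3 := ih i (Finset.mem_range.1 hi)
      calc _ ≤ 1 * (2:ℝ) ^ i := mul_le_mul h2 h3 (norm_nonneg _) zero_le_one
        _ = _ := one_mul _
    have h2 : ∑ i ∈ Finset.range n, (2:ℝ) ^ i = 2 ^ n - 1 := by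
      rw [geom_sum_eq (by norm_num)]; norm_num
    have h3 := norm_sub_le (ψ n) (∑ i ∈ Finset.range n, ψ n (x i) • coordFun x ψ i)
    have h4 := hψ n
    linarith

lemma coordFun_apply (x : ℕ → X) (ψ : ℕ → StrongDual ℝ X)
    (h1 : ∀ n, ψ n (x n) = 1) (h0 : ∀ m n, m < n → ψ m (x n) = 0) (n m : ℕ) :
    coordFun x ψ n (x m) = if n = m then 1 else 0 := by
  induction n using Nat.strong_induction_on with
  | _ n ih =>
    have hs : ∑ i ∈ Finset.range n, ψ n (x i) * coordFun x ψ i (x m) =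
        ∑ i ∈ Finset.range n, if i = m then ψ n (x i) else 0 := by
      refine Finset.sum_congr rfl fun i hi => ?_
      rw [ih i (Finset.mem_range.1 hi)]
      simp
    have : coordFun x ψ n (x m) =
        ψ n (x m) - ∑ i ∈ Finset.range n, ψ n (x i) * coordFun x ψ i (x m) := by
      rw [coordFun_eq]
      simp
    rw [this, hs, Finset.sum_ite_eq']
    rcases lt_trichotomy n m with h | h | h
    · simp [h0 n m h, h.ne]
    · subst h; simp [h1]
    · simp [h, h.ne']

end helpers

/-- If the dual of a Banach space $X$ contains a linear subspace $A$ whose weak* derived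
set $A^{(1)}$ is a proper norm-dense subset of $X^*$, then $X$ contains an
infinite-dimensional closed subspace with separable dual. -/
theorem stmt1 (X : Type*) [NormedAddCommGroup X] [NormedSpace ℝ X] [CompleteSpace X]
    (A : Submodule ℝ (StrongDual ℝ X))
    (hproper : wStarDerived (A : Set (StrongDual ℝ X)) ≠ Set.univ)
    (hdense : Dense (wStarDerived (A : Set (StrongDual ℝ X)))) :
    ∃ Z : Submodule ℝ X, IsClosed (Z : Set X) ∧ ¬ FiniteDimensional ℝ Z ∧
      TopologicalSpace.SeparableSpace (StrongDual ℝ Z) := by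
  classical
  have htot : ∀ x : X, (∀ f ∈ A, f x = 0) → x = 0 := fun x hx => total_of_dense hdense hx
  have hnn : NonNorming A ⊤ := nonNorming_top hproper
  obtain ⟨F, hF, hFr⟩ := exists_seq_of_forall_finset_exists
    (α := ℕ × X × StrongDual ℝ X)
    (fun p => ‖p.2.1‖ = 1 ∧ ‖p.2.2‖ ≤ 1 ∧ p.2.2 p.2.1 = 1 ∧ SmallOn A p.2.1 ((1 / 4 : ℝ) ^ p.1))
    (fun p q => p.1 < q.1 ∧ p.2.2 q.2.1 = 0) (by
      intro s _
      obtain ⟨Y, _, hYn, hY⟩ := exists_small_in_kernels htot hnn (s.image fun p => p.2.2)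
      set k := (s.sup fun p => p.1) + 1 with hk
      obtain ⟨x, hxY, hx1, hxs⟩ := hYn ((1 / 4 : ℝ) ^ k) (by positivity)
      obtain ⟨g, hg1, hg⟩ := exists_dual_vector'' ℝ x
      refine ⟨(k, x, g), ⟨hx1, hg1, by simpa [hx1] using hg, hxs⟩, fun p hp => ⟨?_, ?_⟩⟩
      · have : p.1 ≤ s.sup fun p => p.1 := Finset.le_sup (f := fun p => p.1) hp
        show p.1 < k
        omega
      · exact hY _ (Finset.mem_image_of_mem _ hp) x hxY)
  set x : ℕ → X := fun n => (F n).2.1 with hxdef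
  set ψ : ℕ → StrongDual ℝ X := fun n => (F n).2.2 with hψdef
  have hkn : ∀ n, n ≤ (F n).1 := by
    have : StrictMono fun n => (F n).1 := fun m n hmn => (hFr m n hmn).1
    exact fun n => this.le_apply
  have hx1 : ∀ n, ‖x n‖ = 1 := fun n => (hF n).1
  have hψ1 : ∀ n, ‖ψ n‖ ≤ 1 := fun n => (hF n).2.1
  have hψx : ∀ n, ψ n (x n) = 1 := fun n => (hF n).2.2.1
  have hψ0 : ∀ m n, m < n → ψ m (x n) = 0 := fun m n h => (hFr m n h).2
  have hxs : ∀ n, SmallOn A (x n) ((1 / 4 : ℝ) ^ n) := fun n =>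
    (hF n).2.2.2.mono (pow_le_pow_of_le_one (by norm_num) (by norm_num) (hkn n))
  set a := coordFun x ψ with ha
  have han : ∀ n, ‖a n‖ ≤ 2 ^ n := coordFun_norm x ψ hx1 hψ1
  have hax : ∀ n m, a n (x m) = if n = m then 1 else 0 := coordFun_apply x ψ hψx hψ0
  have hli : LinearIndependent ℝ x := by
    rw [linearIndependent_iff']
    intro s g hg i hi
    have := congrArg (a i) hg
    simpa [map_sum, hax, hi] using this
  set Z : Submodule ℝ X := (Submodule.span ℝ (Set.range x)).topologicalClosure with hZ
  have hxZ : ∀ n, x n ∈ Z := fun n =>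
    Submodule.le_topologicalClosure _ (Submodule.subset_span ⟨n, rfl⟩)
  refine ⟨Z, Submodule.isClosed_topologicalClosure _, ?_, ?_⟩
  · intro hfd
    have hli' : LinearIndependent ℝ (fun n => (⟨x n, hxZ n⟩ : Z)) := by
      apply LinearIndependent.of_comp Z.subtype
      exact hli
    have := hli'.finite
    exact not_finite ℕ
  · let R : StrongDual ℝ X →L[ℝ] StrongDual ℝ Z :=
      (ContinuousLinearMap.compL ℝ Z X ℝ).flip Z.subtypeL
    have hR : ∀ f (z : Z), R f z = f z := fun f z => rfl
    have hsurj : Function.Surjective R := by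
      intro g
      obtain ⟨f, hf, _⟩ := exists_extension_norm_eq Z g
      exact ⟨f, by ext z; exact hf z⟩
    set S : Submodule ℝ (StrongDual ℝ Z) := Submodule.span ℝ (Set.range fun n => R (a n)) with hS
    have hsub : R '' (wStarDerived (A : Set (StrongDual ℝ X))) ⊆ closure (S : Set _) := by
      rintro _ ⟨f, hf, rfl⟩
      obtain ⟨C, hC0, hC⟩ := derived_bound hf
      have hsum : Summable fun n => f (x n) • a n := by
        refine Summable.of_norm_bounded (g := fun n => C * (1 / 2 : ℝ) ^ n)
          ((summable_geometric_of_lt_one (by norm_num) (by norm_num)).mul_left C) fun n => ?_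
        rw [norm_smul, Real.norm_eq_abs]
        have h1 := hC (x n) _ (by positivity) (hxs n)
        calc _ ≤ C * (1 / 4 : ℝ) ^ n * 2 ^ n :=
              mul_le_mul h1 (han n) (norm_nonneg _) (by positivity)
          _ = C * (1 / 2 : ℝ) ^ n := by
              rw [mul_assoc, ← mul_pow]; norm_num
      obtain ⟨g, hg⟩ := hsum
      have hgx : ∀ m, g (x m) = f (x m) := by
        intro m
        have h1 := (ContinuousLinearMap.apply ℝ ℝ (x m)).hasSum hg
        have h2 : HasSum (fun n => f (x n) * a n (x m)) (f (x m)) := by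
          have := hasSum_single (f := fun n => f (x n) * a n (x m)) m
            (fun n hn => by simp [hax, hn])
          simpa [hax] using this
        exact h1.unique h2
      have hfg : R f = R g := by
        have hle : Z ≤ LinearMap.ker ((f - g : StrongDual ℝ X) : X →ₗ[ℝ] ℝ) := by
          refine Submodule.topologicalClosure_minimal _ ?_
            (isClosed_eq (f - g : StrongDual ℝ X).continuous continuous_const)
          rw [Submodule.span_le]
          rintro _ ⟨m, rfl⟩
          show f (x m) - g (x m) = 0
          rw [hgx, sub_self]
        ext z
        have : f z - g z = 0 := hle z.2
        rw [hR, hR]; linarith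
      rw [hfg]
      have h3 := R.hasSum hg
      refine mem_closure_of_tendsto h3 (Filter.Eventually.of_forall fun s => ?_)
      refine S.sum_mem fun i _ => ?_
      rw [map_smul]
      exact S.smul_mem _ (Submodule.subset_span ⟨i, rfl⟩)
    have hd : Dense (R '' (wStarDerived (A : Set (StrongDual ℝ X)))) :=
      hsurj.denseRange.dense_image R.continuous hdense
    have hsep : TopologicalSpace.IsSeparable (Set.univ : Set (StrongDual ℝ Z)) := by
      have h1 : TopologicalSpace.IsSeparable (closure (S : Set (StrongDual ℝ Z))) :=
        ((Set.countable_range fun n => R (a n)).isSeparable.span).closure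
      refine h1.mono fun z _ => ?_
      exact closure_minimal hsub isClosed_closure (hd z)
    exact TopologicalSpace.isSeparable_univ_iff.1 hsep
end

section
/- Let X be a real Banach space which is not quasi-reflexive and which contains an infinite-dimensional closed subspace with separable dual. Then there exists a linear subspace A ⊆ X* such that the weak* derived set A^(1) is a proper norm-dense subset of X*. -/
open NormedSpace

lemma aux_sep {V : Type*} [NormedAddCommGroup V] [NormedSpace ℝ V] (R : Submodule ℝ V)
    (hR : IsClosed (R : Set V)) (v : V) (hv : v ∉ R) :
    ∃ φ : StrongDual ℝ V, (∀ y ∈ R, φ y = 0) ∧ φ v = 1 := by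
  have := hR
  have hne : (R.mkQ v) ≠ 0 := by
    simpa [Submodule.Quotient.mk_eq_zero] using hv
  obtain ⟨g, hg⟩ := SeparatingDual.exists_eq_one (R := ℝ) hne
  refine ⟨g.comp R.mkQL, fun y hy => ?_, ?_⟩
  · have : R.mkQ y = 0 := by simpa [Submodule.Quotient.mk_eq_zero] using hy
    change g (R.mkQ y) = 0
    rw [this, map_zero]
  · exact hg

lemma aux_step {V : Type*} [NormedAddCommGroup V] [NormedSpace ℝ V] (P Q : Submodule ℝ V)
    (hP : IsClosed (P : Set V))
    (hPQ : ∀ E : Submodule ℝ V, FiniteDimensional ℝ E → ¬ Q ≤ P ⊔ E)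
    (S : Set V) (hS : S.Finite) (T : Set (StrongDual ℝ V)) (hT : T.Finite) :
    ∃ v ∈ Q, ∃ φ : StrongDual ℝ V, (∀ t ∈ T, t v = 0) ∧ (∀ y ∈ P, φ y = 0) ∧
      (∀ s ∈ S, φ s = 0) ∧ φ v = 1 ∧ ‖φ‖ = 1 := by
  have : FiniteDimensional ℝ (Submodule.span ℝ S) := FiniteDimensional.span_of_finite ℝ hS
  have hcl : IsClosed ((P ⊔ Submodule.span ℝ S : Submodule ℝ V) : Set V) :=
    Submodule.isClosed_sup_finiteDimensional _ _ hP
  have : ∃ v ∈ Q, (∀ t ∈ T, t v = 0) ∧ v ∉ P ⊔ Submodule.span ℝ S := by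
    by_contra! hcon
    have := hT.fintype
    let L : Q →ₗ[ℝ] (T → ℝ) := LinearMap.pi fun t => (t.1 : V →ₗ[ℝ] ℝ).comp Q.subtype
    obtain ⟨E, hE⟩ := Submodule.exists_isCompl (LinearMap.ker L)
    have : FiniteDimensional ℝ E := by
      have e1 := Submodule.quotientEquivOfIsCompl _ _ hE
      have e2 := L.quotKerEquivRange
      exact LinearEquiv.finiteDimensional (e2.symm.trans e1)
    have : FiniteDimensional ℝ (E.map Q.subtype) := inferInstance
    apply hPQ (Submodule.span ℝ S ⊔ E.map Q.subtype) inferInstance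
    intro q hq
    have hmem : (⟨q, hq⟩ : Q) ∈ LinearMap.ker L ⊔ E := by rw [hE.sup_eq_top]; trivial
    obtain ⟨a, ha, b, hb, hab⟩ := Submodule.mem_sup.1 hmem
    have hq' : q = (a : V) + (b : V) := by
      have := congrArg Subtype.val hab
      simpa using this.symm
    rw [hq', ← sup_assoc]
    refine Submodule.add_mem_sup (hcon a a.2 fun t ht => ?_) (Submodule.mem_map.2 ⟨b, hb, rfl⟩)
    have := congrFun (LinearMap.mem_ker.1 ha) ⟨t, ht⟩
    simpa [L] using this
  obtain ⟨v, hvQ, hvT, hv⟩ := this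
  obtain ⟨φ, h1, h2⟩ := aux_sep _ hcl v hv
  have hφ : ‖φ‖ ≠ 0 := by
    intro h
    rw [norm_eq_zero] at h
    simp [h] at h2
  refine ⟨‖φ‖ • v, Q.smul_mem _ hvQ, ‖φ‖⁻¹ • φ, fun t ht => by simp [hvT t ht], fun y hy => ?_,
    fun s hs => ?_, ?_, ?_⟩
  · simp [h1 y (Submodule.mem_sup_left hy)]
  · simp [h1 s (Submodule.mem_sup_right (Submodule.subset_span hs))]
  · simp [h2, hφ]
  · simp [norm_smul, hφ]

lemma aux_biorth {V : Type*} [NormedAddCommGroup V] [NormedSpace ℝ V] (P Q : Submodule ℝ V)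
    (hP : IsClosed (P : Set V))
    (hPQ : ∀ E : Submodule ℝ V, FiniteDimensional ℝ E → ¬ Q ≤ P ⊔ E) :
    ∃ (h : ℕ → V) (ψ : ℕ → StrongDual ℝ V), (∀ n, h n ∈ Q) ∧ (∀ n, ∀ y ∈ P, ψ n y = 0) ∧
      ∀ i j, ψ i (h j) = if i = j then 1 else 0 := by
  classical
  obtain ⟨f, hf, hr⟩ := exists_seq_of_forall_finset_exists
    (fun a : V × StrongDual ℝ V => a.1 ∈ Q ∧ (∀ y ∈ P, a.2 y = 0) ∧ a.2 a.1 = 1)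
    (fun a b => a.2 b.1 = 0 ∧ b.2 a.1 = 0) (by
      intro s _
      obtain ⟨v, hv, φ, h1, h2, h3, h4, -⟩ := aux_step P Q hP hPQ (Prod.fst '' (s : Set (V × StrongDual ℝ V)))
        (s.finite_toSet.image _) (Prod.snd '' (s : Set (V × StrongDual ℝ V))) (s.finite_toSet.image _)
      exact ⟨(v, φ), ⟨hv, h2, h4⟩, fun x hx =>
        ⟨h1 _ (Set.mem_image_of_mem _ hx), h3 _ (Set.mem_image_of_mem _ hx)⟩⟩)
  refine ⟨fun n => (f n).1, fun n => (f n).2, fun n => (hf n).1, fun n => (hf n).2.1, ?_⟩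
  intro i j
  rcases lt_trichotomy i j with h | h | h
  · simp [h.ne, (hr _ _ h).1]
  · subst h; simp [(hf i).2.2]
  · simp [h.ne', (hr _ _ h).2]

lemma aux_helly {Y : Type*} [NormedAddCommGroup Y] [NormedSpace ℝ Y] {ι : Type*} [Finite ι]
    (F : ι → StrongDual ℝ Y) (ψ : StrongDual ℝ (StrongDual ℝ Y)) :
    ∃ g : Y, ‖g‖ ≤ ‖ψ‖ + 1 ∧ ∀ i, F i g = ψ (F i) := by
  classical
  have := Fintype.ofFinite ι
  let T : Y →L[ℝ] (ι → ℝ) := ContinuousLinearMap.pi F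
  let c : ι → ℝ := fun i => ψ (F i)
  have hc : c ∈ closure (T '' Metric.closedBall 0 ‖ψ‖) := by
    by_contra hcon
    have hconv : Convex ℝ (closure (T '' Metric.closedBall (0 : Y) ‖ψ‖)) :=
      ((convex_closedBall (0 : Y) ‖ψ‖).linear_image (T : Y →ₗ[ℝ] (ι → ℝ))).closure
    obtain ⟨a, u, h1, h2⟩ := geometric_hahn_banach_closed_point hconv isClosed_closure hcon
    let G : StrongDual ℝ Y := a.comp T
    have hG : ∀ y, ‖y‖ ≤ ‖ψ‖ → G y < u := fun y hy =>
      h1 _ (subset_closure ⟨y, by simpa using hy, rfl⟩)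
    have hGsum : G = ∑ i, a (Pi.single i 1) • F i := by
      ext y
      have : T y = ∑ i, (F i y) • (Pi.single i (1:ℝ) : ι → ℝ) := by
        ext j
        simp [T, Finset.sum_apply, Pi.single_apply]
      change a (T y) = _
      rw [this, map_sum]
      simp [mul_comm]
    have hac : a c = ψ G := by
      have : c = ∑ i, (c i) • (Pi.single i (1:ℝ) : ι → ℝ) := by
        ext j
        simp [Finset.sum_apply, Pi.single_apply]
      rw [this, map_sum, hGsum, map_sum]
      simp [c, mul_comm]
    have hu : 0 < u := by simpa using hG 0 (by rw [norm_zero]; exact norm_nonneg ψ)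
    have hle : ‖ψ‖ * ‖G‖ ≤ u := by
      rcases (norm_nonneg ψ).eq_or_lt with h0 | h0
      · rw [← h0]; simpa using hu.le
      · have : ‖G‖ ≤ u / ‖ψ‖ := by
          refine ContinuousLinearMap.opNorm_le_of_unit_norm (by positivity) fun y hy => ?_
          rw [le_div_iff₀ h0, Real.norm_eq_abs]
          have e1 := hG (‖ψ‖ • y) (by simp [norm_smul, hy, abs_of_pos h0])
          have e2 := hG (-(‖ψ‖ • y)) (by simp [norm_smul, hy, abs_of_pos h0])
          simp only [map_neg, map_smul, smul_eq_mul] at e1 e2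
          rcases abs_cases (G y) with h | h <;> nlinarith
        rw [le_div_iff₀ h0] at this
        linarith
    have := ψ.le_opNorm G
    rw [Real.norm_eq_abs] at this
    have := le_abs_self (ψ G)
    linarith
  obtain ⟨s, hs⟩ := (T : Y →ₗ[ℝ] (ι → ℝ)).rangeRestrict.exists_rightInverse_of_surjective
    (LinearMap.range_rangeRestrict _)
  let s' := LinearMap.toContinuousLinearMap s
  have hcR : c ∈ LinearMap.range (T : Y →ₗ[ℝ] (ι → ℝ)) := by
    have hcl : IsClosed ((LinearMap.range (T : Y →ₗ[ℝ] (ι → ℝ)) : Submodule ℝ _) : Set (ι → ℝ)) :=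
      Submodule.closed_of_finiteDimensional _
    refine closure_minimal ?_ hcl hc
    rintro _ ⟨y, -, rfl⟩
    exact ⟨y, rfl⟩
  obtain ⟨_, ⟨g, hg, rfl⟩, hd⟩ := Metric.mem_closure_iff.1 hc (1 / (‖s'‖ + 1)) (by positivity)
  rw [dist_eq_norm] at hd
  let d : LinearMap.range (T : Y →ₗ[ℝ] (ι → ℝ)) := ⟨c - T g, Submodule.sub_mem _ hcR ⟨g, rfl⟩⟩
  have hsd : T (s d) = c - T g := by
    have := congrArg Subtype.val (LinearMap.congr_fun hs d)
    simpa using this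
  refine ⟨g + s d, ?_, fun i => ?_⟩
  · have h1 : ‖s d‖ ≤ ‖s'‖ * ‖d‖ := s'.le_opNorm d
    have h2 : ‖d‖ ≤ 1 / (‖s'‖ + 1) := hd.le
    have h3 : ‖s'‖ * ‖d‖ ≤ ‖s'‖ * (1 / (‖s'‖ + 1)) := by gcongr
    have h4 : ‖s'‖ * (1 / (‖s'‖ + 1)) ≤ 1 := by
      rw [mul_one_div, div_le_one (by positivity)]; linarith
    have h5 : ‖g‖ ≤ ‖ψ‖ := by simpa using hg
    have := norm_add_le g (s d)
    linarith
  · have : T (g + s d) = c := by rw [map_add, hsd]; abel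
    exact congrFun this i

lemma aux_ext {Y : Type*} [NormedAddCommGroup Y] [NormedSpace ℝ Y]
    (A : Submodule ℝ Y) (e : StrongDual ℝ Y) (n u : ℝ) (hn' : 0 < n)
    (hA : ∀ g ∈ A, ‖g‖ ≤ n → e g < u) :
    ∃ G : StrongDual ℝ Y, (∀ g ∈ A, G g = e g) ∧ n * ‖G‖ ≤ u := by
  have hu : 0 < u := by simpa using hA 0 A.zero_mem (by simpa using hn'.le)
  let r : StrongDual ℝ A := e.comp A.subtypeL
  have hr : ‖r‖ ≤ u / n := by
    refine ContinuousLinearMap.opNorm_le_of_unit_norm (by positivity) fun y hy => ?_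
    rw [le_div_iff₀ hn', Real.norm_eq_abs]
    have hy' : ‖(y : Y)‖ = 1 := hy
    have e1 := hA (n • (y : Y)) (A.smul_mem _ y.2) (by simp [norm_smul, hy', abs_of_pos hn'])
    have e2 := hA (-(n • (y : Y))) (A.neg_mem (A.smul_mem _ y.2))
      (by simp [norm_smul, hy', abs_of_pos hn'])
    have hry : r y = e (y : Y) := rfl
    rw [hry]
    simp only [map_neg, map_smul, smul_eq_mul] at e1 e2
    rcases abs_cases (e (y : Y)) with h | h <;> nlinarith
  obtain ⟨G, hG1, hG2⟩ := exists_extension_norm_eq A r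
  refine ⟨G, fun g hg => hG1 ⟨g, hg⟩, ?_⟩
  rw [hG2]
  rw [le_div_iff₀ hn'] at hr
  linarith

/-- If `f` is not in the weak* closure of `A ∩ C B`, there is a separating point and a functional. -/
lemma aux_bipolar {X : Type*} [NormedAddCommGroup X] [NormedSpace ℝ X]
    (A : Submodule ℝ (StrongDual ℝ X)) (f : StrongDual ℝ X) (n : ℕ) (hn : 0 < n)
    (hf : StrongDual.toWeakDual f ∉ closure (StrongDual.toWeakDual ''
      ((A : Set (StrongDual ℝ X)) ∩ {g : StrongDual ℝ X | ‖g‖ ≤ n}))) :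
    ∃ (x : X) (G : StrongDual ℝ (StrongDual ℝ X)), (∀ g ∈ A, G g = g x) ∧ n * ‖G‖ < f x := by
  have hconv : Convex ℝ (closure (StrongDual.toWeakDual ''
      ((A : Set (StrongDual ℝ X)) ∩ {g : StrongDual ℝ X | ‖g‖ ≤ n}))) := by
    apply Convex.closure
    apply Convex.is_linear_image _ (LinearMap.isLinear
      (StrongDual.toWeakDual (𝕜 := ℝ) (E := X)).toLinearMap)
    apply A.convex.inter
    have := convex_closedBall (0 : StrongDual ℝ X) n
    have e : {g : StrongDual ℝ X | ‖g‖ ≤ n} = Metric.closedBall (0 : StrongDual ℝ X) n := by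
      ext g
      rw [mem_closedBall_zero_iff]; rfl
    rw [e]; exact this
  have : LocallyConvexSpace ℝ (WeakDual ℝ X) :=
    inferInstanceAs (LocallyConvexSpace ℝ (WeakBilin (topDualPairing ℝ X)))
  obtain ⟨a, u, h1, h2⟩ := geometric_hahn_banach_closed_point hconv isClosed_closure hf
  obtain ⟨x, hx⟩ := LinearMap.dualEmbedding_surjective (topDualPairing ℝ X) a
  have hax : ∀ g : StrongDual ℝ X, a (StrongDual.toWeakDual g) = g x := by
    intro g
    rw [← hx]
    rfl
  have hA : ∀ g ∈ A, ‖g‖ ≤ n → g x < u := by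
    intro g hg hgn
    rw [← hax]
    exact h1 _ (subset_closure ⟨g, ⟨hg, hgn⟩, rfl⟩)
  rw [hax] at h2
  have hn' : (0:ℝ) < n := by exact_mod_cast hn
  obtain ⟨G, hG1, hG2⟩ := aux_ext A (inclusionInDoubleDual ℝ X x) n u hn' hA
  exact ⟨x, G, hG1, lt_of_le_of_lt hG2 h2⟩

lemma aux_op {Y : Type*} [NormedAddCommGroup Y] [NormedSpace ℝ Y] [CompleteSpace Y]
    (e h : ℕ → StrongDual ℝ Y) (xs : ℕ → Y) (ψ : ℕ → (StrongDual ℝ Y →ₗ[ℝ] ℝ)) (C : ℕ → ℝ)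
    (hψC : ∀ k F, |ψ k F| ≤ C k * ‖F‖)
    (hbi : ∀ i j, e j (xs i) = if i = j then 1 else 0) (hn : ∀ i, ‖xs i‖ = 1)
    (hψh : ∀ i j, ψ i (h j) = if i = j then 1 else 0) :
    ∃ (ε : ℕ → ℝ) (S : Y ≃L[ℝ] Y), (∀ m, 0 < ε m) ∧ (∀ m, ε m * ‖h m‖ ≤ (1/4 : ℝ)^(m+1)) ∧
      (∀ f n, e n (S f) = e n f - ε n * h n f) ∧
      (∀ k (w : StrongDual ℝ Y), ψ k (w.comp (S : Y →L[ℝ] Y)) = ψ k w - ε k * w (xs k)) := by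
  let ε : ℕ → ℝ := fun m => (1/4 : ℝ)^(m+1) / (1 + ‖h m‖)
  have hε : ∀ m, 0 < ε m := fun m => by positivity
  have hεh : ∀ m, ε m * ‖h m‖ ≤ (1/4 : ℝ)^(m+1) := fun m => by
    have h1 : 0 ≤ ‖h m‖ := norm_nonneg (h m)
    have h2 : ε m * (1 + ‖h m‖) = (1/4 : ℝ)^(m+1) := div_mul_cancel₀ _ (by positivity)
    have := hε m
    nlinarith
  let K : ℕ → (Y →L[ℝ] Y) := fun m => ε m • (h m).smulRight (xs m)
  have hKapp : ∀ m f, K m f = (ε m * h m f) • xs m := fun m f => by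
    simp [K, smul_smul]
  have hKn : ∀ m, ‖K m‖ ≤ (1/4 : ℝ)^(m+1) := fun m => by
    have : ‖K m‖ = ε m * ‖h m‖ := by
      change ‖ε m • (h m).smulRight (xs m)‖ = _
      rw [norm_smul, ContinuousLinearMap.norm_smulRight_apply, hn, mul_one,
        Real.norm_eq_abs, abs_of_pos (hε m)]
    rw [this]; exact hεh m
  have hgeo : HasSum (fun m : ℕ => (1/4 : ℝ)^(m+1)) (1/3) := by
    have := (hasSum_geometric_of_lt_one (r := (1/4:ℝ)) (by norm_num) (by norm_num)).mul_right (1/4)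
    have e1 : (1 - 1/4 : ℝ)⁻¹ * (1/4) = 1/3 := by norm_num
    rw [e1] at this
    exact this
  have hKs : Summable K := Summable.of_norm_bounded hgeo.summable hKn
  have hKt : ‖∑' m, K m‖ < 1 :=
    lt_of_le_of_lt (tsum_of_norm_bounded hgeo hKn) (by norm_num)
  obtain ⟨U, hU⟩ := isUnit_one_sub_of_norm_lt_one hKt
  let S : Y ≃L[ℝ] Y := ContinuousLinearEquiv.unitsEquiv ℝ _ U
  have hS : (S : Y →L[ℝ] Y) = 1 - ∑' m, K m := by
    rw [← hU]; rfl
  have hSapp : ∀ f, S f = f - (∑' m, K m) f := fun f => by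
    have := congrArg (fun T : Y →L[ℝ] Y => T f) hS
    simpa using this
  -- evaluation on x n
  have hSx : ∀ f n, e n (S f) = e n f - ε n * h n f := by
    intro f n
    let ev : (Y →L[ℝ] Y) →L[ℝ] ℝ :=
      (e n).comp (ContinuousLinearMap.apply ℝ (Y) f)
    have h1 : HasSum (fun m => ev (K m)) (ev (∑' m, K m)) := ev.hasSum hKs.hasSum
    have hevK : ∀ m, ev (K m) = if m = n then ε n * h n f else 0 := by
      intro m
      change e n (K m f) = _
      rw [hKapp, map_smul, hbi]
      split_ifs with hmn
      · subst hmn; simp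
      · simp
    have h2 : HasSum (fun m => ev (K m)) (ε n * h n f) := by
      have := hasSum_ite_eq n (ε n * h n f)
      simpa only [hevK] using this
    have h3 : e n ((∑' m, K m) f) = ε n * h n f := h1.unique h2
    rw [hSapp, map_sub, h3]
  -- adjoint
  have hSψ : ∀ k (w : StrongDual ℝ (Y)),
      ψ k (w.comp (S : Y →L[ℝ] Y)) = ψ k w - ε k * w (xs k) := by
    intro k w
    let ev : (Y →L[ℝ] Y) →L[ℝ] ℝ :=
      ((ψ k).mkContinuous (C k) (hψC k)).comp (ContinuousLinearMap.compL ℝ (Y) (Y) ℝ w)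
    have h1 : HasSum (fun m => ev (K m)) (ev (∑' m, K m)) := ev.hasSum hKs.hasSum
    have hevK : ∀ m, ev (K m) = if m = k then ε k * w (xs k) else 0 := by
      intro m
      have : w.comp (K m) = (ε m * w (xs m)) • h m := by
        ext f
        rw [ContinuousLinearMap.comp_apply, hKapp, map_smul, smul_apply,
          smul_eq_mul, smul_eq_mul]
        ring
      change ψ k (w.comp (K m)) = _
      rw [this, map_smul, hψh]
      by_cases hmk : m = k
      · subst hmk; simp
      · simp [hmk, Ne.symm hmk]
    have h2 : HasSum (fun m => ev (K m)) (ε k * w (xs k)) := by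
      have := hasSum_ite_eq k (ε k * w (xs k))
      simpa only [hevK] using this
    have h3 : ψ k (w.comp (∑' m, K m)) = ε k * w (xs k) := h1.unique h2
    rw [hS, ContinuousLinearMap.comp_sub, map_sub, h3]
    rfl
  exact ⟨ε, S, hε, hεh, hSx, hSψ⟩

lemma aux_main {X : Type*} [NormedAddCommGroup X] [NormedSpace ℝ X]
    (x : ℕ → X) (xs : ℕ → StrongDual ℝ X) (h : ℕ → StrongDual ℝ (StrongDual ℝ X))
    (ψ : ℕ → (StrongDual ℝ (StrongDual ℝ X) →ₗ[ℝ] ℝ)) (C : ℕ → ℝ) (hC : ∀ k, 0 ≤ C k)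
    (hψC : ∀ k F, |ψ k F| ≤ C k * ‖F‖)
    (hbi : ∀ i j, xs i (x j) = if i = j then 1 else 0) (hn : ∀ i, ‖xs i‖ = 1)
    (hD : Dense {f : StrongDual ℝ X | ∃ N, ∀ m ≥ N, f (x m) = 0})
    (hψX : ∀ k y, ψ k (inclusionInDoubleDual ℝ X y) = 0)
    (hψW : ∀ k (w : StrongDual ℝ (StrongDual ℝ X)),
      (∀ f : StrongDual ℝ X, (∀ m, f (x m) = 0) → w f = 0) → ψ k w = 0)
    (hψh : ∀ i j, ψ i (h j) = if i = j then 1 else 0) :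
    ∃ A : Submodule ℝ (StrongDual ℝ X),
      wStarDerived (A : Set (StrongDual ℝ X)) ≠ Set.univ ∧
      Dense (wStarDerived (A : Set (StrongDual ℝ X))) := by
  classical
  obtain ⟨ε, S, hε, hεh, hSx', hSψ⟩ := aux_op (fun n => inclusionInDoubleDual ℝ X (x n)) h xs ψ C hψC
    (fun i j => hbi i j) hn hψh
  have hSx : ∀ f n, S f (x n) = f (x n) - ε n * h n f := hSx'
  let A : Submodule ℝ (StrongDual ℝ X) :=
    { carrier := {f | ∀ m, S f (x m) = 0}
      add_mem' := fun {a b} ha hb m => by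
        simp only [Set.mem_ofPred_eq] at ha hb
        simp [ha m, hb m]
      zero_mem' := fun m => by simp
      smul_mem' := fun c a ha m => by
        simp only [Set.mem_ofPred_eq] at ha
        simp [ha m] }
  have hAmem : ∀ f, f ∈ A ↔ ∀ m, S f (x m) = 0 := fun f => Iff.rfl
  refine ⟨A, ?_, ?_⟩
  · -- properness
    intro huniv
    have hs2 : Summable fun m : ℕ => (1/2 : ℝ)^m • xs m := by
      refine Summable.of_norm_bounded (g := fun m : ℕ => (1/2 : ℝ)^m)
        (summable_geometric_of_lt_one (by norm_num) (by norm_num)) fun m => ?_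
      rw [norm_smul, hn]; simp
    let f0 : StrongDual ℝ X := ∑' m : ℕ, (1/2 : ℝ)^m • xs m
    have hf0 : ∀ n, f0 (x n) = (1/2 : ℝ)^n := by
      intro n
      let ev := inclusionInDoubleDual ℝ X (x n)
      have h1 := ev.hasSum hs2.hasSum
      have hevK : ∀ m, ev ((1/2 : ℝ)^m • xs m) = if m = n then (1/2 : ℝ)^n else 0 := by
        intro m
        change ((1/2 : ℝ)^m • xs m) (x n) = _
        rw [smul_apply, hbi]
        split_ifs with hmn
        · subst hmn; simp
        · simp
      have h2 : HasSum (fun m => ev ((1/2 : ℝ)^m • xs m)) ((1/2 : ℝ)^n) := by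
        have := hasSum_ite_eq n ((1/2 : ℝ)^n)
        simpa only [hevK] using this
      exact h1.unique h2
    have hmem : f0 ∈ wStarDerived (A : Set (StrongDual ℝ X)) := by rw [huniv]; trivial
    obtain ⟨N, hN⟩ := Set.mem_iUnion.1 hmem
    have hbound : ∀ m, f0 (x m) ≤ N * (1/4 : ℝ)^(m+1) := by
      intro m
      have hcl : IsClosed {g : WeakDual ℝ X | g (x m) ≤ N * (1/4 : ℝ)^(m+1)} :=
        isClosed_le (WeakDual.eval_continuous (x m)) continuous_const
      have hsub := closure_minimal (s := StrongDual.toWeakDual ''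
        ((A : Set (StrongDual ℝ X)) ∩ {g : StrongDual ℝ X | ‖g‖ ≤ N})) ?_ hcl
      · exact hsub hN
      · rintro _ ⟨g, ⟨hgA, hgN⟩, rfl⟩
        change g (x m) ≤ _
        have h1 := (hAmem g).1 hgA m
        rw [hSx] at h1
        have h2 : h m g ≤ ‖h m‖ * ‖g‖ := (le_abs_self _).trans ((h m).le_opNorm g)
        have h3 : ‖g‖ ≤ N := hgN
        have h4 := hεh m
        have h5 : 0 ≤ ε m * ‖h m‖ := mul_nonneg (hε m).le (norm_nonneg (h m))
        calc g (x m) = ε m * h m g := by linarith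
          _ ≤ ε m * (‖h m‖ * ‖g‖) := by have := hε m; gcongr
          _ = (ε m * ‖h m‖) * ‖g‖ := by ring
          _ ≤ (1/4 : ℝ)^(m+1) * N := by gcongr
          _ = _ := by ring
    obtain ⟨m, hm⟩ := pow_unbounded_of_one_lt (N : ℝ) (one_lt_two)
    have := hbound m
    rw [hf0] at this
    have e1 : (1/4 : ℝ)^(m+1) = (1/2)^m * (1/2)^m * (1/4) := by
      rw [pow_succ, ← mul_pow]; norm_num
    have e2 : (1/2 : ℝ)^m * 2^m = 1 := by rw [← mul_pow]; norm_num
    have e3 : (0:ℝ) < (1/2)^m := by positivity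
    rw [e1] at this
    have e4 : (N:ℝ) * (1/2)^m < 1 := by nlinarith
    nlinarith
  · -- density
    have hpre : Dense (S ⁻¹' {f : StrongDual ℝ X | ∃ N, ∀ m ≥ N, f (x m) = 0}) :=
      hD.preimage S.toHomeomorph.isOpenMap
    refine hpre.mono ?_
    rintro f ⟨N, hN⟩
    obtain ⟨n, hnC⟩ := exists_nat_gt
      (‖f‖ + ∑ m ∈ Finset.range N, |S f (x m)| * (C m / ε m))
    have hC0 : 0 ≤ ‖f‖ + ∑ m ∈ Finset.range N, |S f (x m)| * (C m / ε m) := by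
      refine add_nonneg (norm_nonneg f) (Finset.sum_nonneg fun m _ => ?_)
      exact mul_nonneg (abs_nonneg _) (div_nonneg (hC m) (hε m).le)
    have hn0 : 0 < n := by
      have : (0:ℝ) < n := lt_of_le_of_lt hC0 hnC
      exact_mod_cast this
    refine Set.mem_iUnion.2 ⟨n, ?_⟩
    by_contra hcon
    obtain ⟨y, G, hG, hfy⟩ := aux_bipolar A f n hn0 hcon
    let v : StrongDual ℝ (StrongDual ℝ X) := inclusionInDoubleDual ℝ X y - G
    let w : StrongDual ℝ (StrongDual ℝ X) :=
      v.comp (S.symm : StrongDual ℝ X →L[ℝ] StrongDual ℝ X)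
    have hwS : w.comp (S : StrongDual ℝ X →L[ℝ] StrongDual ℝ X) = v := by
      ext g; simp [w]
    have hwM : ∀ g : StrongDual ℝ X, (∀ m, g (x m) = 0) → w g = 0 := by
      intro g hg
      have hm : S.symm g ∈ A := fun m => by simpa using hg m
      have e1 := hG _ hm
      change inclusionInDoubleDual ℝ X y (S.symm g) - G (S.symm g) = 0
      rw [e1]
      exact sub_self _
    have hψG : ∀ k, ε k * w (xs k) = ψ k G := by
      intro k
      have e1 := hSψ k w
      rw [hwS, hψW k w hwM] at e1
      have e2 : ψ k v = - ψ k G := by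
        change ψ k (inclusionInDoubleDual ℝ X y - G) = _
        have e3 := (ψ k).map_sub (inclusionInDoubleDual ℝ X y) G
        rw [hψX] at e3
        exact e3.trans (zero_sub _)
      linarith
    have hwx : ∀ k, |w (xs k)| ≤ C k / ε k * ‖G‖ := by
      intro k
      have e1 := hψC k G
      rw [← hψG, abs_mul, abs_of_pos (hε k)] at e1
      rw [div_mul_eq_mul_div, le_div_iff₀ (hε k)]
      linarith
    have hwSf : w (S f) = ∑ m ∈ Finset.range N, S f (x m) * w (xs m) := by
      have e1 : w (S f - ∑ m ∈ Finset.range N, S f (x m) • xs m) = 0 := by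
        apply hwM
        intro j
        rw [sub_apply, sum_apply]
        simp only [smul_apply, hbi, smul_eq_mul, mul_ite, mul_one, mul_zero,
          Finset.sum_ite_eq', Finset.mem_range]
        split_ifs with hj
        · simp
        · rw [hN j (by omega)]; simp
      rw [map_sub, map_sum, sub_eq_zero] at e1
      rw [e1]
      exact Finset.sum_congr rfl fun m _ => by rw [map_smul, smul_eq_mul]
    have hfy' : f y = G f + w (S f) := by
      have : w (S f) = f y - G f := by
        change v (S.symm (S f)) = _
        rw [S.symm_apply_apply]
        rfl
      rw [this]; ring
    have b1 : G f ≤ ‖f‖ * ‖G‖ := by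
      rw [mul_comm]
      exact (le_abs_self _).trans (G.le_opNorm f)
    have b2 : w (S f) ≤ (∑ m ∈ Finset.range N, |S f (x m)| * (C m / ε m)) * ‖G‖ := by
      rw [hwSf, Finset.sum_mul]
      refine Finset.sum_le_sum fun m _ => ?_
      refine (le_abs_self _).trans ?_
      rw [abs_mul, mul_assoc]
      exact mul_le_mul_of_nonneg_left (hwx m) (abs_nonneg _)
    have b3 := mul_le_mul_of_nonneg_right hnC.le (norm_nonneg G)
    rw [add_mul] at b3
    linarith

lemma aux_biorth' {V : Type*} [NormedAddCommGroup V] [NormedSpace ℝ V] (P Q : Submodule ℝ V)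
    (hP : IsClosed (P : Set V))
    (hPQ : ∀ E : Submodule ℝ V, FiniteDimensional ℝ E → ¬ Q ≤ P ⊔ E) :
    ∃ (h : ℕ → V) (ψ : ℕ → (V →ₗ[ℝ] ℝ)) (C : ℕ → ℝ), (∀ k, 0 ≤ C k) ∧
      (∀ k F, |ψ k F| ≤ C k * ‖F‖) ∧ (∀ n, h n ∈ Q) ∧ (∀ n, ∀ y ∈ P, ψ n y = 0) ∧
      ∀ i j, ψ i (h j) = if i = j then 1 else 0 := by
  obtain ⟨h, ψ, h1, h2, h3⟩ := aux_biorth P Q hP hPQ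
  exact ⟨h, fun n => (ψ n : V →ₗ[ℝ] ℝ), fun n => ‖ψ n‖, fun n => norm_nonneg _,
    fun k F => (ψ k).le_opNorm F, h1, h2, h3⟩

lemma aux_helly' {Y : Type*} [NormedAddCommGroup Y] [NormedSpace ℝ Y] {ι : Type*} [Finite ι]
    (F : ι → StrongDual ℝ Y) (ψ : StrongDual ℝ Y →ₗ[ℝ] ℝ) (C : ℝ) (hC : 0 ≤ C)
    (hψ : ∀ F, |ψ F| ≤ C * ‖F‖) :
    ∃ g : Y, ‖g‖ ≤ C + 1 ∧ ∀ i, F i g = ψ (F i) := by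
  obtain ⟨g, h1, h2⟩ := aux_helly F (ψ.mkContinuous C hψ)
  refine ⟨g, h1.trans ?_, h2⟩
  have := ψ.mkContinuous_norm_le hC hψ
  linarith

lemma aux_cases {V : Type*} [NormedAddCommGroup V] [NormedSpace ℝ V] (P Q : Submodule ℝ V)
    (hP : IsClosed (P : Set V)) (hfd : ¬ FiniteDimensional ℝ (V ⧸ P)) :
    ∃ (h : ℕ → V) (ψ : ℕ → (V →ₗ[ℝ] ℝ)) (C : ℕ → ℝ), (∀ k, 0 ≤ C k) ∧
      (∀ k F, |ψ k F| ≤ C k * ‖F‖) ∧ (∀ n, ∀ y ∈ P, ψ n y = 0) ∧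
      (∀ i j, ψ i (h j) = if i = j then 1 else 0) ∧
      ((∀ n, ∀ y ∈ Q, ψ n y = 0) ∨ (∀ n, h n ∈ Q)) := by
  by_cases hc : ∀ E : Submodule ℝ V, FiniteDimensional ℝ E →
      ¬ (⊤ : Submodule ℝ V) ≤ (P ⊔ Q).topologicalClosure ⊔ E
  · obtain ⟨h, ψ, C, h1, h2, -, h4, h5⟩ := aux_biorth' _ _
      (Submodule.isClosed_topologicalClosure _) hc
    refine ⟨h, ψ, C, h1, h2, fun n y hy => h4 n y ?_, h5, Or.inl fun n y hy => h4 n y ?_⟩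
    · exact Submodule.le_topologicalClosure _ (Submodule.mem_sup_left hy)
    · exact Submodule.le_topologicalClosure _ (Submodule.mem_sup_right hy)
  · push Not at hc
    obtain ⟨E0, hE0, htop⟩ := hc
    have hPQ : ∀ E : Submodule ℝ V, FiniteDimensional ℝ E → ¬ Q ≤ P ⊔ E := by
      intro E hE hQ
      apply hfd
      have hcl : IsClosed ((P ⊔ E : Submodule ℝ V) : Set V) :=
        Submodule.isClosed_sup_finiteDimensional _ _ hP
      have h1 : (P ⊔ Q).topologicalClosure ≤ P ⊔ E :=
        Submodule.topologicalClosure_minimal _ (sup_le le_sup_left hQ) hcl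
      have h2 : (⊤ : Submodule ℝ V) ≤ P ⊔ (E ⊔ E0) := by
        rw [← sup_assoc]
        exact htop.trans (sup_le_sup_right h1 _)
      refine Module.Finite.of_surjective
        (P.mkQ.comp (E ⊔ E0 : Submodule ℝ V).subtype) ?_
      intro q
      obtain ⟨v, rfl⟩ := P.mkQ_surjective q
      obtain ⟨a, ha, b, hb, hab⟩ := Submodule.mem_sup.1 (h2 (Submodule.mem_top (x := v)))
      refine ⟨⟨b, hb⟩, ?_⟩
      change P.mkQ b = P.mkQ v
      rw [← hab, map_add]
      have : P.mkQ a = 0 := by simpa [Submodule.Quotient.mk_eq_zero] using ha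
      rw [this, zero_add]
    obtain ⟨h, ψ, C, h1, h2, h3, h4, h5⟩ := aux_biorth' _ _ hP hPQ
    exact ⟨h, ψ, C, h1, h2, h4, h5, Or.inr h3⟩

lemma aux_select {X : Type*} [NormedAddCommGroup X] [NormedSpace ℝ X] (Z : Submodule ℝ X)
    (hZ : ¬ FiniteDimensional ℝ Z) (fs : ℕ → StrongDual ℝ X)
    (T : ℕ → ℕ → StrongDual ℝ X → Prop)
    (hT : ∀ n (S : Set X), S.Finite → ∃ g : ℕ → StrongDual ℝ X,
      ∀ k ≤ n, T n k (g k) ∧ ∀ s ∈ S, g k s = 0) :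
    ∃ (N : ℕ → ℕ) (x : ℕ → X) (xs : ℕ → StrongDual ℝ X) (g : ℕ → ℕ → StrongDual ℝ X),
      StrictMono N ∧ (∀ m, x m ∈ Z) ∧ (∀ i j, xs i (x j) = if i = j then 1 else 0) ∧
      (∀ i, ‖xs i‖ = 1) ∧ (∀ m, ∀ j ≤ N m, fs j (x m) = 0) ∧
      (∀ m, ∀ k ≤ N m, T (N m) k (g m k)) ∧ (∀ m j, ∀ k ≤ N m, g m k (x j) = 0) := by
  classical
  have hPQ : ∀ E : Submodule ℝ X, FiniteDimensional ℝ E → ¬ Z ≤ ⊥ ⊔ E := by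
    intro E hE hle
    rw [bot_sup_eq] at hle
    exact hZ (Submodule.finiteDimensional_of_le hle)
  have hbot : IsClosed ((⊥ : Submodule ℝ X) : Set X) := by
    simp
  obtain ⟨f, hf, hr⟩ := exists_seq_of_forall_finset_exists
    (fun a : ℕ × X × StrongDual ℝ X × (ℕ → StrongDual ℝ X) =>
      a.2.1 ∈ Z ∧ a.2.2.1 a.2.1 = 1 ∧ ‖a.2.2.1‖ = 1 ∧ (∀ j ≤ a.1, fs j a.2.1 = 0) ∧
      (∀ k ≤ a.1, T a.1 k (a.2.2.2 k)) ∧ (∀ k ≤ a.1, a.2.2.2 k a.2.1 = 0))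
    (fun a b => a.1 < b.1 ∧ a.2.2.1 b.2.1 = 0 ∧ b.2.2.1 a.2.1 = 0 ∧
      (∀ k ≤ a.1, a.2.2.2 k b.2.1 = 0) ∧ (∀ k ≤ b.1, b.2.2.2 k a.2.1 = 0)) (by
    intro s _
    let n : ℕ := s.sup (fun a => a.1) + 1
    have hn : ∀ a ∈ s, a.1 < n := fun a ha =>
      Nat.lt_succ_of_le (Finset.le_sup (f := fun a : ℕ × X × StrongDual ℝ X ×
        (ℕ → StrongDual ℝ X) => a.1) ha)
    let S : Set X := (fun a => a.2.1) '' (s : Set (ℕ × X × StrongDual ℝ X × (ℕ → StrongDual ℝ X)))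
    have hS : S.Finite := s.finite_toSet.image _
    obtain ⟨g, hg⟩ := hT n S hS
    let T1 : Set (StrongDual ℝ X) :=
      (fun a => a.2.2.1) '' (s : Set (ℕ × X × StrongDual ℝ X × (ℕ → StrongDual ℝ X)))
    let T2 : Set (StrongDual ℝ X) := fs '' Set.Iic n
    let T3 : Set (StrongDual ℝ X) := g '' Set.Iic n
    let T4 : Set (StrongDual ℝ X) :=
      ⋃ a ∈ (s : Set (ℕ × X × StrongDual ℝ X × (ℕ → StrongDual ℝ X))), a.2.2.2 '' Set.Iic a.1
    have hfin : (T1 ∪ T2 ∪ T3 ∪ T4).Finite := by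
      refine ((Set.Finite.union ?_ ?_).union ?_).union ?_
      · exact s.finite_toSet.image _
      · exact (Set.finite_Iic n).image _
      · exact (Set.finite_Iic n).image _
      · exact s.finite_toSet.biUnion fun a _ => (Set.finite_Iic a.1).image _
    obtain ⟨v, hv, φ, h1, -, h3, h4, h5⟩ := aux_step ⊥ Z hbot hPQ S hS _ hfin
    refine ⟨(n, v, φ, g), ⟨hv, h4, h5, fun j hj => ?_, fun k hk => (hg k hk).1, fun k hk => ?_⟩,
      fun a ha => ⟨hn a ha, ?_, ?_, fun k hk => ?_, fun k hk => ?_⟩⟩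
    · exact h1 _ (Or.inl (Or.inl (Or.inr ⟨j, hj, rfl⟩)))
    · exact h1 _ (Or.inl (Or.inr ⟨k, hk, rfl⟩))
    · exact h1 _ (Or.inl (Or.inl (Or.inl ⟨a, ha, rfl⟩)))
    · exact h3 _ ⟨a, ha, rfl⟩
    · exact h1 _ (Or.inr (Set.mem_biUnion (Finset.mem_coe.2 ha) ⟨k, hk, rfl⟩))
    · exact (hg k hk).2 _ ⟨a, ha, rfl⟩)
  refine ⟨fun m => (f m).1, fun m => (f m).2.1, fun m => (f m).2.2.1, fun m => (f m).2.2.2,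
    fun a b hab => (hr a b hab).1, fun m => (hf m).1, fun i j => ?_, fun i => (hf i).2.2.1,
    fun m => (hf m).2.2.2.1, fun m => (hf m).2.2.2.2.1, fun m j k hk => ?_⟩
  · rcases lt_trichotomy i j with h | h | h
    · simp [h.ne, (hr _ _ h).2.1]
    · subst h; simp [(hf i).2.1]
    · simp [h.ne', (hr _ _ h).2.2.1]
  · rcases lt_trichotomy m j with h | h | h
    · exact (hr _ _ h).2.2.2.1 k hk
    · subst h; exact (hf m).2.2.2.2.2 k hk
    · exact (hr _ _ h).2.2.2.2 k hk

lemma aux_dense {X : Type*} [NormedAddCommGroup X] [NormedSpace ℝ X] (Z : Submodule ℝ X)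
    (fs : ℕ → StrongDual ℝ X) (hfs : DenseRange fun j => (fs j).comp Z.subtypeL)
    (x : ℕ → X) (hx : ∀ m, x m ∈ Z) (hfx : ∀ m, ∀ j ≤ m, fs j (x m) = 0) :
    Dense {f : StrongDual ℝ X | ∃ N, ∀ m ≥ N, f (x m) = 0} := by
  intro F
  rw [Metric.mem_closure_iff]
  intro δ hδ
  obtain ⟨j, hj⟩ := hfs.exists_dist_lt (F.comp Z.subtypeL) hδ
  obtain ⟨G, hG1, hG2⟩ := exists_extension_norm_eq Z
    (F.comp Z.subtypeL - (fs j).comp Z.subtypeL)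
  refine ⟨F - G, ⟨j, fun m hm => ?_⟩, ?_⟩
  · have e1 : G (x m) = F (x m) - fs j (x m) := hG1 ⟨x m, hx m⟩
    change F (x m) - G (x m) = 0
    rw [e1, hfx m j hm]; ring
  · rw [dist_eq_norm, sub_sub_cancel, hG2]
    exact lt_of_eq_of_lt (dist_eq_norm (F.comp Z.subtypeL) ((fs j).comp Z.subtypeL)).symm hj

lemma aux_lim {Y : Type*} [NormedAddCommGroup Y] [NormedSpace ℝ Y] (g : ℕ → Y) (C : ℝ)
    (hg : ∀ j, ‖g j‖ ≤ C) :
    ∃ Ψ : StrongDual ℝ Y →ₗ[ℝ] ℝ, (∀ F, |Ψ F| ≤ C * ‖F‖) ∧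
      ∀ F c, (∀ᶠ j in Filter.atTop, F (g j) = c) → Ψ F = c := by
  have hb : ∀ (F : StrongDual ℝ Y) j, F (g j) ∈ Set.Icc (-(C * ‖F‖)) (C * ‖F‖) := by
    intro F j
    rw [Set.mem_Icc, ← abs_le]
    have h1 : |F (g j)| ≤ ‖F‖ * ‖g j‖ := F.le_opNorm (g j)
    have h2 := mul_le_mul_of_nonneg_left (hg j) (norm_nonneg F)
    linarith
  have hlim : ∀ F : StrongDual ℝ Y, ∃ c ∈ Set.Icc (-(C * ‖F‖)) (C * ‖F‖),
      Filter.Tendsto (fun j => F (g j)) (Filter.hyperfilter ℕ) (nhds c) := by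
    intro F
    have hc : IsCompact (Set.Icc (-(C * ‖F‖)) (C * ‖F‖)) := isCompact_Icc
    obtain ⟨c, hc1, hc2⟩ := hc.ultrafilter_le_nhds
      ((Filter.hyperfilter ℕ).map fun j => F (g j)) (by
        rw [Filter.le_principal_iff]
        exact Filter.mem_map.2 (Filter.univ_mem' fun j : ℕ => hb F j))
    exact ⟨c, hc1, hc2⟩
  choose L hL1 hL2 using hlim
  refine ⟨{ toFun := L, map_add' := fun F G => ?_, map_smul' := fun a F => ?_ },
    fun F => abs_le.2 (hL1 F), fun F c hc => ?_⟩
  · exact tendsto_nhds_unique (hL2 (F + G)) ((hL2 F).add (hL2 G))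
  · exact tendsto_nhds_unique (hL2 (a • F)) ((hL2 F).const_mul a)
  · refine tendsto_nhds_unique (hL2 F) (tendsto_const_nhds.congr' ?_)
    have hle : (Filter.hyperfilter ℕ : Filter ℕ) ≤ Filter.atTop := by
      rw [← Nat.cofinite_eq_atTop]; exact Filter.hyperfilter_le_cofinite
    filter_upwards [hle hc] with j hj using hj.symm

lemma aux_closed {X V : Type*} [NormedAddCommGroup X] [NormedSpace ℝ X] [CompleteSpace X]
    [NormedAddCommGroup V] [NormedSpace ℝ V] (L : X →ₗ[ℝ] V) (hL : ∀ x, ‖L x‖ = ‖x‖) :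
    IsClosed ((LinearMap.range L : Submodule ℝ V) : Set V) := by
  let L' : X →ₗᵢ[ℝ] V := ⟨L, hL⟩
  exact L'.isometry.isClosedEmbedding.isClosed_range

lemma aux_seq {X : Type*} [NormedAddCommGroup X] [NormedSpace ℝ X] (Z : Submodule ℝ X)
    (hZfd : ¬ FiniteDimensional ℝ Z) : ∃ y : ℕ → X, (∀ i, y i ∈ Z) ∧
      ¬ FiniteDimensional ℝ (Submodule.span ℝ (Set.range y)) := by
  let b := Module.Basis.ofVectorSpace ℝ Z
  have hinf : Infinite (Module.Basis.ofVectorSpaceIndex ℝ Z) := by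
    by_contra hcon
    rw [not_infinite_iff_finite] at hcon
    exact hZfd (Module.Finite.of_basis b)
  let em := Infinite.natEmbedding (Module.Basis.ofVectorSpaceIndex ℝ Z)
  refine ⟨fun i => (b (em i) : X), fun i => (b (em i)).2, fun hfin => ?_⟩
  have hli : LinearIndependent ℝ (fun i => (b (em i) : X)) :=
    (b.linearIndependent.comp em em.injective).map' Z.subtype (Submodule.ker_subtype Z)
  have hli2 := linearIndependent_span hli
  have := hli2.finite
  exact not_finite ℕ


lemma aux_case1 {X : Type*} [NormedAddCommGroup X] [NormedSpace ℝ X] [CompleteSpace X]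
    (Z : Submodule ℝ X) (fs : ℕ → StrongDual ℝ X)
    (hfs : DenseRange fun j => (fs j).comp Z.subtypeL) (y : ℕ → X) (hyZ : ∀ i, y i ∈ Z)
    (hy : ¬ FiniteDimensional ℝ (Submodule.span ℝ (Set.range y)))
    (h : ℕ → StrongDual ℝ (StrongDual ℝ X)) (ψ : ℕ → StrongDual ℝ (StrongDual ℝ X) →ₗ[ℝ] ℝ)
    (C : ℕ → ℝ) (hC : ∀ k, 0 ≤ C k) (hψC : ∀ k F, |ψ k F| ≤ C k * ‖F‖)
    (hψP : ∀ k z, ψ k (inclusionInDoubleDual ℝ X z) = 0)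
    (hψh : ∀ i j, ψ i (h j) = if i = j then 1 else 0)
    (hQ : ∀ k w, (∀ f : StrongDual ℝ X, (∀ i, f (y i) = 0) → w f = 0) → ψ k w = 0) :
    ∃ A : Submodule ℝ (StrongDual ℝ X),
      wStarDerived (A : Set (StrongDual ℝ X)) ≠ Set.univ ∧
      Dense (wStarDerived (A : Set (StrongDual ℝ X))) := by
  classical
  have hZ0 : Submodule.span ℝ (Set.range y) ≤ Z :=
    Submodule.span_le.2 (by rintro _ ⟨i, rfl⟩; exact hyZ i)
  have hvan : ∀ f : StrongDual ℝ X, (∀ i, f (y i) = 0) →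
      ∀ z ∈ Submodule.span ℝ (Set.range y), f z = 0 := by
    intro f hf z hz
    have : Submodule.span ℝ (Set.range y) ≤ LinearMap.ker (f : X →ₗ[ℝ] ℝ) :=
      Submodule.span_le.2 (by rintro _ ⟨i, rfl⟩; exact hf i)
    exact this hz
  obtain ⟨N, x, xs, g, hN, hx, hbi, hn, hfx, -, -⟩ := aux_select (Submodule.span ℝ (Set.range y)) hy fs (fun _ _ _ => True)
    (fun n S _ => ⟨fun _ => 0, fun k _ => ⟨trivial, fun s _ => rfl⟩⟩)
  refine aux_main x xs h ψ C hC hψC hbi hn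
    (aux_dense Z fs hfs x (fun m => hZ0 (hx m)) fun m j hj => hfx m j (hj.trans (hN.id_le m)))
    (fun k z => hψP k z) (fun k w hw => hQ k w fun f hf => hw f fun m => ?_) hψh
  exact hvan f hf _ (hx m)


lemma aux_case2 {X : Type*} [NormedAddCommGroup X] [NormedSpace ℝ X] [CompleteSpace X]
    (Z : Submodule ℝ X) (fs : ℕ → StrongDual ℝ X)
    (hfs : DenseRange fun j => (fs j).comp Z.subtypeL) (y : ℕ → X) (hyZ : ∀ i, y i ∈ Z)
    (hy : ¬ FiniteDimensional ℝ (Submodule.span ℝ (Set.range y)))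
    (h : ℕ → StrongDual ℝ (StrongDual ℝ X)) (ψ : ℕ → StrongDual ℝ (StrongDual ℝ X) →ₗ[ℝ] ℝ)
    (C : ℕ → ℝ) (hC : ∀ k, 0 ≤ C k) (hψC : ∀ k F, |ψ k F| ≤ C k * ‖F‖)
    (hψP : ∀ k z, ψ k (inclusionInDoubleDual ℝ X z) = 0)
    (hψh : ∀ i j, ψ i (h j) = if i = j then 1 else 0)
    (hQ : ∀ k, ∀ f : StrongDual ℝ X, (∀ i, f (y i) = 0) → h k f = 0) :
    ∃ A : Submodule ℝ (StrongDual ℝ X),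
      wStarDerived (A : Set (StrongDual ℝ X)) ≠ Set.univ ∧
      Dense (wStarDerived (A : Set (StrongDual ℝ X))) := by
  classical
  have hZ0 : Submodule.span ℝ (Set.range y) ≤ Z :=
    Submodule.span_le.2 (by rintro _ ⟨i, rfl⟩; exact hyZ i)
  let T : ℕ → ℕ → StrongDual ℝ X → Prop := fun n k g =>
    ‖g‖ ≤ C k + 1 ∧ (∀ i ≤ n, h i g = if k = i then 1 else 0) ∧ ∀ i ≤ n, g (y i) = 0
  have hT : ∀ n (S : Set X), S.Finite → ∃ g : ℕ → StrongDual ℝ X,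
      ∀ k ≤ n, T n k (g k) ∧ ∀ s ∈ S, g k s = 0 := by
    intro n S hS
    have := hS.to_subtype
    let F : (Fin (n+1) ⊕ Fin (n+1)) ⊕ S → StrongDual ℝ (StrongDual ℝ X) :=
      Sum.elim (Sum.elim (fun i => h i) (fun i => inclusionInDoubleDual ℝ X (y i)))
        (fun s => inclusionInDoubleDual ℝ X s)
    choose g hg1 hg2 using fun k => aux_helly' F (ψ k) (C k) (hC k) (hψC k)
    refine ⟨g, fun k _ => ⟨⟨hg1 k, fun i hi => ?_, fun i hi => ?_⟩, fun s hs => ?_⟩⟩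
    · have := hg2 k (Sum.inl (Sum.inl ⟨i, Nat.lt_succ_of_le hi⟩))
      exact this.trans (hψh k i)
    · have := hg2 k (Sum.inl (Sum.inr ⟨i, Nat.lt_succ_of_le hi⟩))
      exact this.trans (hψP k (y i))
    · have := hg2 k (Sum.inr ⟨s, hs⟩)
      exact this.trans (hψP k s)
  obtain ⟨N, x, xs, g, hN, hx, hbi, hn, hfx, hgT, hgx⟩ := aux_select (Submodule.span ℝ (Set.range y)) hy fs T hT
  have hkN : ∀ m k, k ≤ N (m + k) := fun m k =>
    (Nat.le_add_left k m).trans (hN.id_le (m + k))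
  choose Ψ hΨ1 hΨ2 using fun k => aux_lim (fun m => g (m + k) k) (C k + 1)
    (fun m => (hgT (m + k) k (hkN m k)).1)
  let φ : ℕ → StrongDual ℝ X := fun k =>
    ((Ψ k).comp ((inclusionInDoubleDual ℝ X) : X →ₗ[ℝ] StrongDual ℝ (StrongDual ℝ X))).mkContinuous
      (C k + 1) (fun z => (hΨ1 k _).trans (mul_le_mul_of_nonneg_left
        (double_dual_bound ℝ X z) (by linarith [hC k])))
  have hφ : ∀ k z, φ k z = Ψ k (inclusionInDoubleDual ℝ X z) := fun k z => rfl
  have hφx : ∀ k m, φ k (x m) = 0 := fun k m => by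
    rw [hφ]
    exact hΨ2 k _ _ (Filter.Eventually.of_forall fun j => hgx (j + k) m k (hkN j k))
  have hφy : ∀ k i, φ k (y i) = 0 := fun k i => by
    rw [hφ]
    refine hΨ2 k _ _ ?_
    filter_upwards [Filter.eventually_ge_atTop i] with j hj
    exact (hgT (j + k) k (hkN j k)).2.2 i
      ((hj.trans (Nat.le_add_right j k)).trans (hN.id_le _))
  let ev : ℕ → (StrongDual ℝ (StrongDual ℝ X) →ₗ[ℝ] ℝ) := fun k =>
    { toFun := fun F => F (φ k), map_add' := fun _ _ => rfl, map_smul' := fun _ _ => rfl }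
  refine aux_main x xs h (fun k => Ψ k - ev k) (fun k => C k + 1 + ‖φ k‖)
    (fun k => add_nonneg (by linarith [hC k]) (norm_nonneg (φ k))) (fun k F => ?_) hbi hn
    (aux_dense Z fs hfs x (fun m => hZ0 (hx m)) fun m j hj => hfx m j (hj.trans (hN.id_le m)))
    (fun k z => ?_) (fun k w hw => ?_) (fun i j => ?_)
  · change |Ψ k F - F (φ k)| ≤ _
    have e1 := hΨ1 k F
    have e2 : |F (φ k)| ≤ ‖F‖ * ‖φ k‖ := F.le_opNorm (φ k)
    have e3 := abs_sub (Ψ k F) (F (φ k))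
    rw [add_mul]
    linarith [mul_comm ‖F‖ ‖φ k‖]
  · change Ψ k (inclusionInDoubleDual ℝ X z) - φ k z = 0
    rw [hφ, sub_self]
  · change Ψ k w - w (φ k) = 0
    rw [hw (φ k) (hφx k), sub_zero]
    exact hΨ2 k _ _ (Filter.Eventually.of_forall fun j =>
      hw _ fun m => hgx (j + k) m k (hkN j k))
  · change Ψ i (h j) - h j (φ i) = _
    rw [hQ j (φ i) (hφy i), sub_zero]
    refine hΨ2 i _ _ ?_
    filter_upwards [Filter.eventually_ge_atTop j] with m hm
    exact (hgT (m + i) i (hkN m i)).2.1 j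
      ((hm.trans (Nat.le_add_right m i)).trans (hN.id_le _))


lemma aux_cases2 {X V : Type*} [NormedAddCommGroup X] [NormedSpace ℝ X] [CompleteSpace X]
    [NormedAddCommGroup V] [NormedSpace ℝ V] (L : X →ₗ[ℝ] V) (hL : ∀ x, ‖L x‖ = ‖x‖)
    (Q : Submodule ℝ V) (hfd : ¬ FiniteDimensional ℝ (V ⧸ LinearMap.range L)) :
    ∃ (h : ℕ → V) (ψ : ℕ → (V →ₗ[ℝ] ℝ)) (C : ℕ → ℝ), (∀ k, 0 ≤ C k) ∧
      (∀ k F, |ψ k F| ≤ C k * ‖F‖) ∧ (∀ n z, ψ n (L z) = 0) ∧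
      (∀ i j, ψ i (h j) = if i = j then 1 else 0) ∧
      ((∀ n, ∀ y ∈ Q, ψ n y = 0) ∨ (∀ n, h n ∈ Q)) := by
  obtain ⟨h, ψ, C, h1, h2, h3, h4, h5⟩ := aux_cases (LinearMap.range L) Q (aux_closed L hL) hfd
  exact ⟨h, ψ, C, h1, h2, fun n z => h3 n _ ⟨z, rfl⟩, h4, h5⟩

/-- The annihilator in the bidual of the functionals vanishing on `y`. -/
def auxQ {X : Type*} [NormedAddCommGroup X] [NormedSpace ℝ X] (y : ℕ → X) :
    Submodule ℝ (StrongDual ℝ (StrongDual ℝ X)) :=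
  { carrier := {F | ∀ f : StrongDual ℝ X, (∀ i, f (y i) = 0) → F f = 0}
    add_mem' := fun {a b} ha hb f hf => by
      change a f + b f = 0
      rw [ha f hf, hb f hf, add_zero]
    zero_mem' := fun f hf => rfl
    smul_mem' := fun c a ha f hf => by
      change c * a f = 0
      rw [ha f hf, mul_zero] }

lemma aux_norm {X : Type*} [NormedAddCommGroup X] [NormedSpace ℝ X] (x : X) :
    ‖inclusionInDoubleDual ℝ X x‖ = ‖x‖ :=
  (inclusionInDoubleDualLi ℝ (E := X)).norm_map x

lemma aux_bidual {X : Type*} [NormedAddCommGroup X] [NormedSpace ℝ X] [CompleteSpace X]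
    (hnq : ¬ QuasiReflexive X) (y : ℕ → X) :
    ∃ (h : ℕ → StrongDual ℝ (StrongDual ℝ X))
      (ψ : ℕ → (StrongDual ℝ (StrongDual ℝ X) →ₗ[ℝ] ℝ)) (C : ℕ → ℝ), (∀ k, 0 ≤ C k) ∧
      (∀ k F, |ψ k F| ≤ C k * ‖F‖) ∧ (∀ n z, ψ n (inclusionInDoubleDual ℝ X z) = 0) ∧
      (∀ i j, ψ i (h j) = if i = j then 1 else 0) ∧
      ((∀ n, ∀ w ∈ auxQ y, ψ n w = 0) ∨ (∀ n, h n ∈ auxQ y)) := by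
  have e1 := aux_cases2 (X := X) (V := StrongDual ℝ (StrongDual ℝ X))
    ((inclusionInDoubleDual ℝ X) : X →ₗ[ℝ] StrongDual ℝ (StrongDual ℝ X))
  have e2 := e1 (fun x => aux_norm x)
  have e3 := e2 (auxQ y)
  have e4 := e3 hnq
  exact e4

/-- If $X$ is a non-quasi-reflexive Banach space containing an infinite-dimensional closed
subspace with separable dual, then $X^*$ contains a linear subspace $A$ whose weak* derived
set is a proper norm-dense subset of $X^*$. -/
theorem stmt2 (X : Type*) [NormedAddCommGroup X] [NormedSpace ℝ X] [CompleteSpace X]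
    (hnq : ¬ QuasiReflexive X)
    (hZ : ∃ Z : Submodule ℝ X, IsClosed (Z : Set X) ∧ ¬ FiniteDimensional ℝ Z ∧
      TopologicalSpace.SeparableSpace (StrongDual ℝ Z)) :
    ∃ A : Submodule ℝ (StrongDual ℝ X),
      wStarDerived (A : Set (StrongDual ℝ X)) ≠ Set.univ ∧
      Dense (wStarDerived (A : Set (StrongDual ℝ X))) := by
  classical
  obtain ⟨Z, -, hZfd, hsep⟩ := hZ
  -- an independent sequence in `Z`
  obtain ⟨y, hyZ, hy⟩ := aux_seq Z hZfd
  -- dense sequence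
  let d : ℕ → StrongDual ℝ Z := TopologicalSpace.denseSeq (StrongDual ℝ Z)
  choose fs hfs1 hfs2 using fun j => exists_extension_norm_eq Z (d j)
  have hfs : DenseRange fun j => (fs j).comp Z.subtypeL := by
    have e : (fun j => (fs j).comp Z.subtypeL) = d := by
      funext j; ext z; exact hfs1 j z
    rw [e]
    exact TopologicalSpace.denseRange_denseSeq _
  obtain ⟨h, ψ, C, hC, hψC, hψP, hψh, hor⟩ := aux_bidual hnq y
  rcases hor with hQ | hQ
  · exact aux_case1 Z fs hfs y hyZ hy h ψ C hC hψC hψP hψh hQ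
  · exact aux_case2 Z fs hfs y hyZ hy h ψ C hC hψC hψP hψh hQ
end

section
/- Let X be a non-reflexive real Banach space. Then there exists a convex subset A ⊆ X* such that the weak* derived set A^(1) is strictly contained in the weak* closure of A. -/
open NormedSpace

lemma exists_sep {X : Type*} [NormedAddCommGroup X] [NormedSpace ℝ X]
    (F : StrongDual ℝ (StrongDual ℝ X)) (hF : ∀ x, inclusionInDoubleDual ℝ X x ≠ F)
    (I : Finset X) : ∃ u : StrongDual ℝ X, (∀ x ∈ I, u x = 0) ∧ F u = 1 := by
  by_contra hcon
  have key : ∀ u : StrongDual ℝ X, (∀ x ∈ I, u x = 0) → F u = 0 := by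
    intro u hu
    by_contra hne
    refine hcon ⟨(F u)⁻¹ • u, fun x hx => by simp [hu x hx], ?_⟩
    simp [inv_mul_cancel₀ hne]
  have hspan := mem_span_of_iInf_ker_le_ker (𝕜 := ℝ)
    (L := fun x : I => (inclusionInDoubleDual ℝ X x.1).toLinearMap) (K := F.toLinearMap) (by
      intro u hu
      simp only [Submodule.mem_iInf, LinearMap.mem_ker] at hu ⊢
      exact key u fun x hx => by simpa using hu ⟨x, hx⟩)
  have hle : Submodule.span ℝ (Set.range
      (fun x : I => (inclusionInDoubleDual ℝ X x.1).toLinearMap)) ≤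
      LinearMap.range ((ContinuousLinearMap.coeLM ℝ :
        StrongDual ℝ (StrongDual ℝ X) →ₗ[ℝ] (StrongDual ℝ X →ₗ[ℝ] ℝ)) ∘ₗ
        (inclusionInDoubleDual ℝ X).toLinearMap) := by
    rw [Submodule.span_le]
    rintro _ ⟨x, rfl⟩
    exact ⟨x.1, rfl⟩
  obtain ⟨x, hx⟩ := hle hspan
  apply hF x
  ext u
  exact congrArg (fun L => L u) hx

/-- If $X$ is a non-reflexive Banach space, then there is a convex set $A \subset X^*$
whose weak* derived set is strictly contained in the weak* closure of $A$. -/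
theorem stmt3 (X : Type*) [NormedAddCommGroup X] [NormedSpace ℝ X] [CompleteSpace X]
    (hnr : ¬ Function.Surjective (inclusionInDoubleDual ℝ X)) :
    ∃ A : Set (StrongDual ℝ X), Convex ℝ A ∧ wStarDerived A ⊂ wStarClosure A := by
  classical
  have hnr' : ∃ F, ∀ x, inclusionInDoubleDual ℝ X x ≠ F := by
    simpa [Function.Surjective] using hnr
  obtain ⟨F, hF⟩ := hnr'
  have hx : ∃ (x : X) (h : StrongDual ℝ X), h x = 1 := by
    obtain ⟨u, -, hu⟩ := exists_sep F hF ∅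
    have hu0 : u ≠ 0 := by rintro rfl; simp at hu
    obtain ⟨x, hx⟩ : ∃ x, u x ≠ 0 := by
      by_contra hc
      push Not at hc
      exact hu0 (ContinuousLinearMap.ext hc)
    exact ⟨(u x)⁻¹ • x, u, by simp [inv_mul_cancel₀ hx]⟩
  obtain ⟨x, h, hx⟩ := hx
  set A : Set (StrongDual ℝ X) := {f | 0 < f x ∧ 1 ≤ f x * F f} with hA
  refine ⟨A, ?_, ?_⟩
  · rintro f ⟨hf0, hf1⟩ g ⟨hg0, hg1⟩ a b ha hb hab
    have hFf : 0 < F f := by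
      by_contra hc
      nlinarith
    have hFg : 0 < F g := by
      by_contra hc
      nlinarith
    have hcross : 2 ≤ f x * F g + g x * F f := by
      have h1 : 1 ≤ (f x * F g) * (g x * F f) := by nlinarith
      have h2 : 0 < f x * F g := by positivity
      have h3 : 0 < g x * F f := by positivity
      nlinarith [sq_nonneg (f x * F g - g x * F f)]
    have hb' : b = 1 - a := by linarith
    refine ⟨?_, ?_⟩
    · simp only [add_apply, smul_apply, smul_eq_mul]
      rcases ha.eq_or_lt with rfl | ha
      · have : b = 1 := by linarith
        simp [this, hg0]
      · have := mul_pos ha hf0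
        have := mul_nonneg hb hg0.le
        linarith
    · simp only [add_apply, smul_apply, smul_eq_mul,
        map_add, map_smul]
      have e1 := mul_le_mul_of_nonneg_left hf1 (mul_nonneg ha ha)
      have e2 := mul_le_mul_of_nonneg_left hg1 (mul_nonneg hb hb)
      have e3 := mul_le_mul_of_nonneg_left hcross (mul_nonneg ha hb)
      have e4 : (a + b) ^ 2 = 1 := by rw [hab]; norm_num
      nlinarith
  · rw [Set.ssubset_iff_of_subset]
    · refine ⟨0, ?_, ?_⟩
      · -- zero lies in the closure
        have hth : ∀ t : ℝ, 0 < t → StrongDual.toWeakDual (t • h) ∈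
            closure (StrongDual.toWeakDual '' A) := by
          intro t ht
          rw [mem_closure_iff]
          intro o ho hto
          obtain ⟨V, hV, rfl⟩ := isOpen_induced_iff.1 ho
          obtain ⟨I, U, hU, hUV⟩ := isOpen_pi_iff.1 hV _ hto
          obtain ⟨u, hu, hFu⟩ := exists_sep F hF (insert x I)
          refine ⟨StrongDual.toWeakDual (t • h + (t⁻¹ - t * F h) • u), ?_, _, ?_, rfl⟩
          · apply hUV
            intro y hy
            have hz : u y = 0 := hu y (Finset.mem_insert_of_mem hy)
            have hval := (hU y hy).2
            have : (t • h + (t⁻¹ - t * F h) • u) y = (t • h) y := by simp [hz]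
            change (t • h + (t⁻¹ - t * F h) • u) y ∈ U y
            rw [this]
            exact hval
          · have hz : u x = 0 := hu x (Finset.mem_insert_self _ _)
            constructor
            · simpa [hz, hx] using ht
            · simp [hz, hx, hFu, mul_inv_cancel₀ ht.ne']
        have hlim : Filter.Tendsto (fun t : ℝ => t • StrongDual.toWeakDual h)
            (nhdsWithin 0 (Set.Ioi 0)) (nhds ((0 : ℝ) • StrongDual.toWeakDual h)) :=
          ((continuous_id.smul continuous_const).tendsto (0 : ℝ)).mono_left nhdsWithin_le_nhds
        rw [zero_smul] at hlim
        have := isClosed_closure.mem_of_tendsto hlim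
          (by filter_upwards [self_mem_nhdsWithin] with t ht using hth t ht)
        simpa [wStarClosure] using this
      · intro hmem
        obtain ⟨n, hn⟩ := Set.mem_iUnion.1 hmem
        have hC : 0 < ‖F‖ * n + 1 := by positivity
        have hcl : IsClosed {w : WeakDual ℝ X | (‖F‖ * n + 1)⁻¹ ≤ w x} :=
          isClosed_le continuous_const (WeakDual.eval_continuous x)
        have hsub : StrongDual.toWeakDual '' (A ∩ {g : StrongDual ℝ X | ‖g‖ ≤ n}) ⊆
            {w : WeakDual ℝ X | (‖F‖ * n + 1)⁻¹ ≤ w x} := by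
          rintro _ ⟨g, ⟨⟨hg0, hg1⟩, hgn⟩, rfl⟩
          change (‖F‖ * n + 1)⁻¹ ≤ g x
          have hFg : F g ≤ ‖F‖ * n + 1 := by
            have h1 := F.le_opNorm g
            have h2 := le_abs_self (F g)
            have h3 := mul_le_mul_of_nonneg_left (show ‖g‖ ≤ n from hgn) (norm_nonneg F)
            rw [Real.norm_eq_abs] at h1
            linarith
          rw [inv_le_iff_one_le_mul₀ hC]
          exact hg1.trans (mul_le_mul_of_nonneg_left hFg hg0.le)
        have h0 := closure_minimal hsub hcl hn
        have h0' : (‖F‖ * n + 1)⁻¹ ≤ (0 : ℝ) := h0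
        exact absurd h0' (not_le.2 (inv_pos.2 hC))
    · intro f hf
      obtain ⟨n, hn⟩ := Set.mem_iUnion.1 hf
      have hs : StrongDual.toWeakDual '' (A ∩ {g : StrongDual ℝ X | ‖g‖ ≤ n}) ⊆
          StrongDual.toWeakDual '' A := Set.image_mono Set.inter_subset_left
      have hn' : StrongDual.toWeakDual f ∈
          closure (StrongDual.toWeakDual '' (A ∩ {g : StrongDual ℝ X | ‖g‖ ≤ n})) := hn
      have := closure_mono hs hn'
      exact this
end

section
/- Let X be a quasi-reflexive real Banach space and let A ⊆ X* be an absolutely convex subset (i.e., convex and balanced: λ·A ⊆ A for all real λ with |λ| ≤ 1). Then the weak* derived set A^(1) equals the weak* closure of A. -/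
open NormedSpace

/-- Goldstine-type estimate. -/
lemma goldstine_aux {W : Type*} [NormedAddCommGroup W] [NormedSpace ℝ W]
    (A : Set W) (hconv : Convex ℝ A) (hne : A.Nonempty)
    (φ : StrongDual ℝ W →ₗ[ℝ] ℝ)
    (hφ : ∀ (F : StrongDual ℝ W) (t : ℝ), (∀ a ∈ A, F a ≤ t) → φ F ≤ t)
    (n : ℕ) (hn : ∀ F, φ F ≤ n * ‖F‖) (Jx : StrongDual ℝ W) (s : ℝ)
    (hs : ∀ a ∈ A, ‖a‖ ≤ (n : ℝ) + 1 → Jx a ≤ s) :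
    φ Jx ≤ s := by
  by_contra hlt
  push Not at hlt
  set V : Set (W × ℝ) := {q | ‖q.1‖ < (n : ℝ) + 1 ∧ q.2 < Jx q.1 - s} with hV
  have hVo : IsOpen V := by
    apply IsOpen.inter
    · have h1 : Continuous fun q : W × ℝ => ‖q.1‖ := by fun_prop
      exact isOpen_lt h1 continuous_const
    · have : Continuous fun q : W × ℝ => Jx q.1 - s := by fun_prop
      exact isOpen_lt (by fun_prop) this
  have hVc : Convex ℝ V := by
    intro p hp q hq a b ha hb hab
    have hball := convex_ball (0 : W) ((n : ℝ) + 1)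
    have h1 := hball (x := p.1) (by simpa using hp.1) (y := q.1) (by simpa using hq.1) ha hb hab
    refine ⟨by simpa using h1, ?_⟩
    have h2 := hp.2
    have h3 := hq.2
    have : b = 1 - a := by linarith
    subst this
    simp only [Prod.snd_add, Prod.smul_snd, Prod.fst_add, Prod.smul_fst, smul_eq_mul,
      map_add, map_smul]
    rcases ha.eq_or_lt with h | h
    · subst h; simp; linarith
    · nlinarith
  set B : Set (W × ℝ) := A ×ˢ {0} with hB
  have hBc : Convex ℝ B := hconv.prod (convex_singleton 0)
  have hd : Disjoint V B := by
    rw [Set.disjoint_left]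
    rintro ⟨g, r⟩ ⟨h1, h2⟩ ⟨h3, h4⟩
    simp at h1 h2 h3 h4
    have := hs g h3 h1.le
    linarith
  obtain ⟨Λ, u, hu1, hu2⟩ := geometric_hahn_banach_open hVc hVo hBc hd
  set G : StrongDual ℝ W := Λ.comp (ContinuousLinearMap.inl ℝ _ _) with hG
  set c : ℝ := Λ (0, 1) with hc
  have hΛ : ∀ g r, Λ (g, r) = G g + c * r := by
    intro g r
    have : (g, r) = (g, (0:ℝ)) + r • ((0 : W), (1:ℝ)) := by simp
    rw [this, map_add, map_smul]
    simp [hG, hc, mul_comm]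
  have hA : ∀ a ∈ A, u ≤ G a := by
    intro a ha
    have := hu2 (a, 0) ⟨ha, rfl⟩
    rw [hΛ] at this; simpa using this
  have hφG : φ (-G) ≤ -u := hφ _ _ (fun a ha => by simpa using hA a ha)
  have hn1 : (0:ℝ) < n + 1 := by positivity
  have hc0 : 0 ≤ c := by
    by_contra hcn
    push Not at hcn
    obtain ⟨r, hr1, hr2⟩ : ∃ r : ℝ, r < -s ∧ u ≤ c * r := by
      refine ⟨min (-s - 1) (u / c), lt_of_le_of_lt (min_le_left _ _) (by linarith), ?_⟩
      have := min_le_right (-s - 1) (u / c)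
      have h2 := mul_le_mul_of_nonpos_left this hcn.le
      rwa [mul_div_cancel₀ _ hcn.ne] at h2
    have := hu1 (0, r) ⟨by simpa using hn1, by simpa using hr1⟩
    rw [hΛ] at this
    simp at this
    linarith
  -- values on the ball
  have hball : ∀ g : W, ‖g‖ < (n : ℝ) + 1 → (G + c • Jx) g ≤ u + c * s := by
    intro g hg
    have : ∀ ε > 0, (G + c • Jx) g ≤ u + c * s + ε := by
      intro ε hε
      have h := hu1 (g, Jx g - s - ε / (c + 1)) ⟨hg, by
        have : 0 < ε / (c + 1) := by positivity
        simpa using this⟩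
      rw [hΛ] at h
      simp
      have h3 : c * (ε / (c + 1)) ≤ ε := by
        rw [mul_div_assoc', div_le_iff₀ (by positivity)]; nlinarith
      nlinarith
    exact le_of_forall_pos_le_add this
  have hnorm : ((n : ℝ) + 1 / 2) * ‖G + c • Jx‖ ≤ u + c * s := by
    have hn2 : (0:ℝ) < n + 1 / 2 := by positivity
    rw [mul_comm, ← le_div_iff₀ hn2]
    refine ContinuousLinearMap.opNorm_bound_of_ball_bound hn2 _ _ ?_
    intro g hg
    have hg : ‖g‖ ≤ (n : ℝ) + 1 / 2 := by simpa using hg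
    have e1 := hball g (by linarith)
    have e2 := hball (-g) (by rw [norm_neg]; linarith)
    rw [map_neg] at e2
    exact abs_le.2 ⟨by linarith, e1⟩
  have h4 : φ (G + c • Jx) ≤ n * ‖G + c • Jx‖ := hn _
  have h5 : φ (G + c • Jx) = φ G + c * φ Jx := by simp
  have hneg : φ (-G) = -φ G := LinearMap.map_neg φ G
  rw [hneg] at hφG
  have h6 := norm_nonneg (G + c • Jx)
  have h7 : c * (φ Jx - s) + 1 / 2 * ‖G + c • Jx‖ ≤ 0 := by nlinarith
  have h8 : c = 0 := by
    by_contra h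
    have : 0 < c := lt_of_le_of_ne hc0 (Ne.symm h)
    have := mul_pos this (sub_pos.2 hlt)
    linarith
  have h9 : G = 0 := by
    rw [h8] at h7
    have : ‖G‖ ≤ 0 := by
      simp only [zero_mul, zero_smul, add_zero, zero_add] at h7
      linarith
    exact norm_le_zero_iff.1 this
  obtain ⟨a, ha⟩ := hne
  have h10 := hA a ha
  have h11 := hu1 (0, -s - 1) ⟨by simpa using hn1, by simp⟩
  rw [hΛ, h8, h9] at h11
  rw [h9] at h10
  simp at h10 h11
  linarith

/-- Separation in the weak* topology. -/
lemma weakStar_sep {X : Type*} [NormedAddCommGroup X] [NormedSpace ℝ X]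
    (C : Set (StrongDual ℝ X)) (hconv : Convex ℝ C) (f : StrongDual ℝ X)
    (h : ∀ (x : X) (s : ℝ), (∀ a ∈ C, a x ≤ s) → f x ≤ s) :
    StrongDual.toWeakDual f ∈ closure (StrongDual.toWeakDual '' C) := by
  by_contra hf
  have : LocallyConvexSpace ℝ (WeakDual ℝ X) :=
    inferInstanceAs (LocallyConvexSpace ℝ (WeakBilin (topDualPairing ℝ X)))
  have hc : Convex ℝ (closure (StrongDual.toWeakDual '' C)) :=
    (hconv.is_linear_image (f := StrongDual.toWeakDual) ⟨map_add _, map_smul _⟩).closure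
  obtain ⟨Λ, u, h1, h2⟩ := geometric_hahn_banach_closed_point hc isClosed_closure hf
  obtain ⟨x, hx⟩ := LinearMap.dualEmbedding_surjective (topDualPairing ℝ X) Λ
  have hx' : ∀ g : StrongDual ℝ X, Λ (StrongDual.toWeakDual g) = g x := by
    intro g; rw [← hx]; rfl
  rw [hx'] at h2
  have := h x u (fun a ha => by
    rw [← hx']; exact (h1 _ (subset_closure ⟨a, ha, rfl⟩)).le)
  linarith

/-- Extension of a functional, dominated on a subspace, from a closed subspace of finite
codimension. -/
lemma extension_gen {Y : Type*} [NormedAddCommGroup Y] [NormedSpace ℝ Y]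
    (R : Submodule ℝ Y) (hRc : IsClosed (R : Set Y)) (hfin : FiniteDimensional ℝ (Y ⧸ R))
    (ev : StrongDual ℝ Y) (V : Submodule ℝ Y) (N : V → ℝ)
    (N_hom : ∀ c : ℝ, 0 < c → ∀ x, N (c • x) = c * N x) (N_add : ∀ x y, N (x + y) ≤ N x + N y)
    (hN : ∀ F : V, (F : Y) ∈ R → ev F ≤ N F) :
    ∃ (φ : Y →ₗ[ℝ] ℝ) (n : ℕ), (∀ F, φ F ≤ n * ‖F‖) ∧ (∀ F ∈ R, φ F = ev F) ∧
      ∀ F : V, φ F ≤ N F := by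
  let f0 : V →ₗ.[ℝ] ℝ :=
    ⟨R.comap V.subtype, (ev.toLinearMap.comp V.subtype).comp (R.comap V.subtype).subtype⟩
  obtain ⟨ψ, hψ1, hψ2⟩ := exists_extension_of_le_sublinear f0 N N_hom N_add
    (fun F => hN F F.2)
  let g1 : Y →ₗ.[ℝ] ℝ := ⟨V, ψ⟩
  let g2 : Y →ₗ.[ℝ] ℝ := ⟨R, ev.toLinearMap.comp R.subtype⟩
  have hag : ∀ (x : g1.domain) (y : g2.domain), (x : Y) = y → g1 x = g2 y := by
    rintro x ⟨y, hy⟩ hxy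
    have hxy : (x : Y) = y := hxy
    subst hxy
    exact hψ1 ⟨x, hy⟩
  obtain ⟨φ, hφ⟩ := LinearMap.exists_extend (g1.sup g2 hag).toFun
  have hφV : ∀ F : V, φ F = ψ F := by
    intro F
    have h1 := LinearMap.congr_fun hφ ⟨F, (LinearPMap.left_le_sup g1 g2 hag).1 F.2⟩
    exact h1.trans ((LinearPMap.left_le_sup g1 g2 hag).2 (x := F) rfl).symm
  have hφR : ∀ F : R, φ F = ev F := by
    intro F
    have h1 := LinearMap.congr_fun hφ ⟨F, (LinearPMap.right_le_sup g1 g2 hag).1 F.2⟩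
    exact h1.trans ((LinearPMap.right_le_sup g1 g2 hag).2 (x := F) rfl).symm
  have : IsClosed (R : Set Y) := hRc
  let l : (Y ⧸ R) →ₗ[ℝ] ℝ := R.liftQ (φ - ev.toLinearMap) (by
    intro F hF
    simpa [sub_eq_zero] using hφR ⟨F, hF⟩)
  have hl : Continuous l := LinearMap.continuous_of_finiteDimensional l
  have hφc : Continuous φ := by
    have : (φ : Y → ℝ) = fun F => ev F + l (R.mkQ F) := by
      funext F
      simp [l]
    rw [this]
    exact ev.continuous.add (hl.comp (continuous_quot_mk))
  let Φ : StrongDual ℝ Y := ⟨φ, hφc⟩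
  obtain ⟨n, hn⟩ := exists_nat_ge ‖Φ‖
  refine ⟨φ, n, fun F => ?_, fun F hF => hφR ⟨F, hF⟩, fun F => (hφV F).trans_le (hψ2 F)⟩
  calc φ F ≤ ‖Φ F‖ := le_abs_self _
    _ ≤ ‖Φ‖ * ‖F‖ := Φ.le_opNorm F
    _ ≤ n * ‖F‖ := by gcongr

/-- The extension step, for a general normed space in place of the dual. -/
lemma extension_mid {W : Type*} [NormedAddCommGroup W] [NormedSpace ℝ W]
    (R : Submodule ℝ (StrongDual ℝ W)) (hRc : IsClosed (R : Set (StrongDual ℝ W)))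
    (hfin : FiniteDimensional ℝ (StrongDual ℝ W ⧸ R))
    (A : Set W) (hne : A.Nonempty) (hneg : ∀ a ∈ A, -a ∈ A) (f : W)
    (hf : ∀ F ∈ R, ∀ s : ℝ, (∀ a ∈ A, F a ≤ s) → F f ≤ s) :
    ∃ (φ : StrongDual ℝ W →ₗ[ℝ] ℝ) (n : ℕ), (∀ F, φ F ≤ n * ‖F‖) ∧
      (∀ F ∈ R, φ F = F f) ∧
      ∀ (F : StrongDual ℝ W) (t : ℝ), (∀ a ∈ A, F a ≤ t) → φ F ≤ t := by
  let ev : StrongDual ℝ (StrongDual ℝ W) := inclusionInDoubleDual ℝ W f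
  let V : Submodule ℝ (StrongDual ℝ W) :=
    { carrier := {F | ∃ t, ∀ a ∈ A, F a ≤ t}
      zero_mem' := ⟨0, by simp⟩
      add_mem' := by
        rintro F G ⟨t, ht⟩ ⟨u, hu⟩
        exact ⟨t + u, fun a ha => add_le_add (ht a ha) (hu a ha)⟩
      smul_mem' := by
        rintro c F ⟨t, ht⟩
        refine ⟨|c| * t, fun a ha => ?_⟩
        have h1 := ht a ha
        have h2 := ht _ (hneg a ha)
        rw [map_neg] at h2
        have : |F a| ≤ t := abs_le.2 ⟨by linarith, h1⟩
        calc c * F a ≤ |c * F a| := le_abs_self _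
          _ = |c| * |F a| := abs_mul _ _
          _ ≤ |c| * t := by gcongr }
  have : Nonempty A := hne.to_subtype
  let N : V → ℝ := fun F => ⨆ a : A, (F : StrongDual ℝ W) (a : W)
  have hbdd : ∀ F : V, BddAbove (Set.range fun a : A => (F : StrongDual ℝ W) (a : W)) := by
    rintro ⟨F, t, ht⟩
    exact ⟨t, by rintro _ ⟨a, rfl⟩; exact ht a a.2⟩
  have hleN : ∀ F : V, ∀ a ∈ A, (F : StrongDual ℝ W) a ≤ N F := fun F a ha =>
    le_ciSup (hbdd F) ⟨a, ha⟩
  have N_hom : ∀ c : ℝ, 0 < c → ∀ x, N (c • x) = c * N x := by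
    intro c hc F
    exact (Real.mul_iSup_of_nonneg hc.le _).symm
  have N_add : ∀ x y, N (x + y) ≤ N x + N y := by
    intro F G
    exact ciSup_le fun a => add_le_add (hleN F a a.2) (hleN G a a.2)
  obtain ⟨φ, n, h1, h2, h3⟩ := extension_gen R hRc hfin ev V N N_hom N_add
    (fun F hF => hf F hF _ (hleN F))
  refine ⟨φ, n, h1, h2, fun F t ht => ?_⟩
  exact (h3 ⟨F, t, ht⟩).trans (ciSup_le fun a => ht a a.2)

/-- The range of a linear isometry on a Banach space is closed. -/
lemma isClosed_range_li {E F : Type*} [NormedAddCommGroup E] [NormedSpace ℝ E] [CompleteSpace E]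
    [NormedAddCommGroup F] [NormedSpace ℝ F] (J : E →ₗᵢ[ℝ] F) : IsClosed (Set.range J) :=
  J.isometry.isClosedEmbedding.isClosed_range

/-- The extension step, for an isometric embedding. -/
lemma extension_li {X W : Type*} [NormedAddCommGroup X] [NormedSpace ℝ X] [CompleteSpace X]
    [NormedAddCommGroup W] [NormedSpace ℝ W] (J : X →ₗᵢ[ℝ] StrongDual ℝ W)
    (R : Submodule ℝ (StrongDual ℝ W)) (hR : ∀ F, F ∈ R ↔ ∃ x, J x = F)
    (hfin : FiniteDimensional ℝ (StrongDual ℝ W ⧸ R))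
    (A : Set W) (hne : A.Nonempty) (hneg : ∀ a ∈ A, -a ∈ A) (f : W)
    (hf : ∀ (x : X) (s : ℝ), (∀ a ∈ A, J x a ≤ s) → J x f ≤ s) :
    ∃ (φ : StrongDual ℝ W →ₗ[ℝ] ℝ) (n : ℕ), (∀ F, φ F ≤ n * ‖F‖) ∧
      (∀ x, φ (J x) = J x f) ∧
      ∀ (F : StrongDual ℝ W) (t : ℝ), (∀ a ∈ A, F a ≤ t) → φ F ≤ t := by
  have hRc : IsClosed (R : Set (StrongDual ℝ W)) := by
    have h : (R : Set (StrongDual ℝ W)) = Set.range J := Set.ext hR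
    rw [h]
    exact isClosed_range_li J
  obtain ⟨φ, n, h1, h2, h3⟩ := extension_mid R hRc hfin A hne hneg f (by
      intro F hF s hs
      obtain ⟨x, rfl⟩ := (hR F).1 hF
      exact hf x s hs)
  exact ⟨φ, n, h1, fun x => h2 _ ((hR _).2 ⟨x, rfl⟩), h3⟩

/-- The extension step. -/
lemma extension_aux {X : Type*} [NormedAddCommGroup X] [NormedSpace ℝ X] [CompleteSpace X]
    (hq : QuasiReflexive X) (A : Set (StrongDual ℝ X)) (hne : A.Nonempty)
    (hbal : Balanced ℝ A) (f : StrongDual ℝ X)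
    (hf : ∀ (x : X) (s : ℝ), (∀ a ∈ A, a x ≤ s) → f x ≤ s) :
    ∃ (φ : StrongDual ℝ (StrongDual ℝ X) →ₗ[ℝ] ℝ) (n : ℕ), (∀ F, φ F ≤ n * ‖F‖) ∧
      (∀ x, φ (inclusionInDoubleDual ℝ X x) = f x) ∧
      ∀ (F : StrongDual ℝ (StrongDual ℝ X)) (t : ℝ), (∀ a ∈ A, F a ≤ t) → φ F ≤ t :=
  extension_li (inclusionInDoubleDualLi (E := X) ℝ) _ (fun _ => Iff.rfl) hq A hne
    (fun a ha => hbal.neg_mem_iff.2 ha) f hf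

/-- If $X$ is quasi-reflexive and $A \subset X^*$ is absolutely convex (convex and
balanced), then the weak* derived set of $A$ equals the weak* closure of $A$. -/
theorem stmt4 (X : Type*) [NormedAddCommGroup X] [NormedSpace ℝ X] [CompleteSpace X]
    (hq : QuasiReflexive X) (A : Set (StrongDual ℝ X))
    (hconv : Convex ℝ A) (hbal : Balanced ℝ A) :
    wStarDerived A = wStarClosure A := by
  apply Set.Subset.antisymm
  · intro f hf
    obtain ⟨n, hn⟩ := Set.mem_iUnion.1 hf
    refine closure_mono (X := WeakDual ℝ X) ?_ hn
    exact Set.image_mono Set.inter_subset_left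
  · intro f hf
    have hf : StrongDual.toWeakDual f ∈ closure (StrongDual.toWeakDual '' A) := hf
    have hne : A.Nonempty := by
      by_contra h
      rw [Set.not_nonempty_iff_eq_empty] at h
      rw [h, Set.image_empty, closure_empty] at hf
      exact hf
    obtain ⟨φ, n, hn, h1, h2⟩ := extension_aux hq A hne hbal f (by
      intro x s hs
      have hcl : IsClosed {g : WeakDual ℝ X | g x ≤ s} :=
        isClosed_le (WeakDual.eval_continuous x) continuous_const
      have : closure (StrongDual.toWeakDual '' A) ⊆ {g : WeakDual ℝ X | g x ≤ s} := by
        refine closure_minimal ?_ hcl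
        rintro _ ⟨a, ha, rfl⟩
        exact hs a ha
      exact this hf)
    refine Set.mem_iUnion.2 ⟨n + 1, ?_⟩
    refine weakStar_sep _ (hconv.inter ?_) f ?_
    · have := convex_closedBall (0 : StrongDual ℝ X) ((n + 1 : ℕ) : ℝ)
      have he : {g : StrongDual ℝ X | ‖g‖ ≤ ((n + 1 : ℕ) : ℝ)} =
          Metric.closedBall (0 : StrongDual ℝ X) ((n + 1 : ℕ) : ℝ) := by
        ext g; simp
      rw [he]
      exact this
    · intro x s hs
      rw [← h1]
      refine goldstine_aux A hconv hne φ h2 n hn _ s fun a ha hna => hs a ⟨ha, ?_⟩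
      simpa using hna
end

section
/- Let Z be a closed linear subspace of a real Banach space X, let E : Z → X be the natural isometric embedding, and let E* : X* → Z* be the adjoint restriction map. Let A ⊆ Z* and set D = (E*)^{-1}(A) ⊆ X*. Then D^(1) = (E*)^{-1}(A^(1)), where D^(1) is the weak* derived set computed in X* and A^(1) is the weak* derived set computed in Z*. -/
open NormedSpace

noncomputable def wRestr {X : Type*} [NormedAddCommGroup X] [NormedSpace ℝ X]
    (Z : Submodule ℝ X) (f : WeakDual ℝ X) : WeakDual ℝ Z :=
  StrongDual.toWeakDual (restrictMap Z (WeakDual.toStrongDual f))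

theorem wRestr_continuous {X : Type*} [NormedAddCommGroup X] [NormedSpace ℝ X]
    (Z : Submodule ℝ X) : Continuous (wRestr Z) := by
  refine WeakDual.continuous_of_continuous_eval fun z => ?_
  exact WeakDual.eval_continuous (z : X)

theorem stmt5 (X : Type*) [NormedAddCommGroup X] [NormedSpace ℝ X] [CompleteSpace X]
    (Z : Submodule ℝ X) (hZ : IsClosed (Z : Set X)) (A : Set (StrongDual ℝ Z)) :
    wStarDerived (restrictMap Z ⁻¹' A) = restrictMap Z ⁻¹' (wStarDerived A) := by
  ext f
  simp only [wStarDerived, Set.mem_iUnion, Set.mem_preimage, Set.mem_ofPred_eq]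
  constructor
  · rintro ⟨n, hn⟩
    refine ⟨n, ?_⟩
    change wRestr Z (StrongDual.toWeakDual f) ∈ _
    refine map_mem_closure (wRestr_continuous Z) hn ?_
    rintro _ ⟨g, ⟨hgA, hg⟩, rfl⟩
    refine ⟨restrictMap Z g, ⟨hgA, ?_⟩, rfl⟩
    refine le_trans ?_ (show ‖g‖ ≤ n from hg)
    exact ContinuousLinearMap.opNorm_le_bound _ (norm_nonneg _) fun z => g.le_opNorm (z : X)
  · rintro ⟨n, hn⟩
    set K : Set (WeakDual ℝ X) :=
      StrongDual.toWeakDual '' ((restrictMap Z ⁻¹' A) ∩ {g : StrongDual ℝ X | ‖g‖ ≤ n}) with hK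
    have hcK : IsCompact (closure K) := by
      refine (WeakDual.isCompact_closedBall (𝕜 := ℝ) (E := X) 0 n).closure_of_subset ?_
      rintro _ ⟨g, ⟨_, hg⟩, rfl⟩
      simpa using hg
    have hcl : IsClosed (wRestr Z '' closure K) := (hcK.image (wRestr_continuous Z)).isClosed
    have hsub : (StrongDual.toWeakDual '' (A ∩ {g : StrongDual ℝ Z | ‖g‖ ≤ n})) ⊆
        wRestr Z '' closure K := by
      rintro _ ⟨a, ⟨haA, ha⟩, rfl⟩
      obtain ⟨g, hg, hgn⟩ := _root_.exists_extension_norm_eq Z a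
      have hr : restrictMap Z g = a := by
        ext z
        exact hg z
      refine ⟨StrongDual.toWeakDual g, subset_closure ⟨g, ⟨?_, ?_⟩, rfl⟩, ?_⟩
      · rw [Set.mem_preimage, hr]; exact haA
      · exact hgn.trans_le ha
      · exact congrArg StrongDual.toWeakDual hr
    obtain ⟨g, hgK, hg⟩ := closure_minimal hsub hcl hn
    have hg' : restrictMap Z (WeakDual.toStrongDual g) = restrictMap Z f :=
      StrongDual.toWeakDual.injective hg
    set d : StrongDual ℝ X := f - WeakDual.toStrongDual g with hd
    obtain ⟨m, hm⟩ := exists_nat_ge ((n : ℝ) + ‖d‖)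
    refine ⟨m, ?_⟩
    have hc : Continuous fun h : WeakDual ℝ X => h + StrongDual.toWeakDual d :=
      continuous_id.add continuous_const
    have key := map_mem_closure hc hgK (t := StrongDual.toWeakDual ''
      ((restrictMap Z ⁻¹' A) ∩ {g : StrongDual ℝ X | ‖g‖ ≤ m})) ?_
    · convert key using 1
      rw [hd, map_sub]
      exact (add_sub_cancel g (StrongDual.toWeakDual f)).symm
    · rintro _ ⟨k, ⟨hkA, hk⟩, rfl⟩
      refine ⟨k + d, ⟨?_, ?_⟩, map_add _ _ _⟩
      · have : restrictMap Z (k + d) = restrictMap Z k := by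
          ext z
          have h1 : WeakDual.toStrongDual g (z : X) = f z :=
            congrArg (fun φ : StrongDual ℝ Z => φ z) hg'
          change k z + (f z - WeakDual.toStrongDual g (z : X)) = k z
          rw [h1]; ring
        rw [Set.mem_preimage, this]; exact hkA
      · have hk' : ‖k‖ ≤ n := hk
        have := norm_add_le k d
        change ‖k + d‖ ≤ m
        linarith
end

section
/- Let X be a real Banach space which is not quasi-reflexive and which contains an infinite-dimensional closed subspace with separable dual. For k = 0, 1, 2, ... put n_k = k(k+1)/2. Then there exist sequences (u_i)_{i≥0}, (x_i)_{i≥0} in X and (u_i*)_{i≥0}, (x_i*)_{i≥0} in X* such that: (1) the combined system is biorthogonal, i.e., u_i*(u_j) = δ_{ij}, u_i*(x_j) = 0, x_i*(x_j) = δ_{ij}, x_i*(u_j) = 0 for all i, j, and both the vectors and the functionals are uniformly bounded in norm; (2) the closed linear span U of (u_i)_{i≥0} has separable dual U*, and the restrictions of the functionals u_i* to U have dense linear span in U*; (3) the set { ∑_{p=j}^{k} x_{n_p + j} : 0 ≤ j ≤ k < ∞ } is bounded in norm. -/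
open NormedSpace

theorem aux_exists_seq {D : Type*} [Nonempty D] (R : ℕ → (ℕ → D) → D → Prop)
    (hext : ∀ n f g d, (∀ k < n, f k = g k) → R n f d → R n g d)
    (h : ∀ n f, ∃ d, R n f d) : ∃ f : ℕ → D, ∀ n, R n f (f n) := by
  classical
  choose next hnext using h
  obtain ⟨d0⟩ := ‹Nonempty D›
  let step : (n : ℕ) → ((m : ℕ) → m < n → D) → D :=
    fun n ih => next n (fun k => if hk : k < n then ih k hk else d0)
  let f : ℕ → D := fun n => Nat.strongRecOn (motive := fun _ => D) n step
  have hf : ∀ n, f n = next n (fun k => if k < n then f k else d0) := by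
    intro n
    change Nat.strongRecOn (motive := fun _ => D) n step = _
    rw [Nat.strongRecOn_eq]
    simp only [step]
    congr 1
  refine ⟨f, fun n => ?_⟩
  refine hext n (fun k => if k < n then f k else d0) f _ ?_ ?_
  · intro k hk; simp [hk]
  · rw [hf n]; exact hnext _ _

theorem aux_helly_s6 {Y : Type*} [NormedAddCommGroup Y] [NormedSpace ℝ Y]
    (S : Set (StrongDual ℝ Y)) (hS : S.Finite) (F : StrongDual ℝ (StrongDual ℝ Y)) :
    ∃ y : Y, ‖y‖ ≤ ‖F‖ + 1 ∧ ∀ h ∈ S, h y = F h := by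
  classical
  have := hS.fintype
  let T : Y →L[ℝ] (S → ℝ) := ContinuousLinearMap.pi (fun i => i.1)
  let v : S → ℝ := fun i => F i.1
  have hT : ∀ y i, T y i = i.1 y := fun y i => rfl
  have hv : v ∈ closure (T '' Metric.closedBall 0 ‖F‖) := by
    by_contra hcon
    have hconv : Convex ℝ (closure (T '' Metric.closedBall 0 ‖F‖)) :=
      ((convex_closedBall (0 : Y) ‖F‖).linear_image (T : Y →ₗ[ℝ] (S → ℝ))).closure
    obtain ⟨l, c, hl, hc⟩ := geometric_hahn_banach_closed_point hconv isClosed_closure hcon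
    let h : StrongDual ℝ Y := ∑ i : S, l (Pi.single i 1) • i.1
    have hlw : ∀ w : S → ℝ, l w = ∑ i : S, l (Pi.single i 1) * w i := by
      intro w
      conv_lhs => rw [← Finset.univ_sum_single w]
      rw [map_sum]
      refine Finset.sum_congr rfl fun i _ => ?_
      have : (Pi.single i (w i) : S → ℝ) = w i • Pi.single i 1 := by
        rw [← Pi.single_smul]; simp
      rw [this, map_smul, smul_eq_mul, mul_comm]
    have hhy : ∀ y, h y = l (T y) := by
      intro y
      rw [hlw]
      simp [h, hT]
    have hFh : F h = l v := by
      rw [hlw]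
      simp [h, v]
    have hb : ∀ y, ‖y‖ ≤ ‖F‖ → h y < c := by
      intro y hy
      rw [hhy]
      exact hl _ (subset_closure ⟨y, by simpa using hy, rfl⟩)
    have hc0 : 0 < c := by
      have := hb 0 (by rw [norm_zero]; exact norm_nonneg F)
      rwa [map_zero] at this
    have key : ‖F‖ * ‖h‖ ≤ c := by
      rcases (norm_nonneg F).eq_or_lt with h0 | h0
      · rw [← h0]; simpa using hc0.le
      · rw [mul_comm, ← le_div_iff₀ h0]
        refine ContinuousLinearMap.opNorm_le_bound _ (by positivity) fun y => ?_
        by_cases hy : y = 0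
        · simp [hy]
        have hy' : 0 < ‖y‖ := norm_pos_iff.mpr hy
        have hsc : ‖(‖F‖ / ‖y‖) • y‖ ≤ ‖F‖ := by
          rw [norm_smul, Real.norm_eq_abs, abs_of_nonneg (by positivity), div_mul_cancel₀ _ hy'.ne']
        have h1 := hb ((‖F‖ / ‖y‖) • y) hsc
        have h2 := hb (-((‖F‖ / ‖y‖) • y)) (by rw [norm_neg]; exact hsc)
        rw [map_neg] at h2
        rw [map_smul, smul_eq_mul] at h1 h2
        have h3 : |‖F‖ / ‖y‖ * h y| ≤ c := abs_le.mpr ⟨by linarith, h1.le⟩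
        rw [abs_mul, abs_of_pos (by positivity)] at h3
        rw [Real.norm_eq_abs]
        rw [div_mul_eq_mul_div, div_le_iff₀ hy'] at h3
        rw [div_mul_eq_mul_div, le_div_iff₀ h0]
        linarith
    have h5 : F h ≤ ‖F‖ * ‖h‖ := (le_abs_self _).trans (F.le_opNorm h)
    linarith
  -- exactness
  let T' : Y →L[ℝ] LinearMap.range (T : Y →ₗ[ℝ] (S → ℝ)) :=
    T.codRestrict _ (fun y => ⟨y, rfl⟩)
  have hsurj : Function.Surjective T' := by
    rintro ⟨_, y, rfl⟩
    exact ⟨y, rfl⟩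
  obtain ⟨r, hr⟩ := T'.exists_rightInverse_of_surjective (LinearMap.range_eq_top.mpr hsurj)
  have hvr : v ∈ LinearMap.range (T : Y →ₗ[ℝ] (S → ℝ)) := by
    have hcl : IsClosed (LinearMap.range (T : Y →ₗ[ℝ] (S → ℝ)) : Set (S → ℝ)) :=
      Submodule.closed_of_finiteDimensional _
    refine closure_minimal ?_ hcl hv
    rintro _ ⟨y, _, rfl⟩
    exact ⟨y, rfl⟩
  obtain ⟨_, ⟨y, hy, rfl⟩, hd⟩ := Metric.mem_closure_iff.mp hv (1 / (‖r‖ + 1)) (by positivity)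
  let e : LinearMap.range (T : Y →ₗ[ℝ] (S → ℝ)) := ⟨v, hvr⟩ - T' y
  have he : ‖e‖ < 1 / (‖r‖ + 1) := by
    rw [dist_eq_norm] at hd
    exact hd
  refine ⟨y + r e, ?_, ?_⟩
  · have h1 : ‖r e‖ ≤ 1 := by
      calc ‖r e‖ ≤ ‖r‖ * ‖e‖ := r.le_opNorm e
        _ ≤ (‖r‖ + 1) * (1 / (‖r‖ + 1)) := by
          gcongr
          linarith
        _ = 1 := by field_simp
    have h2 : ‖y‖ ≤ ‖F‖ := by simpa using hy
    exact (norm_add_le _ _).trans (add_le_add h2 h1)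
  · intro h hh
    have h1 : T' (y + r e) = ⟨v, hvr⟩ := by
      have : T' (r e) = e := by
        have := DFunLike.congr_fun hr e
        simpa using this
      rw [map_add, this]
      simp [e]
    have h2 := congrFun (congrArg Subtype.val h1) ⟨h, hh⟩
    exact h2

theorem aux_mazur {W : Type*} [NormedAddCommGroup W] [NormedSpace ℝ W]
    (V : Submodule ℝ W) (hV : ¬ FiniteDimensional ℝ V)
    (P : Set W) (hP : P.Finite) (S : Set (StrongDual ℝ W)) (hS : S.Finite) :
    ∃ w ∈ V, ‖w‖ = 1 ∧ (∀ φ ∈ S, φ w = 0) ∧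
      ∃ ψ : StrongDual ℝ W, ‖ψ‖ ≤ 3 ∧ ψ w = 1 ∧ ∀ p ∈ P, ψ p = 0 := by
  classical
  let E : Submodule ℝ W := Submodule.span ℝ P
  have : FiniteDimensional ℝ E := FiniteDimensional.span_of_finite ℝ hP
  have hcomp : IsCompact (Metric.sphere (0 : E) 1) := isCompact_sphere 0 1
  obtain ⟨t, hts, htf, htc⟩ := hcomp.finite_cover_balls (e := 1 / 2) (by norm_num)
  choose ν hν1 hν2 using fun x : W => exists_dual_vector'' ℝ x
  let S' : Set (StrongDual ℝ W) := S ∪ (fun e : E => ν e) '' t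
  have hS' : S'.Finite := hS.union (htf.image _)
  have := hS'.fintype
  let T : V →ₗ[ℝ] (S' → ℝ) := LinearMap.pi (fun i => (i.1 : W →ₗ[ℝ] ℝ).comp V.subtype)
  have hni : ¬ Function.Injective T := fun hi => hV (FiniteDimensional.of_injective T hi)
  have hker : LinearMap.ker T ≠ ⊥ := fun h => hni (LinearMap.ker_eq_bot.mp h)
  obtain ⟨w0, hw0, hw0n⟩ := Submodule.exists_mem_ne_zero_of_ne_bot hker
  have hw0' : ‖(w0 : W)‖ ≠ 0 := by simpa using hw0n
  have hz : ∀ φ ∈ S', φ (w0 : W) = 0 := by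
    intro φ hφ
    exact congrFun (LinearMap.mem_ker.mp hw0) ⟨φ, hφ⟩
  let w : W := (‖(w0 : W)‖)⁻¹ • (w0 : W)
  have hw1 : ‖w‖ = 1 := by
    simp only [w]; rw [norm_smul]; simp [hw0n]
  have hzw : ∀ φ ∈ S', φ w = 0 := by
    intro φ hφ
    simp only [w]; rw [map_smul, hz φ hφ, smul_zero]
  have hdist : ∀ e ∈ E, (1 : ℝ) / 3 ≤ ‖w + e‖ := by
    intro e he
    have hhalf : (1 / 2) * ‖e‖ ≤ ‖w + e‖ := by
      by_cases he0 : e = 0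
      · simp [he0]
      have hen : 0 < ‖e‖ := norm_pos_iff.mpr he0
      let e' : E := (‖e‖)⁻¹ • ⟨e, he⟩
      have he' : e' ∈ Metric.sphere (0 : E) 1 := by
        rw [mem_sphere_zero_iff_norm]
        simp only [e']
        rw [norm_smul]
        simp [he0]
      obtain ⟨b, hb, hbe⟩ := Set.mem_iUnion₂.mp (htc he')
      have hbn : ‖(b : W)‖ = 1 := by
        have := hts hb
        rw [mem_sphere_zero_iff_norm] at this
        exact this
      have hbd : ‖(e' : W) - b‖ < 1 / 2 := by
        rw [Metric.mem_ball, dist_eq_norm] at hbe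
        exact hbe
      have hνw : ν b w = 0 := hzw _ (Or.inr ⟨b, hb, rfl⟩)
      have h1 : (1 : ℝ) / 2 ≤ ν b (e' : W) := by
        have h2 : |ν b ((e' : W) - b)| ≤ 1 * ‖(e' : W) - b‖ := (ν b).le_of_opNorm_le (hν1 _) _
        rw [map_sub] at h2
        have h3 : ν (b : W) b = 1 := by rw [hν2, hbn]; rfl
        rw [h3] at h2
        have := (abs_le.mp h2).1
        linarith
      have h4 : ν b (e' : W) = ‖e‖⁻¹ * ν b e := by
        simp [e']
      rw [h4, inv_mul_eq_div, le_div_iff₀ hen] at h1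
      have h5 : |ν b (w + e)| ≤ 1 * ‖w + e‖ := (ν b).le_of_opNorm_le (hν1 _) _
      rw [map_add, hνw, zero_add] at h5
      linarith [le_abs_self (ν b e)]
    have h6 : ‖w‖ ≤ ‖w + e‖ + ‖e‖ := by
      have := norm_sub_le (w + e) e
      simpa using this
    linarith
  have hq : (1 : ℝ) / 3 ≤ ‖(Submodule.Quotient.mk w : W ⧸ E)‖ := by
    refine le_of_forall_pos_le_add fun ε hε => ?_
    obtain ⟨m, hm, hm'⟩ := Submodule.Quotient.norm_mk_lt (Submodule.Quotient.mk w : W ⧸ E) hε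
    have hme : m - w ∈ E := (Submodule.Quotient.eq E).mp hm
    have := hdist _ hme
    rw [add_sub_cancel] at this
    linarith
  have hq0 : 0 < ‖(Submodule.Quotient.mk w : W ⧸ E)‖ := by linarith
  obtain ⟨g, hg1, hg2⟩ := exists_dual_vector ℝ (Submodule.Quotient.mk w : W ⧸ E) hq0.ne'
  refine ⟨w, V.smul_mem _ w0.2, hw1, fun φ hφ => hzw φ (Or.inl hφ),
    (‖(Submodule.Quotient.mk w : W ⧸ E)‖)⁻¹ • (g.comp E.mkQL), ?_, ?_, ?_⟩
  · refine ContinuousLinearMap.opNorm_le_bound _ (by norm_num) fun y => ?_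
    have h1 : ‖g (Submodule.Quotient.mk y : W ⧸ E)‖ ≤ 1 * ‖y‖ :=
      (g.le_of_opNorm_le hg1.le _).trans (by
        have := Submodule.Quotient.norm_mk_le E y
        linarith)
    change ‖(‖(Submodule.Quotient.mk w : W ⧸ E)‖)⁻¹ • g (Submodule.Quotient.mk y : W ⧸ E)‖ ≤ _
    rw [norm_smul, norm_inv, norm_norm]
    have h2 : (‖(Submodule.Quotient.mk w : W ⧸ E)‖)⁻¹ ≤ 3 := by
      rw [inv_le_comm₀ hq0 (by norm_num)]
      linarith
    calc _ ≤ 3 * (1 * ‖y‖) := by gcongr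
      _ = 3 * ‖y‖ := by ring
  · change (‖(Submodule.Quotient.mk w : W ⧸ E)‖)⁻¹ • g (Submodule.Quotient.mk w : W ⧸ E) = 1
    rw [hg2]
    exact inv_mul_cancel₀ hq0.ne'
  · intro p hp
    change (‖(Submodule.Quotient.mk w : W ⧸ E)‖)⁻¹ • g (Submodule.Quotient.mk p : W ⧸ E) = 0
    rw [(Submodule.Quotient.mk_eq_zero E).mpr (Submodule.subset_span hp)]
    simp

theorem aux_bior {W : Type*} [NormedAddCommGroup W] [NormedSpace ℝ W]
    (hW : ¬ FiniteDimensional ℝ W) :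
    ∃ (w : ℕ → W) (ψ : ℕ → StrongDual ℝ W), (∀ i, ‖w i‖ ≤ 1) ∧ (∀ i, ‖ψ i‖ ≤ 3) ∧
      ∀ i j, ψ i (w j) = if i = j then 1 else 0 := by
  have hT : ¬ FiniteDimensional ℝ (⊤ : Submodule ℝ W) := by
    intro h
    exact hW (Module.Finite.equiv (Submodule.topEquiv (R := ℝ) (M := W)))
  obtain ⟨f, hf⟩ := aux_exists_seq (D := W × StrongDual ℝ W)
    (fun n f d => ‖d.1‖ ≤ 1 ∧ ‖d.2‖ ≤ 3 ∧ d.2 d.1 = 1 ∧ ∀ k < n, d.2 (f k).1 = 0 ∧ (f k).2 d.1 = 0)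
    (by
      rintro n f g d hfg ⟨h1, h2, h3, h4⟩
      exact ⟨h1, h2, h3, fun k hk => by rw [← hfg k hk]; exact h4 k hk⟩)
    (by
      intro n f
      obtain ⟨w, -, hw, hφ, ψ, hψ, hψw, hψp⟩ := aux_mazur (⊤ : Submodule ℝ W) hT
        ((fun k => (f k).1) '' Set.Iio n) ((Set.finite_Iio n).image _)
        ((fun k => (f k).2) '' Set.Iio n) ((Set.finite_Iio n).image _)
      exact ⟨(w, ψ), hw.le, hψ, hψw, fun k hk => ⟨hψp _ ⟨k, hk, rfl⟩, hφ _ ⟨k, hk, rfl⟩⟩⟩)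
  refine ⟨fun n => (f n).1, fun n => (f n).2, fun n => (hf n).1, fun n => (hf n).2.1, ?_⟩
  intro i j
  rcases lt_trichotomy i j with h | h | h
  · rw [if_neg h.ne]; exact ((hf j).2.2.2 i h).2
  · subst h; simpa using (hf i).2.2.1
  · rw [if_neg h.ne']; exact ((hf i).2.2.2 j h).1

theorem aux_tri_lt {p q : ℕ} (h : p < q) : p * (p + 1) / 2 + p < q * (q + 1) / 2 := by
  have h1 : (p + 1) * (p + 1 + 1) / 2 ≤ q * (q + 1) / 2 :=
    Nat.div_le_div_right (Nat.mul_le_mul h (by omega))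
  have h2 : (p + 1) * (p + 1 + 1) / 2 = p * (p + 1) / 2 + p + 1 := by
    have : (p + 1) * (p + 1 + 1) = p * (p + 1) + (p + 1) * 2 := by ring
    rw [this, Nat.add_mul_div_right _ _ (by norm_num)]; ring
  omega

theorem aux_tri_ex (i : ℕ) : ∃ p j, j ≤ p ∧ p * (p + 1) / 2 + j = i := by
  induction i with
  | zero => exact ⟨0, 0, le_rfl, rfl⟩
  | succ i ih =>
    obtain ⟨p, j, hj, h⟩ := ih
    rcases hj.lt_or_eq with hj | hj
    · exact ⟨p, j + 1, hj, by omega⟩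
    · refine ⟨p + 1, 0, by omega, ?_⟩
      have h2 : (p + 1) * (p + 1 + 1) / 2 = p * (p + 1) / 2 + p + 1 := by
        have : (p + 1) * (p + 1 + 1) = p * (p + 1) + (p + 1) * 2 := by ring
        rw [this, Nat.add_mul_div_right _ _ (by norm_num)]; ring
      omega

theorem aux_tri : ∃ (pd jd : ℕ → ℕ), (∀ i, jd i ≤ pd i ∧ pd i * (pd i + 1) / 2 + jd i = i) ∧
    ∀ p j, j ≤ p → pd (p * (p + 1) / 2 + j) = p ∧ jd (p * (p + 1) / 2 + j) = j := by
  choose pd jd h1 h2 using aux_tri_ex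
  refine ⟨pd, jd, fun i => ⟨h1 i, h2 i⟩, fun p j hj => ?_⟩
  have a := h1 (p * (p + 1) / 2 + j)
  have b := h2 (p * (p + 1) / 2 + j)
  set P := pd (p * (p + 1) / 2 + j)
  set J := jd (p * (p + 1) / 2 + j)
  have hP : P = p := by
    rcases lt_trichotomy P p with h | h | h
    · have := aux_tri_lt h; omega
    · exact h
    · have := aux_tri_lt h; omega
  refine ⟨hP, ?_⟩
  rw [hP] at b
  omega

theorem aux_exists_seq2 {D : Type*} [Nonempty D] (P : ℕ → (ℕ → D) → Prop)
    (hext : ∀ n f g, (∀ k ≤ n, f k = g k) → P n f → P n g)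
    (h : ∀ n f, ∃ d, P n (Function.update f n d)) : ∃ f : ℕ → D, ∀ n, P n f := by
  obtain ⟨f, hf⟩ := aux_exists_seq (fun n f d => P n (Function.update f n d))
    (by
      intro n f g d hfg hP
      refine hext n _ _ ?_ hP
      intro k hk
      rcases hk.lt_or_eq with hk | hk
      · simp [Function.update_of_ne hk.ne, hfg k hk]
      · subst hk; simp) h
  refine ⟨f, fun n => ?_⟩
  have := hf n
  rwa [Function.update_eq_self] at this

/-- Data chosen at one step of the construction. -/
structure AuxD (X : Type*) [NormedAddCommGroup X] [NormedSpace ℝ X] where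
  u : X
  us : StrongDual ℝ X
  s : X
  g : StrongDual ℝ X
  y : X

/-- The conditions imposed at step `n`. -/
structure AuxP {X : Type*} [NormedAddCommGroup X] [NormedSpace ℝ X] (Z : Submodule ℝ X)
    (fe : ℕ → StrongDual ℝ X) (F : ℕ → StrongDual ℝ (StrongDual ℝ X)) (jd : ℕ → ℕ)
    (n : ℕ) (f : ℕ → AuxD X) : Prop where
  y_norm : ‖(f n).y‖ ≤ 3
  y_us : ∀ k < n, (f k).us (f n).y = F n (f k).us
  y_g : ∀ k < n, (f k).g (f n).y = F n (f k).g
  u_mem : (f n).u ∈ Z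
  u_norm : ‖(f n).u‖ ≤ 1
  u_fe : ∀ k ≤ n, fe k (f n).u = 0
  u_us : ∀ k < n, (f k).us (f n).u = 0
  u_g : ∀ k < n, (f k).g (f n).u = 0
  us_norm : ‖(f n).us‖ ≤ 4
  us_self : (f n).us (f n).u = 1
  us_u : ∀ k < n, (f n).us (f k).u = 0
  us_s : ∀ k < n, (f n).us (f k).s = 0
  us_F : ∀ k ≤ n, (f n).us (f k).y = F k (f n).us
  g_norm : ‖(f n).g‖ ≤ 4
  g_u : ∀ k ≤ n, (f n).g (f k).u = 0
  g_s : ∀ k < n, (f n).g (f k).s = 0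
  g_F : ∀ k ≤ n, F k (f n).g - (f n).g (f k).y = if k = jd n then 1 else 0
  s_norm : ‖(f n).s‖ ≤ 3 + ‖(f (jd n)).y‖
  s_us : ∀ k ≤ n, (f k).us (f n).s = F (jd n) (f k).us - (f k).us (f (jd n)).y
  s_g : ∀ k ≤ n, (f k).g (f n).s = F (jd n) (f k).g - (f k).g (f (jd n)).y

theorem AuxP.congr_of {X : Type*} [NormedAddCommGroup X] [NormedSpace ℝ X] {Z : Submodule ℝ X}
    {fe : ℕ → StrongDual ℝ X} {F : ℕ → StrongDual ℝ (StrongDual ℝ X)} {jd : ℕ → ℕ}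
    (hjd : ∀ i, jd i ≤ i) (n : ℕ) (f f' : ℕ → AuxD X) (hff : ∀ k ≤ n, f k = f' k)
    (h : AuxP Z fe F jd n f) : AuxP Z fe F jd n f' := by
  have e0 := hff n le_rfl
  have ej := hff (jd n) (hjd n)
  constructor
  · rw [← e0]; exact h.y_norm
  · intro k hk; rw [← e0, ← hff k hk.le]; exact h.y_us k hk
  · intro k hk; rw [← e0, ← hff k hk.le]; exact h.y_g k hk
  · rw [← e0]; exact h.u_mem
  · rw [← e0]; exact h.u_norm
  · intro k hk; rw [← e0]; exact h.u_fe k hk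
  · intro k hk; rw [← e0, ← hff k hk.le]; exact h.u_us k hk
  · intro k hk; rw [← e0, ← hff k hk.le]; exact h.u_g k hk
  · rw [← e0]; exact h.us_norm
  · rw [← e0]; exact h.us_self
  · intro k hk; rw [← e0, ← hff k hk.le]; exact h.us_u k hk
  · intro k hk; rw [← e0, ← hff k hk.le]; exact h.us_s k hk
  · intro k hk; rw [← e0, ← hff k hk]; exact h.us_F k hk
  · rw [← e0]; exact h.g_norm
  · intro k hk; rw [← e0, ← hff k hk]; exact h.g_u k hk
  · intro k hk; rw [← e0, ← hff k hk.le]; exact h.g_s k hk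
  · intro k hk; rw [← e0, ← hff k hk]; exact h.g_F k hk
  · rw [← e0, ← ej]; exact h.s_norm
  · intro k hk; rw [← e0, ← ej, ← hff k hk]; exact h.s_us k hk
  · intro k hk; rw [← e0, ← ej, ← hff k hk]; exact h.s_g k hk

set_option maxSynthPendingDepth 5 in
theorem AuxP.exists_step {X : Type*} [NormedAddCommGroup X] [NormedSpace ℝ X] {Z : Submodule ℝ X}
    (hZ : ¬ FiniteDimensional ℝ Z)
    {fe : ℕ → StrongDual ℝ X} {F : ℕ → StrongDual ℝ (StrongDual ℝ X)} {jd : ℕ → ℕ}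
    (hF : ∀ i, ‖F i‖ ≤ 2)
    (G : ℕ → StrongDual ℝ (StrongDual ℝ (StrongDual ℝ X))) 
    (hG : ∀ i (H : StrongDual ℝ (StrongDual ℝ X)), ‖G i H‖ ≤ 3 * ‖H‖)
    (hGJ : ∀ i x, G i (inclusionInDoubleDual ℝ X x) = 0)
    (hGF : ∀ i j, G i (F j) = if i = j then 1 else 0)
    (n : ℕ) (f : ℕ → AuxD X) : ∃ d, AuxP Z fe F jd n (Function.update f n d) := by
  classical
  let J := inclusionInDoubleDual ℝ X
  have hJ : ∀ x (h : StrongDual ℝ X), J x h = h x := fun x h => rfl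
  have hJn : ∀ x, ‖J x‖ = ‖x‖ := fun x => (inclusionInDoubleDualLi (E := X) ℝ).norm_map x
  have fin_lt : (Set.Iio n).Finite := Set.finite_Iio n
  have fin_le : (Set.Iic n).Finite := Set.finite_Iic n
  -- choose y
  obtain ⟨y, hy, hyh⟩ := aux_helly_s6
    ((fun k => (f k).us) '' Set.Iio n ∪ (fun k => (f k).g) '' Set.Iio n)
    ((fin_lt.image _).union (fin_lt.image _)) (F n)
  let yy : ℕ → X := fun k => if k = n then y else (f k).y
  let H : ℕ → StrongDual ℝ (StrongDual ℝ X) := fun k => F k - J (yy k)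
  -- choose u
  have hZ' : ¬ FiniteDimensional ℝ (Z.map (J : X →ₗ[ℝ] StrongDual ℝ (StrongDual ℝ X))) := by
    intro hfd
    have hinj : Function.Injective (J : X →ₗ[ℝ] StrongDual ℝ (StrongDual ℝ X)) :=
      (inclusionInDoubleDualLi (E := X) ℝ).injective
    exact hZ (Module.Finite.equiv (Submodule.equivMapOfInjective _ hinj Z).symm)
  obtain ⟨_, ⟨u, huZ, rfl⟩, hun, huS, Ψ, hΨn, hΨu, hΨP⟩ := aux_mazur _ hZ'
    ((fun k => J (f k).u) '' Set.Iio n ∪ (fun k => J (f k).s) '' Set.Iio n ∪ H '' Set.Iic n)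
    (((fin_lt.image _).union (fin_lt.image _)).union (fin_le.image _))
    ((fun h => inclusionInDoubleDual ℝ (StrongDual ℝ X) h) ''
      (((fun k => (f k).us) '' Set.Iio n ∪ (fun k => (f k).g) '' Set.Iio n) ∪ fe '' Set.Iic n))
    ((((fin_lt.image _).union (fin_lt.image _)).union (fin_le.image _)).image _)
  have hun' : ‖u‖ = 1 := by rw [← hJn]; exact hun
  have huS' : ∀ h ∈ (((fun k => (f k).us) '' Set.Iio n ∪ (fun k => (f k).g) '' Set.Iio n) ∪
      fe '' Set.Iic n), h u = 0 := fun h hh => huS _ ⟨h, hh, rfl⟩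
  -- choose us
  obtain ⟨us, husn, hus⟩ := aux_helly_s6
    (insert (J u) ((fun k => J (f k).u) '' Set.Iio n ∪ (fun k => J (f k).s) '' Set.Iio n ∪
      H '' Set.Iic n))
    ((((fin_lt.image _).union (fin_lt.image _)).union (fin_le.image _)).insert _) Ψ
  have husu : us u = 1 := (hus (J u) (Set.mem_insert _ _)).trans hΨu
  have hus0 : ∀ p ∈ ((fun k => J (f k).u) '' Set.Iio n ∪ (fun k => J (f k).s) '' Set.Iio n ∪
      H '' Set.Iic n), p us = 0 := fun p hp =>
    (hus p (Set.mem_insert_of_mem _ hp)).trans (hΨP p hp)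
  -- choose g
  obtain ⟨g, hgn, hg⟩ := aux_helly_s6
    (insert (J u) ((fun k => J (f k).u) '' Set.Iio n ∪ (fun k => J (f k).s) '' Set.Iio n ∪
      H '' Set.Iic n))
    ((((fin_lt.image _).union (fin_lt.image _)).union (fin_le.image _)).insert _) (G (jd n))
  have hgH : ∀ k ≤ n, H k g = if k = jd n then 1 else 0 := by
    intro k hk
    rw [hg (H k) (Set.mem_insert_of_mem _ (Or.inr ⟨k, hk, rfl⟩))]
    simp only [H]
    rw [map_sub, hGJ, hGF, sub_zero]
    simp only [eq_comm]
  -- choose s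
  obtain ⟨s, hsn, hs⟩ := aux_helly_s6
    ((((fun k => (f k).us) '' Set.Iio n ∪ (fun k => (f k).g) '' Set.Iio n)) ∪ {us, g})
    (((fin_lt.image _).union (fin_lt.image _)).union (Set.toFinite _)) (H (jd n))
  have hyn : ‖y‖ ≤ 3 := by linarith [hF n]
  refine ⟨⟨u, us, s, g, y⟩, ?_⟩
  set f' := Function.update f n ⟨u, us, s, g, y⟩ with hf'
  have e0 : f' n = ⟨u, us, s, g, y⟩ := Function.update_self _ _ _
  have ek : ∀ k < n, f' k = f k := fun k hk => Function.update_of_ne hk.ne _ _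
  have ey : ∀ k, (f' k).y = yy k := by
    intro k
    by_cases hk : k = n
    · subst hk; rw [e0]; simp [yy]
    · rw [hf', Function.update_of_ne hk]; simp [yy, hk]
  have hle : ∀ {p : ℕ → Prop}, p n → (∀ k < n, p k) → ∀ k ≤ n, p k := by
    intro p h0 h1 k hk
    rcases hk.lt_or_eq with hk | hk
    · exact h1 k hk
    · rw [hk]; exact h0
  constructor
  · rw [e0]; exact hyn
  · intro k hk; rw [e0, ek k hk]; exact hyh _ (Or.inl ⟨k, hk, rfl⟩)
  · intro k hk; rw [e0, ek k hk]; exact hyh _ (Or.inr ⟨k, hk, rfl⟩)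
  · rw [e0]; exact huZ
  · rw [e0]; exact hun'.le
  · intro k hk; rw [e0]; exact huS' _ (Or.inr ⟨k, hk, rfl⟩)
  · intro k hk; rw [e0, ek k hk]; exact huS' _ (Or.inl (Or.inl ⟨k, hk, rfl⟩))
  · intro k hk; rw [e0, ek k hk]; exact huS' _ (Or.inl (Or.inr ⟨k, hk, rfl⟩))
  · rw [e0]; change ‖us‖ ≤ 4; linarith
  · rw [e0]; exact husu
  · intro k hk; rw [e0, ek k hk]; exact hus0 _ (Or.inl (Or.inl ⟨k, hk, rfl⟩))
  · intro k hk; rw [e0, ek k hk]; exact hus0 _ (Or.inl (Or.inr ⟨k, hk, rfl⟩))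
  · intro k hk
    rw [e0, ey]
    have : F k us - us (yy k) = 0 := hus0 _ (Or.inr ⟨k, hk, rfl⟩)
    exact (sub_eq_zero.mp this).symm
  · rw [e0]; change ‖g‖ ≤ 4; 
    have hGn : ‖G (jd n)‖ ≤ 3 := ContinuousLinearMap.opNorm_le_bound _ (by norm_num) (hG (jd n))
    linarith
  · refine hle ?_ ?_
    · rw [e0]; exact (hg (J u) (Set.mem_insert _ _)).trans (hGJ _ _)
    · intro k hk; rw [e0, ek k hk]
      exact (hg (J (f k).u) (Set.mem_insert_of_mem _ (Or.inl (Or.inl ⟨k, hk, rfl⟩)))).trans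
        (hGJ _ _)
  · intro k hk; rw [e0, ek k hk]
    exact (hg (J (f k).s) (Set.mem_insert_of_mem _ (Or.inl (Or.inr ⟨k, hk, rfl⟩)))).trans
        (hGJ _ _)
  · intro k hk
    rw [e0, ey]
    exact hgH k hk
  · rw [ey, e0]
    change ‖s‖ ≤ 3 + ‖yy (jd n)‖
    have h1 : ‖H (jd n)‖ ≤ ‖F (jd n)‖ + ‖J (yy (jd n))‖ := norm_sub_le _ _
    rw [hJn] at h1
    linarith [hF (jd n)]
  · refine hle ?_ ?_
    · rw [ey, e0]; exact hs us (Or.inr (by simp))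
    · intro k hk; rw [ey, e0, ek k hk]; exact hs _ (Or.inl (Or.inl ⟨k, hk, rfl⟩))
  · refine hle ?_ ?_
    · rw [ey, e0]; exact hs g (Or.inr (by simp))
    · intro k hk; rw [ey, e0, ek k hk]; exact hs _ (Or.inl (Or.inr ⟨k, hk, rfl⟩))

theorem aux_quot {Y : Type*} [NormedAddCommGroup Y] [NormedSpace ℝ Y] (Q : Submodule ℝ Y)
    (hQ : IsClosed (Q : Set Y)) (hW : ¬ FiniteDimensional ℝ (Y ⧸ Q)) :
    ∃ (F : ℕ → Y) (G : ℕ → StrongDual ℝ Y),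
      (∀ i, ‖F i‖ ≤ 2) ∧ (∀ i (H : Y), ‖G i H‖ ≤ 3 * ‖H‖) ∧
      (∀ i, ∀ x ∈ Q, G i x = 0) ∧
      (∀ i j, G i (F j) = if i = j then 1 else 0) := by
  obtain ⟨w, ψ, hw, hψ, hb⟩ := aux_bior hW
  have hF : ∀ i, ∃ F : Y, Submodule.Quotient.mk F = w i ∧ ‖F‖ ≤ 2 := by
    intro i
    obtain ⟨m, hm, hm'⟩ := Submodule.Quotient.norm_mk_lt (w i) (one_pos)
    exact ⟨m, hm, by linarith [hw i]⟩
  choose F hF1 hF2 using hF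
  refine ⟨F, fun i => (ψ i).comp Q.mkQL, hF2, ?_, ?_, ?_⟩
  · intro i H
    have h1 := (ψ i).le_of_opNorm_le (hψ i) (Submodule.Quotient.mk H)
    have h2 := Submodule.Quotient.norm_mk_le Q H
    change ‖ψ i (Submodule.Quotient.mk H)‖ ≤ _
    linarith
  · intro i x hx
    change ψ i (Submodule.Quotient.mk _) = 0
    rw [(Submodule.Quotient.mk_eq_zero Q).mpr hx, map_zero]
  · intro i j
    change ψ i (Submodule.Quotient.mk (F j)) = _
    rw [hF1, hb]


set_option maxSynthPendingDepth 5 in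
theorem aux_FG (X : Type*) [NormedAddCommGroup X] [NormedSpace ℝ X] [CompleteSpace X]
    (hnq : ¬ QuasiReflexive X) :
    ∃ (F : ℕ → StrongDual ℝ (StrongDual ℝ X)) (G : ℕ → StrongDual ℝ (StrongDual ℝ (StrongDual ℝ X))),
      (∀ i, ‖F i‖ ≤ 2) ∧ (∀ i (H : StrongDual ℝ (StrongDual ℝ X)), ‖G i H‖ ≤ 3 * ‖H‖) ∧
      (∀ i x, G i (inclusionInDoubleDual ℝ X x) = 0) ∧
      (∀ i j, G i (F j) = if i = j then 1 else 0) := by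
  have hQ : IsClosed (LinearMap.range ((inclusionInDoubleDual ℝ X) :
      X →ₗ[ℝ] StrongDual ℝ (StrongDual ℝ X)) : Set (StrongDual ℝ (StrongDual ℝ X))) := by
    have hi : Isometry (inclusionInDoubleDual ℝ X) :=
      (inclusionInDoubleDualLi (E := X) ℝ).isometry
    exact hi.isClosedEmbedding.isClosed_range
  unfold QuasiReflexive at hnq
  obtain ⟨F, G, h1, h2, h3, h4⟩ := aux_quot _ hQ hnq
  exact ⟨F, G, h1, h2, fun i x => h3 i _ ⟨x, rfl⟩, h4⟩

/-- Lemma on minimal systems in a non-quasi-reflexive Banach space containing an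
infinite-dimensional closed subspace with separable dual (n_k = k(k+1)/2). -/
theorem stmt6 (X : Type*) [NormedAddCommGroup X] [NormedSpace ℝ X] [CompleteSpace X]
    (hnq : ¬ QuasiReflexive X)
    (hZ : ∃ Z : Submodule ℝ X, IsClosed (Z : Set X) ∧ ¬ FiniteDimensional ℝ Z ∧
      TopologicalSpace.SeparableSpace (StrongDual ℝ Z)) :
    ∃ (u x : ℕ → X) (ustar xstar : ℕ → StrongDual ℝ X),
      -- (1) biorthogonality and uniform boundedness
      (∀ i j, ustar i (u j) = if i = j then 1 else 0) ∧
      (∀ i j, ustar i (x j) = 0) ∧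
      (∀ i j, xstar i (x j) = if i = j then 1 else 0) ∧
      (∀ i j, xstar i (u j) = 0) ∧
      (∃ C : ℝ, ∀ i, ‖u i‖ ≤ C ∧ ‖x i‖ ≤ C ∧ ‖ustar i‖ ≤ C ∧ ‖xstar i‖ ≤ C) ∧
      -- (2) the closed span U of the u_i has separable dual, and the restrictions of
      -- the u_i* to U span a dense subspace of U*
      (TopologicalSpace.SeparableSpace
        (StrongDual ℝ ((Submodule.span ℝ (Set.range u)).topologicalClosure)) ∧
       Dense (Submodule.span ℝ (Set.range fun i =>
          restrictMap ((Submodule.span ℝ (Set.range u)).topologicalClosure) (ustar i)) :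
            Set (StrongDual ℝ ((Submodule.span ℝ (Set.range u)).topologicalClosure)))) ∧
      -- (3) boundedness of the partial sums with n_p = p(p+1)/2
      (∃ M : ℝ, ∀ j k : ℕ, j ≤ k →
        ‖∑ p ∈ Finset.Icc j k, x (p * (p + 1) / 2 + j)‖ ≤ M) := by
  obtain ⟨Z, hZc, hZi, hZs⟩ := hZ
  obtain ⟨F, G, hF, hG, hGJ, hGF⟩ := aux_FG X hnq
  obtain ⟨pd, jd, hd1, hd2⟩ := aux_tri
  have hjd : ∀ i, jd i ≤ i := by
    intro i
    have := (hd1 i).2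
    omega
  let fz : ℕ → StrongDual ℝ Z := TopologicalSpace.denseSeq _
  have hfz : DenseRange fz := TopologicalSpace.denseRange_denseSeq _
  choose fe hfe _ using fun k => exists_extension_norm_eq Z (fz k)
  have : Nonempty (AuxD X) := ⟨⟨0, 0, 0, 0, 0⟩⟩
  obtain ⟨f, hf⟩ := aux_exists_seq2 (AuxP Z fe F jd) (AuxP.congr_of hjd)
    (AuxP.exists_step hZi hF G hG hGJ hGF)
  have hFus : ∀ k i, (f i).us (f k).y = F k (f i).us := by
    intro k i
    rcases le_or_gt k i with h | h
    · exact (hf i).us_F k h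
    · exact (hf k).y_us i h
  have hFg : ∀ k i, F k (f i).g - (f i).g (f k).y = if k = jd i then 1 else 0 := by
    intro k i
    rcases le_or_gt k i with h | h
    · exact (hf i).g_F k h
    · rw [(hf k).y_g i h, sub_self, if_neg]
      have := hjd i
      omega
  have us_s : ∀ k i, (f k).us (f i).s = 0 := by
    intro k i
    rcases le_or_gt k i with h | h
    · rw [(hf i).s_us k h, hFus, sub_self]
    · exact (hf k).us_s i h
  have g_s : ∀ k i, (f k).g (f i).s = if k ≤ i ∧ jd i = jd k then 1 else 0 := by
    intro k i
    rcases le_or_gt k i with h | h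
    · rw [(hf i).s_g k h, hFg]; simp [h]
    · rw [(hf k).g_s i h, if_neg]; omega
  have us_u : ∀ k i, (f k).us (f i).u = if k = i then 1 else 0 := by
    intro k i
    rcases lt_trichotomy k i with h | h | h
    · rw [if_neg h.ne]; exact (hf i).u_us k h
    · subst h; simpa using (hf k).us_self
    · rw [if_neg h.ne']; exact (hf k).us_u i h
  have g_u : ∀ k i, (f k).g (f i).u = 0 := by
    intro k i
    rcases lt_or_ge k i with h | h
    · exact (hf i).u_g k h
    · exact (hf k).g_u i h
  have s_norm : ∀ i, ‖(f i).s‖ ≤ 6 := by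
    intro i
    linarith [(hf i).s_norm, (hf (jd i)).y_norm]
  let x : ℕ → X := fun i => (f i).s -
    (if jd i < pd i then (f ((pd i - 1) * (pd i - 1 + 1) / 2 + jd i)).s else 0)
  have x_norm : ∀ i, ‖x i‖ ≤ 12 := by
    intro i
    simp only [x]
    refine (norm_sub_le _ _).trans ?_
    split_ifs
    · linarith [s_norm i, s_norm ((pd i - 1) * (pd i - 1 + 1) / 2 + jd i)]
    · rw [norm_zero]; linarith [s_norm i]
  have us_x : ∀ k i, (f k).us (x i) = 0 := by
    intro k i
    simp only [x]
    rw [map_sub, us_s]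
    split_ifs
    · rw [us_s, sub_zero]
    · rw [map_zero, sub_zero]
  have g_x : ∀ k i, (f k).g (x i) = if k = i then 1 else 0 := by
    intro k i
    simp only [x]
    obtain ⟨hk1, hk2⟩ := hd1 k
    obtain ⟨hi1, hi2⟩ := hd1 i
    have t1 : pd k < pd i → pd k * (pd k + 1) / 2 + pd k < pd i * (pd i + 1) / 2 := aux_tri_lt
    have t2 : pd i < pd k → pd i * (pd i + 1) / 2 + pd i < pd k * (pd k + 1) / 2 := aux_tri_lt
    have t3 : pd i = pd k → pd i * (pd i + 1) / 2 = pd k * (pd k + 1) / 2 := fun h => by rw [h]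
    rw [map_sub, g_s]
    split_ifs with h1 h2 h3 h3 h4 h5
    all_goals first
      | (rw [map_zero]; first | (norm_num; done) | (exfalso; omega))
      | skip
    all_goals
      rw [g_s]
      obtain ⟨e1, e2⟩ := hd2 (pd i - 1) (jd i) (by omega)
      have t4 : pd k < pd i - 1 → pd k * (pd k + 1) / 2 + pd k < (pd i - 1) * (pd i - 1 + 1) / 2 :=
        aux_tri_lt
      have t5 : pd i - 1 < pd k → (pd i - 1) * (pd i - 1 + 1) / 2 + (pd i - 1) <
        pd k * (pd k + 1) / 2 := aux_tri_lt
      have t6 : pd i - 1 = pd k → (pd i - 1) * (pd i - 1 + 1) / 2 = pd k * (pd k + 1) / 2 :=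
        fun h => by rw [h]
      rw [e2]
      split_ifs <;> first | (norm_num; done) | (exfalso; omega)
  have hsum : ∀ j k, j ≤ k → ∑ p ∈ Finset.Icc j k, x (p * (p + 1) / 2 + j) =
      (f (k * (k + 1) / 2 + j)).s := by
    intro j k hjk
    induction k, hjk using Nat.le_induction with
    | base =>
      obtain ⟨e1, e2⟩ := hd2 j j le_rfl
      simp [x, e1, e2]
    | succ k hk ih =>
      rw [Finset.sum_Icc_succ_top (by omega), ih]
      obtain ⟨e1, e2⟩ := hd2 (k + 1) j (by omega)
      simp only [x, e1, e2]
      rw [if_pos (by omega)]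
      simp
  let U : Submodule ℝ X := (Submodule.span ℝ (Set.range fun i => (f i).u)).topologicalClosure
  have huU : ∀ i, (f i).u ∈ U := fun i =>
    Submodule.le_topologicalClosure _ (Submodule.subset_span ⟨i, rfl⟩)
  have hUZ : U ≤ Z := by
    refine Submodule.topologicalClosure_minimal _ ?_ hZc
    rw [Submodule.span_le]
    rintro _ ⟨i, rfl⟩
    exact (hf i).u_mem
  let ρ : StrongDual ℝ Z → StrongDual ℝ U := fun φ => φ.comp (U.subtypeL.codRestrict Z (fun v => hUZ v.2))
  have hρc : Continuous ρ := by
    simp only [ρ]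
    fun_prop
  have hρs : Function.Surjective ρ := by
    intro φ
    obtain ⟨g, hg, -⟩ := exists_extension_norm_eq U φ
    refine ⟨g.comp Z.subtypeL, ?_⟩
    ext v
    exact hg v
  have hdense : DenseRange (ρ ∘ fz) := hρs.denseRange.comp hfz hρc
  refine ⟨fun i => (f i).u, x, fun i => (f i).us, fun i => (f i).g, us_u, us_x, g_x, g_u,
    ⟨12, fun i => ⟨?_, x_norm i, ?_, ?_⟩⟩, ⟨?_, ?_⟩, ⟨6, ?_⟩⟩
  · linarith [(hf i).u_norm]
  · linarith [(hf i).us_norm]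
  · linarith [(hf i).g_norm]
  · exact hρs.denseRange.separableSpace hρc
  · refine hdense.mono ?_
    rintro _ ⟨k, rfl⟩
    have hrep : (ρ ∘ fz) k = ∑ i ∈ Finset.range k, fe k (f i).u • restrictMap U (f i).us := by
      have hcl : ∀ v ∈ U, fe k v = ∑ i ∈ Finset.range k, fe k (f i).u * (f i).us v := by
        intro v hv
        have hc : IsClosed {v : X | fe k v = ∑ i ∈ Finset.range k, fe k (f i).u * (f i).us v} :=
          isClosed_eq (by fun_prop) (by fun_prop)
        refine closure_minimal ?_ hc hv
        intro v hv
        induction hv using Submodule.span_induction with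
        | mem v hv =>
          obtain ⟨j, rfl⟩ := hv
          simp only [Set.mem_ofPred_eq, us_u]
          by_cases hj : j < k
          · simp [hj]
          · rw [(hf j).u_fe k (by omega)]
            simp [hj]
        | zero => simp
        | add a b _ _ ha hb =>
          simp only [Set.mem_ofPred_eq] at ha hb ⊢
          simp only [map_add, ha, hb, mul_add, Finset.sum_add_distrib]
        | smul c a _ ha =>
          simp only [Set.mem_ofPred_eq] at ha ⊢
          simp only [map_smul, ha, smul_eq_mul, Finset.mul_sum]
          exact Finset.sum_congr rfl fun i _ => by ring
      ext v
      have h1 : (ρ ∘ fz) k v = fe k v := (hfe k ⟨v, hUZ v.2⟩).symm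
      rw [h1, hcl v v.2]
      simp [restrictMap]
    rw [hrep]
    refine Submodule.sum_mem _ fun i _ => Submodule.smul_mem _ _ (Submodule.subset_span ⟨i, rfl⟩)
  · intro j k hjk
    rw [hsum j k hjk]
    exact s_norm _
end

section
/- Let Ω be a directed set, n ∈ ℕ, and let m : Ω → ℝ^n (with any fixed norm on ℝ^n) be such that limsup_α ‖m(α)‖ = ∞, meaning: for every M > 0 and every α ∈ Ω there exists β ≽ α with ‖m(β)‖ > M. Then there exist a constant 0 < C < ∞ and α' ∈ Ω such that for every α₀ ≽ α' and every ε ∈ (0,1) there is a finitely supported function a : Ω → ℝ whose support is contained in {α₀} ∪ {α ∈ Ω : α ≻ α₀}, satisfying ∑_α |a(α)| = 1, a(α₀) = 1 − ε, and ‖∑_α a(α)·m(α)‖ ≤ C. -/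
noncomputable def nrm7 {Ω : Type*} (b : Ω →₀ ℝ) : ℝ := ∑ i ∈ b.support, |b i|

lemma nrm7_eq {Ω : Type*} (b : Ω →₀ ℝ) (s : Finset Ω) (h : b.support ⊆ s) :
    nrm7 b = ∑ i ∈ s, |b i| := by
  unfold nrm7
  apply Finset.sum_subset h
  intro x _ hx
  simp [Finsupp.notMem_support_iff.mp hx]

lemma nrm7_nonneg {Ω : Type*} (b : Ω →₀ ℝ) : 0 ≤ nrm7 b :=
  Finset.sum_nonneg fun _ _ => abs_nonneg _

lemma nrm7_add {Ω : Type*} (b c : Ω →₀ ℝ) : nrm7 (b + c) ≤ nrm7 b + nrm7 c := by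
  classical
  rw [nrm7_eq (b + c) (b.support ∪ c.support) Finsupp.support_add,
    nrm7_eq b (b.support ∪ c.support) Finset.subset_union_left,
    nrm7_eq c (b.support ∪ c.support) Finset.subset_union_right, ← Finset.sum_add_distrib]
  exact Finset.sum_le_sum fun i _ => abs_add_le _ _

lemma nrm7_smul {Ω : Type*} (k : ℝ) (b : Ω →₀ ℝ) : nrm7 (k • b) = |k| * nrm7 b := by
  classical
  rw [nrm7_eq (k • b) b.support Finsupp.support_smul]
  unfold nrm7
  rw [Finset.mul_sum]
  simp [abs_mul]

lemma nrm7_pos {Ω : Type*} (b : Ω →₀ ℝ) (h : b ≠ 0) : 0 < nrm7 b := by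
  obtain ⟨i, hi⟩ := Finsupp.support_nonempty_iff.mpr h
  exact Finset.sum_pos' (fun _ _ => abs_nonneg _)
    ⟨i, hi, abs_pos.mpr (Finsupp.mem_support_iff.mp hi)⟩

lemma nrm7_cont {Ω : Type*} (b c : Ω →₀ ℝ) : Continuous fun k : ℝ => nrm7 (b + k • c) := by
  classical
  have : (fun k : ℝ => nrm7 (b + k • c)) =
      fun k => ∑ i ∈ b.support ∪ c.support, |b i + k * c i| := by
    ext k
    rw [nrm7_eq (b + k • c) (b.support ∪ c.support)]
    · simp
    · exact Finsupp.support_add.trans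
        (Finset.union_subset_union_right Finsupp.support_smul)
  rw [this]
  fun_prop

lemma nrm7_ivt {Ω : Type*} (b c : Ω →₀ ℝ) (hb : nrm7 b ≤ 1) (hc : c ≠ 0) :
    ∃ k : ℝ, nrm7 (b + k • c) = 1 := by
  have hp := nrm7_pos c hc
  set K : ℝ := 2 / nrm7 c with hK
  have hK0 : 0 ≤ K := by positivity
  have h1 : 1 ≤ nrm7 (b + K • c) := by
    have h2 : nrm7 (K • c) ≤ nrm7 (b + K • c) + nrm7 ((-1 : ℝ) • b) := by
      have := nrm7_add (b + K • c) ((-1 : ℝ) • b)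
      convert this using 2
      module
    rw [nrm7_smul, nrm7_smul, abs_of_nonneg hK0, hK, div_mul_cancel₀ _ hp.ne'] at h2
    norm_num at h2
    linarith
  have := intermediate_value_Icc hK0 (nrm7_cont b c).continuousOn
  obtain ⟨k, _, hk⟩ := this ⟨by simpa using hb, h1⟩
  exact ⟨k, hk⟩

/-- functionals bounded on the tail -/
def bdd7 {Ω : Type*} [PartialOrder Ω] {E : Type*} [NormedAddCommGroup E] [NormedSpace ℝ E]
    (m : Ω → E) (α : Ω) : Submodule ℝ (Module.Dual ℝ E) where
  carrier := {f | ∃ R : ℝ, ∀ β, α ≤ β → |f (m β)| ≤ R}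
  zero_mem' := ⟨0, by simp⟩
  add_mem' := by
    rintro f g ⟨R, hR⟩ ⟨S, hS⟩
    exact ⟨R + S, fun β h => (abs_add_le _ _).trans (add_le_add (hR β h) (hS β h))⟩
  smul_mem' := by
    rintro c f ⟨R, hR⟩
    refine ⟨|c| * R, fun β h => ?_⟩
    simp only [LinearMap.smul_apply, smul_eq_mul, abs_mul]
    exact mul_le_mul_of_nonneg_left (hR β h) (abs_nonneg _)

lemma bdd7_weak {E : Type*} [NormedAddCommGroup E] [NormedSpace ℝ E] [FiniteDimensional ℝ E]
    {ι : Type*} (v : ι → E) (h : ∀ f : Module.Dual ℝ E, ∃ R : ℝ, ∀ i, |f (v i)| ≤ R) :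
    ∃ R : ℝ, 0 ≤ R ∧ ∀ i, ‖v i‖ ≤ R := by
  let b := Module.finBasis ℝ E
  choose R hR using fun j => h (b.coord j)
  refine ⟨|∑ j, R j * ‖b j‖|, abs_nonneg _, fun i => le_trans ?_ (le_abs_self _)⟩
  calc ‖v i‖ = ‖∑ j, b.repr (v i) j • b j‖ := by rw [b.sum_repr]
    _ ≤ ∑ j, ‖b.repr (v i) j • b j‖ := norm_sum_le _ _
    _ ≤ _ := Finset.sum_le_sum fun j _ => by
      rw [norm_smul]
      exact mul_le_mul_of_nonneg_right (hR j i) (norm_nonneg _)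

lemma dep7 {Ω : Type*} [PartialOrder Ω]
    {E : Type*} [NormedAddCommGroup E] [NormedSpace ℝ E] [FiniteDimensional ℝ E]
    (m : Ω → E) (hlim : ∀ M : ℝ, 0 < M → ∀ α : Ω, ∃ β : Ω, α ≤ β ∧ M < ‖m β‖) (α₀ : Ω) :
    ∃ c : Ω →₀ ℝ, c ≠ 0 ∧ c ∈ Finsupp.supported ℝ ℝ (Set.Ioi α₀) ∧
      Finsupp.linearCombination ℝ m c = 0 := by
  by_contra! hcon
  have hli : LinearIndepOn ℝ m (Set.Ioi α₀) := by
    rw [linearIndepOn_iff]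
    intro l hl h0
    by_contra hne
    exact hcon l hne hl h0
  have hfin : (Set.Ioi α₀).Finite := by
    have : Finite (Set.Ioi α₀) := LinearIndependent.finite_of_isNoetherian hli
    exact Set.toFinite _
  have hfin2 : (Set.Ici α₀).Finite := by
    rw [← Set.Ioi_insert]
    exact hfin.insert _
  obtain ⟨M, hM⟩ := (hfin2.image fun β => ‖m β‖).bddAbove
  obtain ⟨β, h1, h2⟩ := hlim (max M 1) (by positivity) α₀
  have := hM ⟨β, h1, rfl⟩
  exact absurd (this.trans (le_max_left M 1)) (not_le.mpr h2)


/-- Convex-geometry lemma: if a net `m` in a finite-dimensional real normed space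
(ℝⁿ with an arbitrary fixed norm) satisfies `limsup ‖m(α)‖ = ∞`, then there are `C > 0`
and `α'` such that for every `α₀ ≽ α'` and `ε ∈ (0,1)` there is a finitely supported
family of coefficients `a`, supported on `{α₀} ∪ {α : α ≻ α₀}`, with `∑|a(α)| = 1`,
`a(α₀) = 1 - ε` and `‖∑ a(α) m(α)‖ ≤ C`. -/
theorem stmt7 {Ω : Type*} [PartialOrder Ω] [Nonempty Ω]
    (hdir : ∀ a b : Ω, ∃ c : Ω, a ≤ c ∧ b ≤ c)
    {E : Type*} [NormedAddCommGroup E] [NormedSpace ℝ E] [FiniteDimensional ℝ E]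
    (m : Ω → E)
    (hlim : ∀ M : ℝ, 0 < M → ∀ α : Ω, ∃ β : Ω, α ≤ β ∧ M < ‖m β‖) :
    ∃ (C : ℝ) (α' : Ω), 0 < C ∧
      ∀ α₀ : Ω, α' ≤ α₀ → ∀ ε : ℝ, 0 < ε → ε < 1 →
        ∃ a : Ω →₀ ℝ,
          (↑a.support ⊆ insert α₀ {α : Ω | α₀ < α}) ∧
          (∑ α ∈ a.support, |a α| = 1) ∧
          a α₀ = 1 - ε ∧
          ‖∑ α ∈ a.support, a α • m α‖ ≤ C := by
  classical
  obtain ⟨_, ⟨α', rfl⟩, hmax⟩ := WellFounded.has_min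
    (wellFounded_gt (α := Submodule ℝ (Module.Dual ℝ E))) (Set.range (bdd7 m))
    (Set.range_nonempty _)
  have hmono : ∀ a b : Ω, a ≤ b → bdd7 m a ≤ bdd7 m b := by
    rintro a b hab f ⟨R, hR⟩
    exact ⟨R, fun β h => hR β (hab.trans h)⟩
  have hF : ∀ α₀, α' ≤ α₀ → bdd7 m α₀ = bdd7 m α' := by
    intro α₀ h
    by_contra hne
    exact hmax _ ⟨α₀, rfl⟩ (lt_of_le_of_ne (hmono _ _ h) (Ne.symm hne))
  set F := bdd7 m α' with hFdef
  set W : Submodule ℝ E := F.dualCoannihilator with hW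
  have hWF : W.dualAnnihilator = F := Subspace.dualCoannihilator_dualAnnihilator_eq
  obtain ⟨p, hp⟩ := LinearMap.exists_leftInverse_of_injective W.subtype
    (LinearMap.ker_eq_bot.mpr W.injective_subtype)
  have hp' : ∀ w : W, p (w : E) = w := fun w => LinearMap.congr_fun hp w
  let Q : E →ₗ[ℝ] E := LinearMap.id - W.subtype ∘ₗ p
  have hQ : ∀ x, x = (p x : E) + Q x := by intro x; simp [Q]
  obtain ⟨R, hR0, hR⟩ := bdd7_weak (fun i : Set.Ici α' => Q (m i)) (by
    intro f
    have hf : f ∘ₗ Q ∈ F := by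
      rw [← hWF, Submodule.mem_dualAnnihilator]
      intro w hw
      have := hp' ⟨w, hw⟩
      simp only at this
      simp [Q, this]
    obtain ⟨S, hS⟩ := hf
    exact ⟨S, fun i => hS i i.2⟩)
  refine ⟨R + 1, α', by linarith, ?_⟩
  intro α₀ hα₀ ε hε0 hε1
  let B : Set (Ω →₀ ℝ) := {b | b ∈ Finsupp.supported ℝ ℝ (Set.Ioi α₀) ∧ nrm7 b ≤ 1}
  let L := Finsupp.linearCombination ℝ m
  let K : Set W := (p ∘ₗ L) '' B
  have hBconv : Convex ℝ B := by
    intro x hx y hy s t hs ht hst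
    refine ⟨Submodule.add_mem _ (Submodule.smul_mem _ _ hx.1) (Submodule.smul_mem _ _ hy.1), ?_⟩
    refine (nrm7_add _ _).trans ?_
    rw [nrm7_smul, nrm7_smul, abs_of_nonneg hs, abs_of_nonneg ht]
    nlinarith [hx.2, hy.2]
  have hKconv : Convex ℝ K := hBconv.linear_image _
  have hsingle : ∀ β, α₀ < β → ∀ k : ℝ, |k| ≤ 1 → k • p (m β) ∈ K := by
    intro β hβ k hk
    refine ⟨Finsupp.single β k, ⟨Finsupp.single_mem_supported ℝ _ hβ, ?_⟩, ?_⟩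
    · rw [nrm7_eq _ {β} Finsupp.support_single_subset]
      simpa using hk
    · simp [L]
  have hdense : ∀ w : W, w ∈ closure K := by
    intro w
    by_contra hw
    obtain ⟨f, u, h1, h2⟩ := geometric_hahn_banach_closed_point hKconv.closure isClosed_closure hw
    have h0 : (0 : ℝ) < u := by
      have := h1 0 (subset_closure ⟨0, ⟨Submodule.zero_mem _, by simp [nrm7]⟩, by simp⟩)
      simpa using this
    have hf : (f : W →ₗ[ℝ] ℝ) ∘ₗ p ∈ F := by
      rw [← hF α₀ hα₀]
      refine ⟨max u |f (p (m α₀))|, fun β hβ => ?_⟩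
      rcases hβ.eq_or_lt with rfl | hlt
      · exact le_max_right _ _
      · refine le_trans ?_ (le_max_left _ _)
        have a1 := h1 _ (subset_closure (hsingle β hlt 1 (by simp)))
        have a2 := h1 _ (subset_closure (hsingle β hlt (-1) (by simp)))
        simp only [map_smul, smul_eq_mul] at a1 a2
        change |f (p (m β))| ≤ u
        exact abs_le.mpr ⟨by linarith, by linarith⟩
    rw [← hWF, Submodule.mem_dualAnnihilator] at hf
    have := hf w w.2
    simp only [LinearMap.comp_apply, hp'] at this
    change f w = 0 at this
    linarith
  obtain ⟨y, ⟨b, hb, rfl⟩, hy⟩ := Metric.mem_closure_iff.mp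
    (hdense (-((1 - ε) / ε) • p (m α₀))) 1 one_pos
  obtain ⟨c, hc0, hcs, hcL⟩ := dep7 m hlim α₀
  obtain ⟨k, hk⟩ := nrm7_ivt b c hb.2 hc0
  set d := b + k • c with hd
  have hds : d ∈ Finsupp.supported ℝ ℝ (Set.Ioi α₀) :=
    Submodule.add_mem _ hb.1 (Submodule.smul_mem _ _ hcs)
  have hdL : L d = L b := by simp [hd, L, hcL]
  have hdsup : ∀ i ∈ d.support, α₀ < i := fun i hi => hds hi
  have hd0 : d α₀ = 0 := by
    by_contra h
    exact lt_irrefl _ (hdsup α₀ (Finsupp.mem_support_iff.mpr h))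
  have hQd : ‖Q (L d)‖ ≤ R := by
    have : Q (L d) = ∑ i ∈ d.support, d i • Q (m i) := by
      simp [L, Finsupp.linearCombination_apply, Finsupp.sum, map_sum]
    rw [this]
    calc _ ≤ ∑ i ∈ d.support, ‖d i • Q (m i)‖ := norm_sum_le _ _
      _ ≤ ∑ i ∈ d.support, |d i| * R := Finset.sum_le_sum fun i hi => by
        rw [norm_smul]
        exact mul_le_mul_of_nonneg_left (hR ⟨i, hα₀.trans (hdsup i hi).le⟩) (abs_nonneg _)
      _ = R := by rw [← Finset.sum_mul]; change nrm7 d * R = R; rw [hk, one_mul]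
  have hsub : (Finsupp.single α₀ (1 - ε) + ε • d).support ⊆ insert α₀ d.support := by
    refine Finsupp.support_add.trans (Finset.union_subset ?_ ?_)
    · exact Finsupp.support_single_subset.trans (by simp)
    · exact Finsupp.support_smul.trans (Finset.subset_insert _ _)
  have hnot : α₀ ∉ d.support := by simpa using hd0
  refine ⟨Finsupp.single α₀ (1 - ε) + ε • d, ?_, ?_, ?_, ?_⟩
  · intro i hi
    rcases Finset.mem_insert.mp (hsub hi) with h | h
    · exact Or.inl h
    · exact Or.inr (hdsup i h)
  · change nrm7 _ = 1
    rw [nrm7_eq _ _ hsub, Finset.sum_insert hnot]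
    have : ∑ i ∈ d.support, |(Finsupp.single α₀ (1 - ε) + ε • d) i| = ε * nrm7 d := by
      unfold nrm7
      rw [Finset.mul_sum]
      refine Finset.sum_congr rfl fun i hi => ?_
      have hne : α₀ ≠ i := (hdsup i hi).ne
      simp [Finsupp.single_eq_of_ne' hne, abs_mul, abs_of_pos hε0]
    rw [this, hk]
    simp [hd0, abs_of_pos (sub_pos.mpr hε1)]
  · simp [hd0]
  · change ‖L (Finsupp.single α₀ (1 - ε) + ε • d)‖ ≤ R + 1
    have e1 : L (Finsupp.single α₀ (1 - ε) + ε • d) = (1 - ε) • m α₀ + ε • L d := by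
      simp [L, sub_smul]
    have e2 : (1 - ε) • m α₀ + ε • L d =
        ((1 - ε) • Q (m α₀) + ε • Q (L d)) +
          (-ε) • ((-((1 - ε) / ε) • p (m α₀) - p (L d) : W) : E) := by
      nth_rewrite 1 [hQ (m α₀), hQ (L d)]
      have : (1 - ε) = ε * ((1 - ε) / ε) := by field_simp
      push_cast
      generalize (1 - ε) / ε = t at this
      rw [this]
      module
    have hy' : ‖((-((1 - ε) / ε) • p (m α₀) - p (L d) : W) : E)‖ ≤ 1 := by
      rw [hdL]
      rw [dist_eq_norm] at hy
      exact hy.le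
    have hQ0 := hR ⟨α₀, hα₀⟩
    rw [e1, e2]
    refine norm_add₃_le.trans ?_
    rw [norm_smul, norm_smul, norm_smul, norm_neg, Real.norm_of_nonneg hε0.le,
      Real.norm_of_nonneg (sub_pos.mpr hε1).le]
    simp only at hQ0
    nlinarith
end

section
/- Let Z be a closed linear subspace of a real Banach space X, let E* : X* → Z* be the restriction map, let A ⊆ Z* and D = (E*)^{-1}(A) ⊆ X*. If the weak* derived set A^(1) (computed in Z*) is strictly contained in the weak* closure of A in Z*, then the weak* derived set D^(1) (computed in X*) is strictly contained in the weak* closure of D in X*. -/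
open NormedSpace

theorem derived_sub_closure {X : Type*} [NormedAddCommGroup X] [NormedSpace ℝ X]
    (A : Set (StrongDual ℝ X)) : wStarDerived A ⊆ wStarClosure A := by
  intro f hf
  obtain ⟨n, hn⟩ := Set.mem_iUnion.1 hf
  have hmem : StrongDual.toWeakDual f ∈
      closure (StrongDual.toWeakDual '' (A ∩ {g : StrongDual ℝ X | ‖g‖ ≤ n})) := hn
  change StrongDual.toWeakDual f ∈ closure (StrongDual.toWeakDual '' A)
  exact closure_mono (Set.image_mono Set.inter_subset_left) hmem

/-- Correct an extension modulo functionals vanishing on `Z`. -/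
theorem exists_ext_interp {X : Type*} [NormedAddCommGroup X] [NormedSpace ℝ X]
    (Z : Submodule ℝ X) (hZ : IsClosed (Z : Set X)) (s : (X ⧸ Z) →ₗ[ℝ] X)
    (f : StrongDual ℝ X) (h : StrongDual ℝ Z) (I : Finset X) :
    ∃ g : StrongDual ℝ X, restrictMap Z g = h ∧
      ∀ v ∈ I, ∀ z : Z, (z : X) = v - s (Z.mkQ v) → g v = f (s (Z.mkQ v)) + h z := by
  have := hZ
  obtain ⟨h', hh', -⟩ := exists_extension_norm_eq Z h
  let W : Submodule ℝ (X ⧸ Z) := Submodule.span ℝ (Z.mkQ '' (I : Set X))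
  have : FiniteDimensional ℝ W :=
    FiniteDimensional.span_of_finite ℝ (I.finite_toSet.image _)
  let φ : W →ₗ[ℝ] ℝ := ((f - h' : StrongDual ℝ X) : X →ₗ[ℝ] ℝ) ∘ₗ s ∘ₗ W.subtype
  obtain ⟨ψ, hψ, -⟩ := exists_extension_norm_eq W (LinearMap.toContinuousLinearMap φ)
  let q : X →L[ℝ] (X ⧸ Z) := Z.mkQL
  refine ⟨h' + ψ.comp q, ?_, ?_⟩
  · ext z
    have h0 : q (z : X) = 0 := (Submodule.Quotient.mk_eq_zero Z).2 z.2
    simp [restrictMap, hh', h0]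
  · intro v hv z hz
    have hw : Z.mkQ v ∈ W := Submodule.subset_span ⟨v, hv, rfl⟩
    have h1 : ψ (Z.mkQ v) = f (s (Z.mkQ v)) - h' (s (Z.mkQ v)) := hψ ⟨Z.mkQ v, hw⟩
    have h2 : h z = h' v - h' (s (Z.mkQ v)) := by rw [← hh', hz, map_sub]
    have h3 : (h' + ψ.comp q) v = h' v + ψ (Z.mkQ v) := rfl
    rw [h3, h1, h2]; ring

theorem mem_closure_preimage {X : Type*} [NormedAddCommGroup X] [NormedSpace ℝ X]
    (Z : Submodule ℝ X) (hZ : IsClosed (Z : Set X)) (A : Set (StrongDual ℝ Z))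
    (f : StrongDual ℝ X) (hf : restrictMap Z f ∈ wStarClosure A) :
    f ∈ wStarClosure (restrictMap Z ⁻¹' A) := by
  obtain ⟨s, hs⟩ := Z.mkQ.exists_rightInverse_of_surjective Z.range_mkQ
  have hs' : ∀ v, v - s (Z.mkQ v) ∈ Z := fun v => by
    rw [← Submodule.Quotient.mk_eq_zero, ← Submodule.mkQ_apply, map_sub,
      show Z.mkQ (s (Z.mkQ v)) = Z.mkQ v from LinearMap.congr_fun hs _, sub_self]
  let z : X → Z := fun v => ⟨_, hs' v⟩
  have hind : Topology.IsInducing (fun (x : WeakDual ℝ X) (v : X) => x v) := ⟨rfl⟩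
  change StrongDual.toWeakDual f ∈ closure _
  rw [hind.closure_eq_preimage_closure_image, Set.mem_preimage, mem_closure_iff]
  intro o ho hfo
  obtain ⟨I, u, hu, huo⟩ := isOpen_pi_iff.1 ho _ hfo
  let V : Set (WeakDual ℝ Z) := ⋂ v ∈ I, {h | f (s (Z.mkQ v)) + h (z v) ∈ u v}
  have hV : IsOpen V := isOpen_biInter_finset fun v hv =>
    (hu v hv).1.preimage (continuous_const.add (WeakDual.eval_continuous (z v)))
  have haV : StrongDual.toWeakDual (restrictMap Z f) ∈ V := by
    refine Set.mem_iInter₂.2 fun v hv => ?_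
    change f (s (Z.mkQ v)) + f (v - s (Z.mkQ v)) ∈ u v
    rw [map_sub, add_sub_cancel]
    exact (hu v hv).2
  have hf' : StrongDual.toWeakDual (restrictMap Z f) ∈ closure (StrongDual.toWeakDual '' A) := hf
  obtain ⟨_, hhV, ⟨h, hA, rfl⟩⟩ := mem_closure_iff.1 hf' V hV haV
  obtain ⟨g, hg, hgv⟩ := exists_ext_interp Z hZ s f h I
  refine ⟨fun v => g v, huo fun v hv => ?_, ⟨StrongDual.toWeakDual g, ⟨g, ?_, rfl⟩, rfl⟩⟩
  · have := Set.mem_iInter₂.1 hhV v hv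
    change g v ∈ u v
    rw [hgv v hv (z v) rfl]
    exact this
  · change restrictMap Z g ∈ A
    rw [hg]; exact hA

theorem restrict_derived {X : Type*} [NormedAddCommGroup X] [NormedSpace ℝ X]
    (Z : Submodule ℝ X) (A : Set (StrongDual ℝ Z))
    (f : StrongDual ℝ X) (hf : f ∈ wStarDerived (restrictMap Z ⁻¹' A)) :
    restrictMap Z f ∈ wStarDerived A := by
  obtain ⟨n, hn⟩ := Set.mem_iUnion.1 hf
  refine Set.mem_iUnion.2 ⟨n, ?_⟩
  let R : WeakDual ℝ X → WeakDual ℝ Z :=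
    fun g => StrongDual.toWeakDual (restrictMap Z (WeakDual.toStrongDual g))
  have hR : Continuous R := WeakDual.continuous_of_continuous_eval fun z =>
    WeakDual.eval_continuous (z : X)
  refine map_mem_closure (f := R) hR hn ?_
  rintro _ ⟨g, ⟨hgA, hgn⟩, rfl⟩
  refine ⟨restrictMap Z g, ⟨hgA, ?_⟩, rfl⟩
  have hgn' : ‖g‖ ≤ n := hgn
  change ‖restrictMap Z g‖ ≤ n
  refine le_trans ?_ hgn'
  refine ContinuousLinearMap.opNorm_le_bound _ (norm_nonneg _) fun z => ?_
  exact g.le_opNorm (z : X)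

/-- For a closed subspace $Z \subset X$, $A \subset Z^*$ and $D = (E^*)^{-1}(A)$:
if $A^{(1)} \subsetneq \overline{A}^*$ in $Z^*$ then $D^{(1)} \subsetneq \overline{D}^*$
in $X^*$. -/
theorem stmt9 (X : Type*) [NormedAddCommGroup X] [NormedSpace ℝ X] [CompleteSpace X]
    (Z : Submodule ℝ X) (hZ : IsClosed (Z : Set X)) (A : Set (StrongDual ℝ Z))
    (h : wStarDerived A ⊂ wStarClosure A) :
    wStarDerived (restrictMap Z ⁻¹' A) ⊂ wStarClosure (restrictMap Z ⁻¹' A) := by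
  obtain ⟨a, ha, ha'⟩ := Set.exists_of_ssubset h
  obtain ⟨f, hf, -⟩ := exists_extension_norm_eq Z a
  have hfa : restrictMap Z f = a := by ext z; exact hf z
  refine (Set.ssubset_iff_of_subset (derived_sub_closure _)).2 ⟨f, ?_, fun hd => ha' ?_⟩
  · exact mem_closure_preimage Z hZ A f (hfa ▸ ha)
  · exact hfa ▸ restrict_derived Z A f hd
end

section
/- Let Z be a real Banach space with a Schauder basis (z_i)_{i≥0} consisting of norm-one vectors such that the partial sums ∑_{i=1}^{k} z_i, k ≥ 1, are uniformly bounded in norm, and let (z_i*) ⊆ Z* be the biorthogonal coordinate functionals. Let (α_j)_{j≥1} be a strictly increasing sequence of positive reals with limit 1, let (β_j)_{j≥1} be a strictly increasing sequence of positive reals with limit ∞, and let (ℕ_j)_{j≥1} be pairwise disjoint infinite subsets of ℕ. Let A ⊆ Z* be the convex hull of the set { α_j z_0* + β_j z_k* : j ≥ 1, k ∈ ℕ_j }. Then for every j ≥ 1 the functional α_j z_0* belongs to the weak* derived set A^(1). -/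
open NormedSpace

/-- For a Banach space $Z$ with a normalized Schauder basis $(z_i)$ whose partial sums
$\sum_{i=1}^k z_i$ are uniformly bounded, and $A$ the convex hull of
$\{\alpha_j z_0^* + \beta_j z_k^* : j \ge 1, k \in \mathbb{N}_j\}$, each $\alpha_j z_0^*$
belongs to the weak* derived set $A^{(1)}$. -/
theorem stmt10 (Z : Type*) [NormedAddCommGroup Z] [NormedSpace ℝ Z] [CompleteSpace Z]
    (z : ℕ → Z) (zstar : ℕ → StrongDual ℝ Z)
    (hbi : ∀ i j, zstar i (z j) = if i = j then 1 else 0)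
    (hexp : ∀ w : Z, Filter.Tendsto (fun k => ∑ i ∈ Finset.range k, zstar i w • z i)
      Filter.atTop (nhds w))
    (hnorm : ∀ i, ‖z i‖ = 1)
    (hps : ∃ M : ℝ, ∀ k : ℕ, 1 ≤ k → ‖∑ i ∈ Finset.Icc 1 k, z i‖ ≤ M)
    (α β : ℕ → ℝ)
    (hαmono : StrictMono α) (hαpos : ∀ j, 0 < α j)
    (hα1 : Filter.Tendsto α Filter.atTop (nhds 1))
    (hβmono : StrictMono β) (hβpos : ∀ j, 0 < β j)
    (hβ : Filter.Tendsto β Filter.atTop Filter.atTop)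
    (N : ℕ → Set ℕ) (hNdisj : Pairwise (Function.onFun Disjoint N))
    (hNinf : ∀ j, (N j).Infinite) (hN0 : ∀ j, 0 ∉ N j)
    (A : Set (StrongDual ℝ Z))
    (hA : A = convexHull ℝ
      {f : StrongDual ℝ Z | ∃ j k : ℕ, k ∈ N j ∧ f = α j • zstar 0 + β j • zstar k}) :
    ∀ j : ℕ, α j • zstar 0 ∈ wStarDerived A := by
  intro j
  have h0 : ∀ w : Z, Filter.Tendsto (fun k => zstar k w) Filter.atTop (nhds 0) := by
    intro w
    have h1 := ((hexp w).comp (Filter.tendsto_add_atTop_nat 1)).sub (hexp w)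
    have h2 : Filter.Tendsto (fun k => zstar k w • z k) Filter.atTop (nhds 0) := by
      rw [sub_self] at h1
      refine h1.congr fun k => ?_
      simp [Finset.sum_range_succ]
    rw [tendsto_zero_iff_norm_tendsto_zero] at h2 ⊢
    refine h2.congr fun k => ?_
    rw [norm_smul, hnorm, mul_one]
  obtain ⟨C, hC⟩ : ∃ C, ∀ k, ‖zstar k‖ ≤ C := by
    apply banach_steinhaus
    intro w
    obtain ⟨C, hC⟩ := (h0 w).norm.bddAbove_range
    exact ⟨C, fun k => hC ⟨k, rfl⟩⟩
  obtain ⟨n, hn⟩ := exists_nat_ge (‖α j • zstar 0‖ + ‖β j‖ * C)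
  refine Set.mem_iUnion.2 ⟨n, ?_⟩
  have ht : Filter.Tendsto
      (fun k => (StrongDual.toWeakDual (α j • zstar 0 + β j • zstar k) : WeakDual ℝ Z)) Filter.atTop
      (nhds (StrongDual.toWeakDual (α j • zstar 0))) := by
    refine tendsto_iff_forall_eval_tendsto_topDualPairing.2 ?_
    intro w
    have h := ((h0 w).const_mul (β j)).const_add (α j * zstar 0 w)
    rw [mul_zero, add_zero] at h
    exact h
  refine mem_closure_of_frequently_of_tendsto (X := WeakDual ℝ Z) ?_ ht
  refine (Nat.frequently_atTop_iff_infinite.2 (hNinf j)).mono fun k hk => ?_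
  refine ⟨_, ⟨?_, ?_⟩, rfl⟩
  · rw [hA]
    exact subset_convexHull ℝ _ ⟨j, k, hk, rfl⟩
  · refine (norm_add_le _ _).trans (le_trans ?_ hn)
    rw [norm_smul (β j)]
    gcongr
    exact hC k
end
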